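/- There exist positive constants c_star, C, c_a, c_b with the following property. Let A₀ ∈ ℝ^{n×n} be invertible with condition number κ(A₀), let θ ∈ (0, 1/2), 0 < μ < c_a · min{θ n^{-1}, n^{-5/4}}, let X₀ ∈ ℝ^{n×p} have i.i.d. BG(θ) entries, set Y = A₀X₀, and suppose p ≥ (C/(c_star² θ²)) · max{n⁴/μ⁴, n⁵/μ²} · κ(A₀)⁸ · log⁴(κ(A₀) n/(μθ)). Let Ȳ = √(pθ) (YYᵀ)^{−1/2} Y and let A₀ = UΣVᵀ be a singular value decomposition of A₀. Then with probability at least 1 − c_b p^{-5}, the function q ↦ f(q; VUᵀȲ) has exactly 2n local minimizers over the sphere S^{n−1}, and there is a bijection between these local minimizers and the signed standard basis vectors {±e_i : i = 1,…,n} such that each local minimizer q_star and its corresponding signed basis vector b satisfy ‖q_star − b‖ ≤ √2 μ/7. -/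

import Mathlib

open MeasureTheory ProbabilityTheory Real Matrix
open scoped RealInnerProductSpace ENNReal NNReal

noncomputable section

/-- The Bernoulli–Gaussian law `BG(θ)`: with probability `θ` a standard Gaussian,
with probability `1-θ` a point mass at `0`. -/
def bg (θ : ℝ) : Measure ℝ :=
  θ.toNNReal • gaussianReal 0 1 + (1 - θ).toNNReal • Measure.dirac 0

instance bg.instIsFiniteMeasure (θ : ℝ) : IsFiniteMeasure (bg θ) := by
  unfold bg; infer_instance

/-- Law of an `n × p` matrix with i.i.d. `BG(θ)` entries. -/
def bgMatrix (θ : ℝ) (n p : ℕ) : Measure (Fin n → Fin p → ℝ) :=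
  Measure.pi fun _ => Measure.pi fun _ => bg θ

/-- Law of a vector in `ℝ^n` with i.i.d. `BG(θ)` entries. -/
def bgVec (θ : ℝ) (n : ℕ) : Measure (Fin n → ℝ) :=
  Measure.pi fun _ => bg θ

/-- The smooth sparsity surrogate `h_μ(z) = μ log cosh (z/μ)`. -/
def hmu (μ z : ℝ) : ℝ := μ * Real.log (Real.cosh (z / μ))

/-- Reparametrization `q(w) = (w, √(1-‖w‖²))` with `w` in the unit ball of `ℝ^{n-1}`. -/
def qmap (n : ℕ) (w : EuclideanSpace ℝ (Fin (n - 1))) : Fin n → ℝ :=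
  fun i => if h : (i : ℕ) < n - 1 then w ⟨i, h⟩ else Real.sqrt (1 - ‖w‖ ^ 2)

/-- `f(q; Y) = (1/p) ∑ₖ h_μ(qᵀ yₖ)`. -/
def ffun (n p : ℕ) (μ : ℝ) (Y : Matrix (Fin n) (Fin p) ℝ)
    (q : EuclideanSpace ℝ (Fin n)) : ℝ :=
  (p : ℝ)⁻¹ * ∑ k : Fin p, hmu μ (∑ i : Fin n, q i * Y i k)

/-- `g(w; Y) = f(q(w); Y)`. -/
def gfun (n p : ℕ) (μ : ℝ) (Y : Matrix (Fin n) (Fin p) ℝ)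
    (w : EuclideanSpace ℝ (Fin (n - 1))) : ℝ :=
  (p : ℝ)⁻¹ * ∑ k : Fin p, hmu μ (∑ i : Fin n, qmap n w i * Y i k)

/-- Gradient `∇g(w; Y)` in `w`. -/
def gradg (n p : ℕ) (μ : ℝ) (Y : Matrix (Fin n) (Fin p) ℝ)
    (w : EuclideanSpace ℝ (Fin (n - 1))) : EuclideanSpace ℝ (Fin (n - 1)) :=
  gradient (gfun n p μ Y) w

/-- Hessian `∇²g(w; Y)` in `w`, as a continuous linear map. -/
def hessg (n p : ℕ) (μ : ℝ) (Y : Matrix (Fin n) (Fin p) ℝ)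
    (w : EuclideanSpace ℝ (Fin (n - 1))) :
    EuclideanSpace ℝ (Fin (n - 1)) →L[ℝ] EuclideanSpace ℝ (Fin (n - 1)) :=
  fderiv ℝ (gradg n p μ Y) w

/-- The set `Γ = {w : ‖w‖ < √((4n-1)/(4n))}`. -/
def GammaSet (n : ℕ) : Set (EuclideanSpace ℝ (Fin (n - 1))) :=
  {w | ‖w‖ < Real.sqrt ((4 * (n : ℝ) - 1) / (4 * n))}

/-- Spectral (`ℓ²→ℓ²` operator) norm of а matrix. -/
def specNorm {m k : ℕ} (M : Matrix (Fin m) (Fin k) ℝ) : ℝ :=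
  ‖LinearMap.toContinuousLinearMap (Matrix.toEuclideanLin M)‖

/-- Largest magnitude of an entry of a matrix. -/
def Minf {m k : ℕ} (M : Matrix (Fin m) (Fin k) ℝ) : ℝ := ⨆ i, ⨆ j, |M i j|

/-- Condition number: ratio of largest to smallest singular value. -/
def kappa {n : ℕ} (s : Fin n → ℝ) : ℝ := (⨆ i, s i) / (⨅ i, s i)

/-- Signed standard basis vectors `{± e_i}` of `ℝ^n`. -/
def SignedBasis (n : ℕ) : Set (EuclideanSpace ℝ (Fin n)) :=
  {b | ∃ i : Fin n, b = EuclideanSpace.single i (1 : ℝ) ∨ b = -EuclideanSpace.single i (1 : ℝ)}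

/-- Set of local minimizers of `f(·; Y)` over the unit sphere `S^{n-1}`. -/
def LocalMins (n p : ℕ) (μ : ℝ) (Y : Matrix (Fin n) (Fin p) ℝ) :
    Set (EuclideanSpace ℝ (Fin n)) :=
  {q | q ∈ Metric.sphere (0 : EuclideanSpace ℝ (Fin n)) 1 ∧
       IsLocalMinOn (ffun n p μ Y) (Metric.sphere (0 : EuclideanSpace ℝ (Fin n)) 1) q}

/-- Expected objective `E_x[h_μ(q(w)ᵀ x)]` for `x` with i.i.d. `BG(θ)` entries. -/
def Gexp (n : ℕ) (θ μ : ℝ) (w : EuclideanSpace ℝ (Fin (n - 1))) : ℝ :=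
  ∫ x, hmu μ (∑ i : Fin n, qmap n w i * x i) ∂(bgVec θ n)

/-!
Along a geodesic of the sphere the first two derivatives of `f(·; X)` are averages over the
columns of `X` of bounded multiples of products of linear functionals. Bernstein's inequality
and a union bound over a grid show that, except with probability `4 / p⁵`, they are uniformly
close to their expectations. The same event controls `X Xᵀ / (pθ)`, hence the whitening map: the
columns of `V Uᵀ Ȳ` are the images of those of `X` under a linear map close to the identity, and
the derivatives of `f(·; V Uᵀ Ȳ)` inherit the bounds.

A Bernoulli–Gaussian vector is a mixture of Gaussian vectors masked by random supports, so
Gaussian integration by parts gives the expected derivatives in closed form. If `q` is a local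
minimizer with largest coordinate `i`, compare, for each `j ≠ i`, the first and second
derivatives of `f` along the rotation in the coordinate plane `(i, j)`: in expectation the
rotation that increases `q_i²` at the expense of `q_j²` decreases `f`, and this forces `q_j` to
be tiny. So every local minimizer lies in a small cap around some `± e_i`. Conversely,
minimizing `f` over such a cap yields a local minimizer, because `f` decreases from the boundary
of the cap towards its centre. There is only one in each cap, because the Euclidean Hessian
there is at least of order `θ`, while the radial derivative at a minimizer, which is what the
curvature of the sphere contributes, is bounded.
-/

namespace CompleteDictionary

/-! ### Hyperbolic functions -/

/-- The squared hyperbolic secant, written as `1 - tanh²`: the derivative of `tanh`, so that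
`sechSq (z / μ) / μ` is the second derivative of `hmu μ` at `z`. -/
def sechSq (y : ℝ) : ℝ := 1 - Real.tanh y ^ 2

theorem hasDerivAt_tanh (y : ℝ) : HasDerivAt Real.tanh (sechSq y) y := by
  have h := (Real.hasDerivAt_sinh y).div (Real.hasDerivAt_cosh y) (Real.cosh_pos y).ne'
  rw [show Real.tanh = Real.sinh / Real.cosh from funext Real.tanh_eq_sinh_div_cosh]
  refine h.congr_deriv ?_
  have hcosh : Real.cosh y ≠ 0 := (Real.cosh_pos y).ne'
  rw [sechSq, Real.tanh_eq_sinh_div_cosh]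
  field_simp

@[fun_prop]
theorem continuous_tanh : Continuous Real.tanh :=
  continuous_iff_continuousAt.2 fun y => (hasDerivAt_tanh y).continuousAt

@[fun_prop]
theorem continuous_sechSq : Continuous sechSq :=
  continuous_const.sub (continuous_tanh.pow 2)

theorem abs_tanh_le_one (y : ℝ) : |Real.tanh y| ≤ 1 :=
  abs_le.2 ⟨(Real.neg_one_lt_tanh y).le, (Real.tanh_lt_one y).le⟩

theorem sechSq_nonneg (y : ℝ) : 0 ≤ sechSq y :=
  sub_nonneg.2 ((sq_le_one_iff_abs_le_one _).2 (abs_tanh_le_one y))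

theorem sechSq_le_one (y : ℝ) : sechSq y ≤ 1 :=
  sub_le_self 1 (sq_nonneg _)

theorem abs_sechSq_le_one (y : ℝ) : |sechSq y| ≤ 1 :=
  (abs_of_nonneg (sechSq_nonneg y)).trans_le (sechSq_le_one y)

theorem monotone_tanh : Monotone Real.tanh :=
  monotone_of_deriv_nonneg (fun y => (hasDerivAt_tanh y).differentiableAt) fun y =>
    (hasDerivAt_tanh y).deriv ▸ sechSq_nonneg y

theorem tanh_nonneg {x : ℝ} (hx : 0 ≤ x) : 0 ≤ Real.tanh x :=
  Real.tanh_zero ▸ monotone_tanh hx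

theorem abs_tanh_sub_tanh_le (x y : ℝ) : |Real.tanh x - Real.tanh y| ≤ |x - y| := by
  have h := convex_univ.norm_image_sub_le_of_norm_hasDerivWithin_le (C := 1)
    (fun z _ => (hasDerivAt_tanh z).hasDerivWithinAt) (fun z _ => abs_sechSq_le_one z)
    (Set.mem_univ y) (Set.mem_univ x)
  simpa using h

theorem abs_tanh_le_abs (x : ℝ) : |Real.tanh x| ≤ |x| := by
  simpa using abs_tanh_sub_tanh_le x 0

theorem sechSq_sub_sechSq (x y : ℝ) :
    sechSq x - sechSq y = (Real.tanh y - Real.tanh x) * (Real.tanh y + Real.tanh x) := by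
  unfold sechSq; ring

theorem abs_sechSq_sub_sechSq_le (x y : ℝ) : |sechSq x - sechSq y| ≤ 2 * |x - y| := by
  have hsum : |Real.tanh y + Real.tanh x| ≤ 2 :=
    (abs_add_le _ _).trans (by linarith [abs_tanh_le_one x, abs_tanh_le_one y])
  rw [sechSq_sub_sechSq, abs_mul, abs_sub_comm x y, mul_comm]
  exact mul_le_mul hsum (abs_tanh_sub_tanh_le y x) (abs_nonneg _) zero_le_two

theorem one_sub_sq_le_sechSq (y : ℝ) : 1 - y ^ 2 ≤ sechSq y :=
  sub_le_sub_left (sq_le_sq.2 (abs_tanh_le_abs y)) 1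

theorem sechSq_abs (x : ℝ) : sechSq |x| = sechSq x := by
  rcases abs_choice x with h | h <;> simp [h, sechSq]

theorem sechSq_le_sechSq_of_abs_le {x y : ℝ} (h : |x| ≤ |y|) : sechSq y ≤ sechSq x := by
  rw [← sechSq_abs x, ← sechSq_abs y]
  exact sub_le_sub_left (pow_le_pow_left₀ (tanh_nonneg (abs_nonneg x)) (monotone_tanh h) 2) 1

theorem tanh_sub_tanh (x y : ℝ) :
    Real.tanh x - Real.tanh y = Real.sinh (x - y) / (Real.cosh x * Real.cosh y) := by
  have hx := (Real.cosh_pos x).ne'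
  have hy := (Real.cosh_pos y).ne'
  rw [Real.tanh_eq_sinh_div_cosh, Real.tanh_eq_sinh_div_cosh, Real.sinh_sub]
  field_simp

theorem third_mul_sub_le_tanh_sub_tanh {x y : ℝ} (hx : 0 ≤ x) (hxy : x ≤ y) (hy : y ≤ 1) :
    (y - x) / 3 ≤ Real.tanh y - Real.tanh x := by
  have cosh_le {z : ℝ} (h0 : 0 ≤ z) (h1 : z ≤ 1) : Real.cosh z ≤ Real.exp (1 / 2) :=
    (Real.cosh_le_exp_half_sq z).trans (Real.exp_le_exp.2 (by nlinarith))
  have hcosh : Real.cosh y * Real.cosh x ≤ 3 :=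
    calc Real.cosh y * Real.cosh x
        ≤ Real.exp (1 / 2) * Real.exp (1 / 2) :=
          mul_le_mul (cosh_le (hx.trans hxy) hy) (cosh_le hx (hxy.trans hy))
            (Real.cosh_pos x).le (Real.exp_pos _).le
      _ = Real.exp 1 := by rw [← Real.exp_add]; norm_num
      _ ≤ 3 := by linarith [Real.exp_one_lt_d9]
  have hsinh : y - x ≤ Real.sinh (y - x) := Real.self_le_sinh_iff.2 (sub_nonneg.2 hxy)
  rw [tanh_sub_tanh]
  exact div_le_div₀ (Real.sinh_nonneg_iff.2 (sub_nonneg.2 hxy)) hsinh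
    (mul_pos (Real.cosh_pos y) (Real.cosh_pos x)) hcosh

theorem sq_sub_sq_le_sechSq_sub_sechSq {x y : ℝ} (hxy : |x| ≤ |y|) (hy : |y| ≤ 1) :
    (y ^ 2 - x ^ 2) / 9 ≤ sechSq x - sechSq y := by
  rw [← sechSq_abs x, ← sechSq_abs y, ← sq_abs x, ← sq_abs y, sechSq_sub_sechSq]
  have hsub := third_mul_sub_le_tanh_sub_tanh (abs_nonneg x) hxy hy
  have hx := third_mul_sub_le_tanh_sub_tanh le_rfl (abs_nonneg x) (hxy.trans hy)
  have hy := third_mul_sub_le_tanh_sub_tanh le_rfl (abs_nonneg y) hy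
  simp only [Real.tanh_zero, sub_zero] at hx hy
  calc (|y| ^ 2 - |x| ^ 2) / 9 = ((|y| - |x|) / 3) * ((|y| + |x|) / 3) := by ring
    _ ≤ _ := mul_le_mul hsub (by linarith) (by positivity)
        (sub_nonneg.2 (monotone_tanh hxy))

theorem hasDerivAt_hmu {μ : ℝ} (hμ : μ ≠ 0) (z : ℝ) :
    HasDerivAt (hmu μ) (Real.tanh (z / μ)) z := by
  have hcosh := ((Real.hasDerivAt_cosh (z / μ)).log (Real.cosh_pos _).ne').comp z
    ((hasDerivAt_id z).div_const μ)
  refine (hcosh.const_mul μ).congr_deriv ?_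
  rw [Real.tanh_eq_sinh_div_cosh]
  field_simp

/-! ### One-dimensional Gaussian averages -/

section GaussianReal

theorem integrable_pow_gaussianReal (k : ℕ) :
    Integrable (fun z : ℝ => z ^ k) (gaussianReal 0 1) := by
  have h := (memLp_id_gaussianReal (μ := 0) (v := 1) (k : ℝ≥0)).integrable_norm_pow'
  exact h.mono' (by fun_prop) (Filter.Eventually.of_forall fun z => by simp)

theorem integrable_bdd_mul_pow_gaussianReal {F : ℝ → ℝ} (hF : Continuous F) {C : ℝ}
    (hC : ∀ z, |F z| ≤ C) (k : ℕ) : Integrable (fun z => F z * z ^ k) (gaussianReal 0 1) :=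
  (integrable_pow_gaussianReal k).bdd_mul (c := C) hF.aestronglyMeasurable
    (Filter.Eventually.of_forall hC)

theorem integral_sq_gaussianReal : ∫ z, z ^ 2 ∂(gaussianReal 0 1) = 1 := by
  have h := variance_id_gaussianReal (μ := 0) (v := 1)
  rw [variance_of_integral_eq_zero aemeasurable_id (by simp)] at h
  simpa using h

theorem gaussianPDFReal_zero_one (z : ℝ) :
    gaussianPDFReal 0 1 z = (√(2 * π))⁻¹ * Real.exp (-z ^ 2 / 2) := by
  simp [gaussianPDFReal]

theorem hasDerivAt_gaussianPDFReal_zero_one (z : ℝ) :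
    HasDerivAt (gaussianPDFReal 0 1) (-(z * gaussianPDFReal 0 1 z)) z := by
  rw [funext gaussianPDFReal_zero_one]
  have h : HasDerivAt (fun z : ℝ => -z ^ 2 / 2) (-z) z := by
    refine (((hasDerivAt_id z).pow 2).neg.div_const 2).congr_deriv ?_
    simp only [Nat.cast_ofNat, id_eq]
    ring
  exact (h.exp.const_mul _).congr_deriv (by ring)

theorem integrable_gaussianReal_iff {F : ℝ → ℝ} :
    Integrable F (gaussianReal 0 1) ↔ Integrable (fun z => gaussianPDFReal 0 1 z * F z) := by
  rw [gaussianReal_of_var_ne_zero 0 one_ne_zero,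
    integrable_withDensity_iff_integrable_smul' (measurable_gaussianPDF 0 1)
      (Filter.Eventually.of_forall fun _ => gaussianPDF_lt_top)]
  simp [toReal_gaussianPDF]

theorem integral_gaussianReal_eq (F : ℝ → ℝ) :
    ∫ z, F z ∂(gaussianReal 0 1) = ∫ z, gaussianPDFReal 0 1 z * F z := by
  simpa using integral_gaussianReal_eq_integral_smul (μ := 0) (v := 1) one_ne_zero (f := F)

theorem integral_mul_id_gaussianReal {F F' : ℝ → ℝ} (hF : ∀ z, HasDerivAt F (F' z) z)
    (hint : Integrable F (gaussianReal 0 1)) (hint' : Integrable F' (gaussianReal 0 1))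
    (hmul : Integrable (fun z => F z * z) (gaussianReal 0 1)) :
    ∫ z, F z * z ∂(gaussianReal 0 1) = ∫ z, F' z ∂(gaussianReal 0 1) := by
  rw [integrable_gaussianReal_iff] at hint hint' hmul
  have hparts := integral_mul_deriv_eq_deriv_mul_of_integrable
    (fun z _ => hF z) (fun z _ => hasDerivAt_gaussianPDFReal_zero_one z)
    (hmul.neg.congr (Filter.Eventually.of_forall fun z => by
      simp only [Pi.neg_apply, Pi.mul_apply]; ring))
    (hint'.congr (Filter.Eventually.of_forall fun z => mul_comm _ _))
    (hint.congr (Filter.Eventually.of_forall fun z => mul_comm _ _))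
  rw [integral_gaussianReal_eq, integral_gaussianReal_eq]
  calc ∫ z, gaussianPDFReal 0 1 z * (F z * z)
      = -∫ z, F z * -(z * gaussianPDFReal 0 1 z) := by
        rw [← integral_neg]; exact integral_congr_ae (.of_forall fun z => by ring)
    _ = ∫ z, F' z * gaussianPDFReal 0 1 z := by rw [hparts, neg_neg]
    _ = ∫ z, gaussianPDFReal 0 1 z * F' z := by simp_rw [mul_comm]

theorem integral_pow_four_gaussianReal : ∫ z, z ^ 4 ∂(gaussianReal 0 1) = 3 := by
  calc ∫ z, z ^ 4 ∂(gaussianReal 0 1) = ∫ z, z ^ 3 * z ∂(gaussianReal 0 1) := by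
        simp only [← pow_succ, Nat.reduceAdd]
    _ = ∫ z, 3 * z ^ 2 ∂(gaussianReal 0 1) :=
        integral_mul_id_gaussianReal (fun z => by simpa using hasDerivAt_pow 3 z)
          (integrable_pow_gaussianReal 3) ((integrable_pow_gaussianReal 2).const_mul 3)
          (by simpa only [← pow_succ] using integrable_pow_gaussianReal 4)
    _ = 3 := by rw [integral_const_mul, integral_sq_gaussianReal, mul_one]

theorem gaussianPDFReal_zero_one_mul_exp_sq (z : ℝ) :
    gaussianPDFReal 0 1 z * Real.exp (z ^ 2 / 4)
      = (√(2 * π))⁻¹ * Real.exp (-(1 / 4) * z ^ 2) := by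
  rw [gaussianPDFReal_zero_one, mul_assoc, ← Real.exp_add]
  ring_nf

theorem integrable_exp_sq_gaussianReal :
    Integrable (fun z => Real.exp (z ^ 2 / 4)) (gaussianReal 0 1) := by
  rw [integrable_gaussianReal_iff]
  simp only [gaussianPDFReal_zero_one_mul_exp_sq]
  exact (integrable_exp_neg_mul_sq (by norm_num)).const_mul _

theorem integral_exp_sq_gaussianReal_le :
    ∫ z, Real.exp (z ^ 2 / 4) ∂(gaussianReal 0 1) ≤ 2 := by
  rw [integral_gaussianReal_eq]
  simp only [gaussianPDFReal_zero_one_mul_exp_sq]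
  rw [integral_const_mul, integral_gaussian, inv_mul_eq_div, ← Real.sqrt_div (by positivity),
    Real.sqrt_le_left zero_le_two, div_le_iff₀ (by positivity)]
  linarith [Real.pi_pos]

theorem one_fifth_le_gaussianPDFReal_zero_one {z : ℝ} (hz : |z| ≤ 1) :
    1 / 5 ≤ gaussianPDFReal 0 1 z := by
  have hexp : (3 / 5 : ℝ) ≤ Real.exp (-z ^ 2 / 2) := by
    have hz2 : z ^ 2 ≤ 1 := (sq_le_one_iff_abs_le_one z).2 hz
    have hhalf : Real.exp (1 / 2) ≤ 5 / 3 := by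
      refine le_of_sq_le_sq ?_ (by norm_num)
      rw [← Real.exp_nat_mul]
      norm_num
      linarith [Real.exp_one_lt_d9]
    calc (3 / 5 : ℝ) ≤ (Real.exp (1 / 2))⁻¹ :=
          (le_inv_comm₀ (by norm_num) (Real.exp_pos _)).2 (by linarith)
      _ = Real.exp (-1 / 2) := by rw [← Real.exp_neg]; norm_num
      _ ≤ Real.exp (-z ^ 2 / 2) := Real.exp_le_exp.2 (by linarith)
  have hpi : √(2 * π) ≤ 3 :=
    (Real.sqrt_le_left (by norm_num)).2 (by nlinarith [Real.pi_lt_four])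
  rw [gaussianPDFReal_zero_one]
  calc (1 / 5 : ℝ) = 3⁻¹ * (3 / 5) := by norm_num
    _ ≤ _ := mul_le_mul (inv_anti₀ (Real.sqrt_pos.2 (by positivity)) hpi) hexp (by norm_num)
        (by positivity)

theorem intervalIntegral_le_integral_gaussianReal {F G : ℝ → ℝ} {δ : ℝ} (hδ0 : 0 ≤ δ)
    (hδ1 : δ ≤ 1) (hF : Integrable F (gaussianReal 0 1)) (hF0 : ∀ z, 0 ≤ F z)
    (hG : Continuous G) (hG0 : ∀ z, |z| ≤ δ → 0 ≤ G z) (hGF : ∀ z, |z| ≤ δ → G z ≤ F z) :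
    1 / 5 * ∫ z in (-δ)..δ, G z ≤ ∫ z, F z ∂(gaussianReal 0 1) := by
  rw [integrable_gaussianReal_iff] at hF
  have hpdf (z : ℝ) : 0 ≤ gaussianPDFReal 0 1 z := gaussianPDFReal_nonneg _ _ _
  rw [integral_gaussianReal_eq, intervalIntegral.integral_of_le (by linarith),
    ← integral_const_mul]
  calc ∫ z in Set.Ioc (-δ) δ, 1 / 5 * G z
      ≤ ∫ z in Set.Ioc (-δ) δ, gaussianPDFReal 0 1 z * F z := by
        refine setIntegral_mono_on ?_ hF.integrableOn measurableSet_Ioc fun z hz => ?_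
        · exact ((continuous_const.mul hG).integrableOn_Icc (a := -δ) (b := δ)).mono_set
            Set.Ioc_subset_Icc_self
        · have hzδ : |z| ≤ δ := abs_le.2 ⟨hz.1.le, hz.2⟩
          exact mul_le_mul (one_fifth_le_gaussianPDFReal_zero_one (hzδ.trans hδ1)) (hGF z hzδ)
            (hG0 z hzδ) (hpdf z)
    _ ≤ ∫ z, gaussianPDFReal 0 1 z * F z :=
        setIntegral_le_integral hF (.of_forall fun z => mul_nonneg (hpdf z) (hF0 z))

theorem integrable_sechSq_mul_pow_gaussianReal (r μ : ℝ) (k : ℕ) :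
    Integrable (fun z => sechSq (r * z / μ) * z ^ k) (gaussianReal 0 1) :=
  integrable_bdd_mul_pow_gaussianReal (continuous_sechSq.comp (by fun_prop))
    (fun _ => abs_sechSq_le_one _) k

theorem integrable_sechSq_gaussianReal (r μ : ℝ) :
    Integrable (fun z => sechSq (r * z / μ)) (gaussianReal 0 1) := by
  simpa using integrable_sechSq_mul_pow_gaussianReal r μ 0

theorem integral_tanh_mul_id_gaussianReal (r μ : ℝ) :
    ∫ z, Real.tanh (r * z / μ) * z ∂(gaussianReal 0 1)
      = r / μ * ∫ z, sechSq (r * z / μ) ∂(gaussianReal 0 1) := by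
  have hcont : Continuous fun z : ℝ => Real.tanh (r * z / μ) := continuous_tanh.comp (by fun_prop)
  have hint (k : ℕ) := integrable_bdd_mul_pow_gaussianReal hcont (fun _ => abs_tanh_le_one _) k
  rw [← integral_const_mul]
  refine integral_mul_id_gaussianReal (fun z => ?_) (by simpa using hint 0)
    ((integrable_sechSq_gaussianReal r μ).const_mul _) (by simpa using hint 1)
  have hlin : HasDerivAt (fun z : ℝ => r * z / μ) (r / μ) z := by
    simpa using ((hasDerivAt_id z).const_mul r).div_const μ
  exact ((hasDerivAt_tanh _).comp z hlin).congr_deriv (mul_comm _ _)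

/-- The mean of `h_μ''(r z)` for a standard Gaussian `z`: the average curvature of the objective
along a direction of standard deviation `r`. -/
def meanCurv (μ r : ℝ) : ℝ := μ⁻¹ * ∫ z, sechSq (r * z / μ) ∂(gaussianReal 0 1)

/-- The mean of `h_μ''(r z) (z² - 1)` for a standard Gaussian `z`: the correction to `meanCurv`
when the direction of differentiation is correlated with `z`. -/
def hermiteCurv (μ r : ℝ) : ℝ :=
  μ⁻¹ * ∫ z, sechSq (r * z / μ) * (z ^ 2 - 1) ∂(gaussianReal 0 1)

variable {μ r s : ℝ}

/- Only the window `|z| ≤ μ` contributes: there `h_μ''` is comparable to a parabola of height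
`1 / μ`, so the gain does not degrade as `μ → 0`. -/
theorem sq_sub_sq_le_meanCurv_sub_meanCurv (hμ : 0 < μ) (hμ1 : μ ≤ 1) (hr : 0 ≤ r) (hrs : r ≤ s)
    (hs : s ≤ 1) : (s ^ 2 - r ^ 2) / 100 ≤ meanCurv μ r - meanCurv μ s := by
  have hs0 : 0 ≤ s := hr.trans hrs
  have habs (z : ℝ) : |r * z / μ| ≤ |s * z / μ| := by
    rw [abs_div, abs_div, abs_mul, abs_mul, abs_of_nonneg hr, abs_of_nonneg hs0]
    gcongr
  have hsq : 0 ≤ s ^ 2 - r ^ 2 := sub_nonneg.2 (pow_le_pow_left₀ hr hrs 2)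
  have hwindow : 1 / 5 * ∫ z in (-μ)..μ, (s ^ 2 - r ^ 2) / (9 * μ ^ 2) * z ^ 2
      ≤ ∫ z, (sechSq (r * z / μ) - sechSq (s * z / μ)) ∂(gaussianReal 0 1) := by
    refine intervalIntegral_le_integral_gaussianReal hμ.le hμ1
      ((integrable_sechSq_gaussianReal _ _).sub (integrable_sechSq_gaussianReal _ _))
      (fun z => sub_nonneg.2 (sechSq_le_sechSq_of_abs_le (habs z))) (by fun_prop)
      (fun z _ => by positivity) fun z hz => ?_
    have hle : |s * z / μ| ≤ 1 := by
      rw [abs_div, abs_mul, abs_of_nonneg hs0, abs_of_pos hμ, div_le_one hμ]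
      exact (mul_le_of_le_one_left (abs_nonneg z) hs).trans hz
    refine le_of_eq_of_le ?_ (sq_sub_sq_le_sechSq_sub_sechSq (habs z) hle)
    field_simp
  have hval : 1 / 5 * ∫ z in (-μ)..μ, (s ^ 2 - r ^ 2) / (9 * μ ^ 2) * z ^ 2
      = μ * (2 * (s ^ 2 - r ^ 2) / 135) := by
    rw [intervalIntegral.integral_const_mul, integral_pow]
    field_simp
    push_cast
    ring
  rw [meanCurv, meanCurv, ← mul_sub, ← integral_sub (integrable_sechSq_gaussianReal _ _)
    (integrable_sechSq_gaussianReal _ _)]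
  calc (s ^ 2 - r ^ 2) / 100 ≤ μ⁻¹ * (μ * (2 * (s ^ 2 - r ^ 2) / 135)) := by
        rw [inv_mul_cancel_left₀ hμ.ne']; linarith
    _ ≤ _ := by rw [← hval]; gcongr

theorem integrable_sechSq_sub_mul_one_sub_sq_gaussianReal (r μ : ℝ) :
    Integrable (fun z => (sechSq (r * z / μ) - sechSq (r / μ)) * (1 - z ^ 2))
      (gaussianReal 0 1) := by
  have hquad : Integrable (fun z : ℝ => 1 - z ^ 2) (gaussianReal 0 1) :=
    (integrable_const _).sub (integrable_pow_gaussianReal 2)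
  refine hquad.bdd_mul (c := 1)
    ((continuous_sechSq.comp (by fun_prop)).sub continuous_const).aestronglyMeasurable
    (.of_forall fun z => abs_le.2 ⟨?_, ?_⟩)
  · linarith [sechSq_nonneg (r * z / μ), sechSq_le_one (r / μ)]
  · linarith [sechSq_nonneg (r / μ), sechSq_le_one (r * z / μ)]

/- Subtracting the constant `sechSq (r / μ)`, which integrates to zero against `1 - z²`, makes the
integrand nonnegative. -/
theorem hermiteCurv_eq (μ r : ℝ) : hermiteCurv μ r =
    -(μ⁻¹ * ∫ z, (sechSq (r * z / μ) - sechSq (r / μ)) * (1 - z ^ 2) ∂(gaussianReal 0 1)) := by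
  have hquad : Integrable (fun z : ℝ => 1 - z ^ 2) (gaussianReal 0 1) :=
    (integrable_const _).sub (integrable_pow_gaussianReal 2)
  have hconst : ∫ z, sechSq (r / μ) * (1 - z ^ 2) ∂(gaussianReal 0 1) = 0 := by
    rw [integral_const_mul, integral_sub (integrable_const _) (integrable_pow_gaussianReal 2),
      integral_sq_gaussianReal]
    simp
  rw [hermiteCurv, ← mul_neg]
  congr 1
  calc ∫ z, sechSq (r * z / μ) * (z ^ 2 - 1) ∂(gaussianReal 0 1)
      = ∫ z, (-((sechSq (r * z / μ) - sechSq (r / μ)) * (1 - z ^ 2)) -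
          sechSq (r / μ) * (1 - z ^ 2)) ∂(gaussianReal 0 1) :=
        integral_congr_ae (.of_forall fun z => by ring)
    _ = _ := by
        simpa only [Pi.neg_apply, hconst, sub_zero, integral_neg] using
          integral_sub (integrable_sechSq_sub_mul_one_sub_sq_gaussianReal r μ).neg
            (hquad.const_mul (sechSq (r / μ)))

theorem sechSq_sub_mul_one_sub_sq_nonneg (hr : 0 ≤ r) (hμ : 0 ≤ μ) (z : ℝ) :
    0 ≤ (sechSq (r * z / μ) - sechSq (r / μ)) * (1 - z ^ 2) := by
  have hrμ : 0 ≤ r / μ := by positivity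
  have habs : |r * z / μ| = r / μ * |z| := by
    rw [mul_div_right_comm, abs_mul, abs_of_nonneg hrμ]
  rcases le_total |z| 1 with h | h
  · refine mul_nonneg (sub_nonneg.2 (sechSq_le_sechSq_of_abs_le ?_))
      (sub_nonneg.2 ((sq_le_one_iff_abs_le_one z).2 h))
    rw [habs, abs_of_nonneg hrμ]
    exact mul_le_of_le_one_right hrμ h
  · refine mul_nonneg_of_nonpos_of_nonpos (sub_nonpos.2 (sechSq_le_sechSq_of_abs_le ?_))
      (sub_nonpos.2 ((one_le_sq_iff_one_le_abs z).2 h))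
    rw [habs, abs_of_nonneg hrμ]
    exact le_mul_of_one_le_right hrμ h

theorem one_sixteenth_le_sechSq_sub_mul_one_sub_sq {z : ℝ} (hμ : 0 < μ) (hμ1 : μ ≤ 1)
    (hμr : μ ≤ r) (hr1 : r ≤ 1) (hz : |z| ≤ μ / 2) :
    1 / 16 ≤ (sechSq (r * z / μ) - sechSq (r / μ)) * (1 - z ^ 2) := by
  have hr0 : 0 < r := hμ.trans_le hμr
  have hinner : sechSq (1 / 2) ≤ sechSq (r * z / μ) := by
    refine sechSq_le_sechSq_of_abs_le ?_
    rw [abs_div, abs_mul, abs_of_pos hr0, abs_of_pos hμ, div_le_iff₀ hμ,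
      abs_of_pos (by norm_num : (0 : ℝ) < 1 / 2)]
    nlinarith [abs_nonneg z]
  have houter : sechSq (r / μ) ≤ sechSq 1 := by
    refine sechSq_le_sechSq_of_abs_le ?_
    rwa [abs_one, abs_of_nonneg (by positivity), one_le_div hμ]
  have hgap : (1 / 12 : ℝ) ≤ sechSq (1 / 2) - sechSq 1 := by
    refine le_of_eq_of_le (by norm_num)
      (sq_sub_sq_le_sechSq_sub_sechSq (x := 1 / 2) (y := 1) ?_ (by simp))
    rw [abs_one, abs_of_pos] <;> norm_num
  have hz2 : z ^ 2 ≤ 1 / 4 := by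
    rw [← sq_abs]; nlinarith [abs_nonneg z]
  calc (1 / 16 : ℝ) = 1 / 12 * (3 / 4) := by norm_num
    _ ≤ _ := mul_le_mul (by linarith) (by linarith) (by norm_num) (by linarith)

theorem hermiteCurv_le (hμ : 0 < μ) (hμ1 : μ ≤ 1) (hμr : μ ≤ r) (hr1 : r ≤ 1) :
    hermiteCurv μ r ≤ -(1 / 100) := by
  have hwindow := intervalIntegral_le_integral_gaussianReal (δ := μ / 2) (G := fun _ => 1 / 16)
    (by positivity) (by linarith) (integrable_sechSq_sub_mul_one_sub_sq_gaussianReal r μ)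
    (sechSq_sub_mul_one_sub_sq_nonneg (hμ.le.trans hμr) hμ.le) continuous_const
    (fun z _ => by norm_num)
    (fun z hz => one_sixteenth_le_sechSq_sub_mul_one_sub_sq hμ hμ1 hμr hr1 hz)
  rw [hermiteCurv_eq, neg_le_neg_iff]
  calc (1 / 100 : ℝ) ≤ μ⁻¹ * (1 / 5 * ∫ z in (-(μ / 2))..(μ / 2), 1 / 16) := by
        rw [intervalIntegral.integral_const, smul_eq_mul]
        field_simp
        norm_num
    _ ≤ _ := by gcongr

end GaussianReal

/-! ### Linear functionals of a Gaussian vector -/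

theorem integral_abs_mul_le {α : Type*} [MeasurableSpace α] {ν : Measure α} {f g : α → ℝ}
    (hf : MemLp f 2 ν) (hg : MemLp g 2 ν) {A B : ℝ} (hA : 0 ≤ A) (hB : 0 ≤ B)
    (hfA : ∫ x, f x ^ 2 ∂ν ≤ A ^ 2) (hgB : ∫ x, g x ^ 2 ∂ν ≤ B ^ 2) :
    ∫ x, |f x * g x| ∂ν ≤ A * B := by
  have hholder := integral_mul_le_Lp_mul_Lq_of_nonneg (μ := ν) (f := fun x => |f x|)
    (g := fun x => |g x|) Real.HolderConjugate.two_two (.of_forall fun _ => abs_nonneg _)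
    (.of_forall fun _ => abs_nonneg _) (by simpa using hf.norm) (by simpa using hg.norm)
  simp only [Real.rpow_two, sq_abs, ← abs_mul, ← Real.sqrt_eq_rpow] at hholder
  exact hholder.trans (mul_le_mul ((Real.sqrt_le_left hA).2 hfA) ((Real.sqrt_le_left hB).2 hgB)
    (Real.sqrt_nonneg _) hA)

section StdGaussian

variable {E : Type*} [NormedAddCommGroup E] [InnerProductSpace ℝ E]

theorem exists_eq_smul_add_inner_eq_zero (a b : E) :
    ∃ (c : ℝ) (d : E), b = c • a + d ∧ ⟪a, d⟫ = 0 := by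
  refine ⟨⟪a, b⟫ / ‖a‖ ^ 2, b - (⟪a, b⟫ / ‖a‖ ^ 2) • a, by abel, ?_⟩
  rcases eq_or_ne a 0 with rfl | ha
  · exact inner_zero_left _
  · have : ‖a‖ ≠ 0 := norm_ne_zero_iff.2 ha
    rw [inner_sub_right, real_inner_smul_right, real_inner_self_eq_norm_sq]
    field_simp
    ring

variable [FiniteDimensional ℝ E] [MeasurableSpace E] [BorelSpace E]

theorem map_inner_stdGaussian (a : E) :
    (stdGaussian E).map (fun x => ⟪a, x⟫) = (gaussianReal 0 1).map (fun z => ‖a‖ * z) := by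
  change (stdGaussian E).map (innerSL ℝ a) = _
  rw [IsGaussian.map_eq_gaussianReal, gaussianReal_map_const_mul, integral_strongDual_stdGaussian,
    variance_dual_stdGaussian, innerSL_apply_norm, mul_zero, mul_one]
  congr 1
  exact Real.toNNReal_of_nonneg (sq_nonneg _)

theorem integral_comp_inner_stdGaussian (a : E) {F : ℝ → ℝ} (hF : Continuous F) :
    ∫ x, F ⟪a, x⟫ ∂(stdGaussian E) = ∫ z, F (‖a‖ * z) ∂(gaussianReal 0 1) := by
  rw [← integral_map (φ := fun x => ⟪a, x⟫) (by fun_prop) hF.aestronglyMeasurable,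
    map_inner_stdGaussian, integral_map (by fun_prop) hF.aestronglyMeasurable]

theorem integrable_comp_inner_stdGaussian (a : E) {F : ℝ → ℝ} (hF : Continuous F) :
    Integrable (fun x => F ⟪a, x⟫) (stdGaussian E) ↔
      Integrable (fun z => F (‖a‖ * z)) (gaussianReal 0 1) := by
  have hright := integrable_map_measure (μ := gaussianReal 0 1) (f := fun z => ‖a‖ * z)
    hF.aestronglyMeasurable (by fun_prop)
  rw [← map_inner_stdGaussian] at hright
  exact (integrable_map_measure (f := fun x => ⟪a, x⟫) hF.aestronglyMeasurable
    (by fun_prop)).symm.trans hright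

theorem memLp_inner_stdGaussian (a : E) {k : ℝ≥0∞} (hk : k ≠ ∞) :
    MemLp (fun x => ⟪a, x⟫) k (stdGaussian E) :=
  IsGaussian.memLp_dual _ (innerSL ℝ a) k hk

theorem integrable_bdd_mul_inner_pow_stdGaussian (a b : E) {F : ℝ → ℝ} (hF : Continuous F)
    {C : ℝ} (hC : ∀ y, |F y| ≤ C) (k : ℕ) :
    Integrable (fun x => F ⟪a, x⟫ * ⟪b, x⟫ ^ k) (stdGaussian E) := by
  have hpow : Integrable (fun x => ⟪b, x⟫ ^ k) (stdGaussian E) := by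
    rw [integrable_comp_inner_stdGaussian b (F := fun y => y ^ k) (by fun_prop)]
    simp only [mul_pow]
    exact (integrable_pow_gaussianReal k).const_mul _
  exact hpow.bdd_mul (c := C) (by fun_prop) (.of_forall fun _ => hC _)

theorem indepFun_inner_stdGaussian {a b : E} (h : ⟪a, b⟫ = 0) :
    IndepFun (fun x => ⟪a, x⟫) (fun x => ⟪b, x⟫) (stdGaussian E) := by
  have hlaw : HasGaussianLaw (fun x : E => (⟪a, x⟫, ⟪b, x⟫)) (stdGaussian E) := by
    simpa using (IsGaussian.hasGaussianLaw_id (μ := stdGaussian E)).map_fun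
      ((innerSL ℝ a).prod (innerSL ℝ b))
  refine hlaw.indepFun_of_covariance_eq_zero ?_
  rwa [← covarianceBilin_apply_eq_cov IsGaussian.memLp_two_id, covarianceBilin_stdGaussian]

theorem integral_mul_comp_inner_stdGaussian {a b : E} (h : ⟪a, b⟫ = 0) {F H : ℝ → ℝ}
    (hF : Continuous F) (hH : Continuous H) :
    ∫ x, F ⟪a, x⟫ * H ⟪b, x⟫ ∂(stdGaussian E)
      = (∫ z, F (‖a‖ * z) ∂(gaussianReal 0 1)) * ∫ z, H (‖b‖ * z) ∂(gaussianReal 0 1) := by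
  rw [← integral_comp_inner_stdGaussian a hF, ← integral_comp_inner_stdGaussian b hH]
  exact (indepFun_inner_stdGaussian h).integral_fun_comp_mul_comp (by fun_prop) (by fun_prop)
    hF.aestronglyMeasurable hH.aestronglyMeasurable

theorem integral_inner_sq_stdGaussian (b : E) :
    ∫ x, ⟪b, x⟫ ^ 2 ∂(stdGaussian E) = ‖b‖ ^ 2 := by
  rw [integral_comp_inner_stdGaussian b (F := fun y => y ^ 2) (by fun_prop)]
  simp only [mul_pow]
  rw [integral_const_mul, integral_sq_gaussianReal, mul_one]

theorem integral_inner_pow_four_stdGaussian (b : E) :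
    ∫ x, ⟪b, x⟫ ^ 4 ∂(stdGaussian E) = 3 * ‖b‖ ^ 4 := by
  rw [integral_comp_inner_stdGaussian b (F := fun y => y ^ 4) (by fun_prop)]
  simp only [mul_pow]
  rw [integral_const_mul, integral_pow_four_gaussianReal, mul_comm]

theorem memLp_inner_sq_stdGaussian (b : E) :
    MemLp (fun x => ⟪b, x⟫ ^ 2) 2 (stdGaussian E) := by
  refine (memLp_two_iff_integrable_sq (by fun_prop)).2 ?_
  simp only [← pow_mul, Nat.reduceMul]
  simpa only [one_mul] using integrable_bdd_mul_inner_pow_stdGaussian b b (F := fun _ => 1)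
    continuous_const (C := 1) (by simp) 4

theorem integral_inner_sq_mul_inner_sq_stdGaussian_le (a b : E) :
    ∫ x, ⟪a, x⟫ ^ 2 * ⟪b, x⟫ ^ 2 ∂(stdGaussian E) ≤ 3 * (‖a‖ ^ 2 * ‖b‖ ^ 2) := by
  have hfour (c : E) : ∫ x, (⟪c, x⟫ ^ 2) ^ 2 ∂(stdGaussian E) = (√3 * ‖c‖ ^ 2) ^ 2 := by
    simp only [← pow_mul, Nat.reduceMul, mul_pow, integral_inner_pow_four_stdGaussian]
    norm_num
  have hcs := integral_abs_mul_le (memLp_inner_sq_stdGaussian a) (memLp_inner_sq_stdGaussian b)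
    (by positivity) (by positivity) (hfour a).le (hfour b).le
  calc ∫ x, ⟪a, x⟫ ^ 2 * ⟪b, x⟫ ^ 2 ∂(stdGaussian E)
      = ∫ x, |⟪a, x⟫ ^ 2 * ⟪b, x⟫ ^ 2| ∂(stdGaussian E) := by
        simp only [abs_mul, abs_sq]
    _ ≤ √3 * ‖a‖ ^ 2 * (√3 * ‖b‖ ^ 2) := hcs
    _ = √3 ^ 2 * (‖a‖ ^ 2 * ‖b‖ ^ 2) := by ring
    _ = 3 * (‖a‖ ^ 2 * ‖b‖ ^ 2) := by rw [Real.sq_sqrt zero_le_three]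

theorem exp_sq_mul_div_le {r : ℝ} (hr : 0 ≤ r) (hr2 : r ≤ 2) (z : ℝ) :
    Real.exp ((r * z) ^ 2 / 16) ≤ Real.exp (z ^ 2 / 4) := by
  have hsq : r ^ 2 ≤ 2 ^ 2 := pow_le_pow_left₀ hr hr2 2
  refine Real.exp_le_exp.2 ?_
  rw [mul_pow]
  linarith [mul_le_mul_of_nonneg_right hsq (sq_nonneg z)]

theorem integrable_exp_inner_sq_stdGaussian {b : E} (hb : ‖b‖ ≤ 2) :
    Integrable (fun x => Real.exp (⟪b, x⟫ ^ 2 / 16)) (stdGaussian E) := by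
  rw [integrable_comp_inner_stdGaussian b (F := fun y => Real.exp (y ^ 2 / 16)) (by fun_prop)]
  refine integrable_exp_sq_gaussianReal.mono' (by fun_prop) (.of_forall fun z => ?_)
  rw [Real.norm_eq_abs, Real.abs_exp]
  exact exp_sq_mul_div_le (norm_nonneg b) hb z

theorem integral_exp_inner_sq_stdGaussian_le {b : E} (hb : ‖b‖ ≤ 2) :
    ∫ x, Real.exp (⟪b, x⟫ ^ 2 / 16) ∂(stdGaussian E) ≤ 2 := by
  have hint := integrable_exp_inner_sq_stdGaussian hb
  rw [integrable_comp_inner_stdGaussian b (F := fun y => Real.exp (y ^ 2 / 16)) (by fun_prop)]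
    at hint
  rw [integral_comp_inner_stdGaussian b (F := fun y => Real.exp (y ^ 2 / 16)) (by fun_prop)]
  exact (integral_mono hint integrable_exp_sq_gaussianReal
    (exp_sq_mul_div_le (norm_nonneg b) hb)).trans integral_exp_sq_gaussianReal_le

variable (μ : ℝ) (a b : E)

theorem integral_tanh_mul_inner_stdGaussian :
    ∫ x, Real.tanh (⟪a, x⟫ / μ) * ⟪b, x⟫ ∂(stdGaussian E) = ⟪a, b⟫ * meanCurv μ ‖a‖ := by
  obtain ⟨c, d, rfl, had⟩ := exists_eq_smul_add_inner_eq_zero a b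
  have hT : Continuous fun y : ℝ => Real.tanh (y / μ) := continuous_tanh.comp (by fun_prop)
  have hint (v : E) : Integrable (fun x => Real.tanh (⟪a, x⟫ / μ) * ⟪v, x⟫) (stdGaussian E) := by
    simpa using integrable_bdd_mul_inner_pow_stdGaussian a v hT (fun y => abs_tanh_le_one _) 1
  have hparallel : ∫ x, Real.tanh (⟪a, x⟫ / μ) * ⟪a, x⟫ ∂(stdGaussian E)
      = ‖a‖ ^ 2 * meanCurv μ ‖a‖ := by
    rw [integral_comp_inner_stdGaussian a (F := fun y => Real.tanh (y / μ) * y) (by fun_prop)]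
    simp only [mul_left_comm _ ‖a‖]
    rw [integral_const_mul, integral_tanh_mul_id_gaussianReal, meanCurv]
    ring
  have hperp : ∫ x, Real.tanh (⟪a, x⟫ / μ) * ⟪d, x⟫ ∂(stdGaussian E) = 0 := by
    rw [integral_mul_comp_inner_stdGaussian had hT continuous_id', integral_const_mul]
    simp
  calc ∫ x, Real.tanh (⟪a, x⟫ / μ) * ⟪c • a + d, x⟫ ∂(stdGaussian E)
      = ∫ x, (c * (Real.tanh (⟪a, x⟫ / μ) * ⟪a, x⟫) + Real.tanh (⟪a, x⟫ / μ) * ⟪d, x⟫)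
          ∂(stdGaussian E) := by
        simp only [inner_add_left, real_inner_smul_left]
        exact integral_congr_ae (.of_forall fun x => by ring)
    _ = c * (‖a‖ ^ 2 * meanCurv μ ‖a‖) := by
        rw [integral_add ((hint a).const_mul c) (hint d), integral_const_mul, hparallel, hperp,
          add_zero]
    _ = ⟪a, c • a + d⟫ * meanCurv μ ‖a‖ := by
        rw [inner_add_right, real_inner_smul_right, had, real_inner_self_eq_norm_sq]
        ring

theorem meanCurv_add_hermiteCurv (r : ℝ) : meanCurv μ r + hermiteCurv μ r
    = μ⁻¹ * ∫ z, sechSq (r * z / μ) * z ^ 2 ∂(gaussianReal 0 1) := by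
  have hint : Integrable (fun z => sechSq (r * z / μ) * (z ^ 2 - 1)) (gaussianReal 0 1) := by
    simp only [mul_sub, mul_one]
    exact (integrable_sechSq_mul_pow_gaussianReal r μ 2).sub (integrable_sechSq_gaussianReal r μ)
  rw [meanCurv, hermiteCurv, ← mul_add, ← integral_add (integrable_sechSq_gaussianReal r μ) hint]
  congr 1
  exact integral_congr_ae (.of_forall fun z => by ring)

variable {a} in
theorem integral_sechSq_mul_inner_smul_add_sq_stdGaussian {d : E} (had : ⟪a, d⟫ = 0) (c : ℝ) :
    ∫ x, sechSq (⟪a, x⟫ / μ) * ⟪c • a + d, x⟫ ^ 2 ∂(stdGaussian E)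
      = c ^ 2 * ‖a‖ ^ 2 * ∫ z, sechSq (‖a‖ * z / μ) * z ^ 2 ∂(gaussianReal 0 1)
        + ‖d‖ ^ 2 * ∫ z, sechSq (‖a‖ * z / μ) ∂(gaussianReal 0 1) := by
  have hS : Continuous fun y : ℝ => sechSq (y / μ) := continuous_sechSq.comp (by fun_prop)
  have hint (v : E) : Integrable (fun x => sechSq (⟪a, x⟫ / μ) * ⟪v, x⟫ ^ 2) (stdGaussian E) :=
    integrable_bdd_mul_inner_pow_stdGaussian a v hS (fun y => abs_sechSq_le_one _) 2
  have hint_cross : Integrable (fun x => (sechSq (⟪a, x⟫ / μ) * ⟪a, x⟫) * ⟪d, x⟫)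
      (stdGaussian E) := by
    simp only [mul_assoc]
    exact ((memLp_inner_stdGaussian a ENNReal.ofNat_ne_top).integrable_mul (p := 2) (q := 2)
      (memLp_inner_stdGaussian d ENNReal.ofNat_ne_top)).bdd_mul (c := 1) (by fun_prop)
      (.of_forall fun _ => abs_sechSq_le_one _)
  have hparallel : ∫ x, sechSq (⟪a, x⟫ / μ) * ⟪a, x⟫ ^ 2 ∂(stdGaussian E)
      = ‖a‖ ^ 2 * ∫ z, sechSq (‖a‖ * z / μ) * z ^ 2 ∂(gaussianReal 0 1) := by
    rw [integral_comp_inner_stdGaussian a (F := fun y => sechSq (y / μ) * y ^ 2) (by fun_prop),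
      ← integral_const_mul]
    exact integral_congr_ae (.of_forall fun z => by ring)
  have hcross : ∫ x, (sechSq (⟪a, x⟫ / μ) * ⟪a, x⟫) * ⟪d, x⟫ ∂(stdGaussian E) = 0 := by
    rw [integral_mul_comp_inner_stdGaussian (F := fun y => sechSq (y / μ) * y) had (by fun_prop)
      continuous_id', integral_const_mul]
    simp
  have hperp : ∫ x, sechSq (⟪a, x⟫ / μ) * ⟪d, x⟫ ^ 2 ∂(stdGaussian E)
      = (∫ z, sechSq (‖a‖ * z / μ) ∂(gaussianReal 0 1)) * ‖d‖ ^ 2 := by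
    rw [integral_mul_comp_inner_stdGaussian (H := fun y => y ^ 2) had hS (by fun_prop),
      ← integral_comp_inner_stdGaussian d (F := fun y => y ^ 2) (by fun_prop),
      integral_inner_sq_stdGaussian]
  have hexpand (x : E) : sechSq (⟪a, x⟫ / μ) * ⟪c • a + d, x⟫ ^ 2
      = c ^ 2 * (sechSq (⟪a, x⟫ / μ) * ⟪a, x⟫ ^ 2) + sechSq (⟪a, x⟫ / μ) * ⟪d, x⟫ ^ 2
        + 2 * c * ((sechSq (⟪a, x⟫ / μ) * ⟪a, x⟫) * ⟪d, x⟫) := by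
    rw [inner_add_left, real_inner_smul_left]; ring
  have hint_sum : Integrable (fun x => c ^ 2 * (sechSq (⟪a, x⟫ / μ) * ⟪a, x⟫ ^ 2)
      + sechSq (⟪a, x⟫ / μ) * ⟪d, x⟫ ^ 2) (stdGaussian E) := ((hint a).const_mul _).add (hint d)
  simp only [hexpand]
  rw [integral_add hint_sum (hint_cross.const_mul _), integral_add ((hint a).const_mul _) (hint d),
    integral_const_mul, integral_const_mul, hparallel, hcross, hperp]
  ring

theorem inv_mul_integral_sechSq_mul_inner_sq_stdGaussian :
    μ⁻¹ * ∫ x, sechSq (⟪a, x⟫ / μ) * ⟪b, x⟫ ^ 2 ∂(stdGaussian E)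
      = ‖b‖ ^ 2 * meanCurv μ ‖a‖ + ⟪a, b⟫ ^ 2 / ‖a‖ ^ 2 * hermiteCurv μ ‖a‖ := by
  obtain ⟨c, d, rfl, had⟩ := exists_eq_smul_add_inner_eq_zero a b
  have hnorm : ‖c • a + d‖ ^ 2 = c ^ 2 * ‖a‖ ^ 2 + ‖d‖ ^ 2 := by
    rw [norm_add_sq_real, real_inner_smul_left, had, norm_smul, mul_pow, Real.norm_eq_abs, sq_abs]
    ring
  have hinner : ⟪a, c • a + d⟫ ^ 2 / ‖a‖ ^ 2 = c ^ 2 * ‖a‖ ^ 2 := by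
    rw [inner_add_right, real_inner_smul_right, had, real_inner_self_eq_norm_sq, add_zero]
    rcases eq_or_ne ‖a‖ 0 with h | h
    · simp [h]
    · field_simp
  calc _ = c ^ 2 * ‖a‖ ^ 2 * (μ⁻¹ * ∫ z, sechSq (‖a‖ * z / μ) * z ^ 2 ∂(gaussianReal 0 1))
        + ‖d‖ ^ 2 * meanCurv μ ‖a‖ := by
        rw [integral_sechSq_mul_inner_smul_add_sq_stdGaussian μ had, meanCurv]; ring
    _ = _ := by rw [← meanCurv_add_hermiteCurv, hnorm, hinner]; ring

end StdGaussian

/-! ### Bernoulli–Gaussian vectors as mixtures of masked Gaussian vectors -/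

section Weights

variable {ι : Type*} [Fintype ι] [DecidableEq ι]

theorem sum_prod_ite_mem {R : Type*} [CommSemiring R] (f g : ι → R) :
    ∑ Ω : Finset ι, ∏ i, (if i ∈ Ω then f i else g i) = ∏ i, (f i + g i) := by
  rw [Fintype.prod_add]
  refine Finset.sum_congr rfl fun Ω _ => ?_
  rw [Finset.prod_ite, Finset.filter_univ_mem, Finset.filter_not, Finset.filter_univ_mem,
    Finset.compl_eq_univ_sdiff]

/-- The probability that a Bernoulli(`θ`) random subset of `ι` equals `Ω`. -/
def bernoulliWeight (θ : ℝ) (Ω : Finset ι) : ℝ := ∏ i, if i ∈ Ω then θ else 1 - θ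

theorem bernoulliWeight_nonneg {θ : ℝ} (hθ : θ ∈ Set.Icc (0 : ℝ) 1) (Ω : Finset ι) :
    0 ≤ bernoulliWeight θ Ω :=
  Finset.prod_nonneg fun i _ => by split_ifs <;> linarith [hθ.1, hθ.2]

variable (θ : ℝ)

theorem sum_bernoulliWeight : ∑ Ω : Finset ι, bernoulliWeight θ Ω = 1 := by
  simp only [bernoulliWeight, sum_prod_ite_mem (fun _ => θ) (fun _ => 1 - θ),
    add_sub_cancel, Finset.prod_const_one]

theorem sum_bernoulliWeight_mem (i : ι) :
    ∑ Ω : Finset ι, bernoulliWeight θ Ω * (if i ∈ Ω then 1 else 0) = θ := by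
  have hweight (Ω : Finset ι) : bernoulliWeight θ Ω * (if i ∈ Ω then 1 else 0)
      = ∏ k, if k ∈ Ω then θ else (if k = i then 0 else 1 - θ) := by
    by_cases hi : i ∈ Ω
    · rw [if_pos hi, mul_one]
      refine Finset.prod_congr rfl fun k _ => ?_
      rcases eq_or_ne k i with rfl | hk
      · simp only [if_pos hi]
      · simp only [if_neg hk]
    · rw [if_neg hi, mul_zero]
      exact (Finset.prod_eq_zero (Finset.mem_univ i) (by simp [hi])).symm
  simp only [hweight, sum_prod_ite_mem (fun _ => θ) fun k => if k = i then 0 else 1 - θ]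
  rw [Finset.prod_eq_single i (fun k _ hk => by simp [hk]) (by simp)]
  simp

theorem sum_bernoulliWeight_mem_notMem {i j : ι} (hij : i ≠ j) :
    ∑ Ω : Finset ι, bernoulliWeight θ Ω * (if i ∈ Ω ∧ j ∉ Ω then 1 else 0) = θ * (1 - θ) := by
  have hweight (Ω : Finset ι) : bernoulliWeight θ Ω * (if i ∈ Ω ∧ j ∉ Ω then 1 else 0)
      = ∏ k, if k ∈ Ω then (if k = j then 0 else θ) else (if k = i then 0 else 1 - θ) := by
    by_cases hi : i ∈ Ω
    · by_cases hj : j ∈ Ω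
      · rw [if_neg (by simp [hj]), mul_zero]
        exact (Finset.prod_eq_zero (Finset.mem_univ j) (by simp [hj])).symm
      · rw [if_pos ⟨hi, hj⟩, mul_one]
        refine Finset.prod_congr rfl fun k _ => ?_
        grind
    · rw [if_neg (by simp [hi]), mul_zero]
      exact (Finset.prod_eq_zero (Finset.mem_univ i) (by simp [hi])).symm
  simp only [hweight, sum_prod_ite_mem (fun k => if k = j then 0 else θ)
    fun k => if k = i then 0 else 1 - θ]
  rw [Finset.prod_eq_mul i j hij (fun k _ hk => by simp [hk.1, hk.2]) (by simp) (by simp)]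
  simp [hij, hij.symm]

end Weights

/-- Euclidean space of dimension `n`. -/
abbrev Vec (n : ℕ) := EuclideanSpace ℝ (Fin n)

section Mask

variable {n : ℕ} (Ω : Finset (Fin n)) (a b x : Vec n)

/-- The coordinate projection onto the coordinates in `Ω`. -/
def mask : Vec n := WithLp.toLp 2 fun i => if i ∈ Ω then x i else 0

theorem mask_apply (i : Fin n) : mask Ω x i = if i ∈ Ω then x i else 0 := rfl

theorem inner_mask_right : ⟪a, mask Ω x⟫ = ⟪mask Ω a, x⟫ := by
  simp only [PiLp.inner_apply, mask_apply]
  refine Finset.sum_congr rfl fun i _ => ?_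
  split_ifs <;> simp

@[fun_prop]
theorem continuous_mask : Continuous (mask Ω) := by
  refine (PiLp.continuous_toLp 2 _).comp (continuous_pi fun i => ?_)
  split_ifs <;> fun_prop

theorem norm_mask_sq : ‖mask Ω a‖ ^ 2 = ∑ i, (if i ∈ Ω then 1 else 0) * a i ^ 2 := by
  rw [EuclideanSpace.real_norm_sq_eq]
  refine Finset.sum_congr rfl fun i _ => ?_
  rw [mask_apply]
  split_ifs <;> simp

theorem norm_mask_le : ‖mask Ω a‖ ≤ ‖a‖ := by
  refine (sq_le_sq₀ (norm_nonneg _) (norm_nonneg _)).1 ?_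
  rw [norm_mask_sq, EuclideanSpace.real_norm_sq_eq]
  exact Finset.sum_le_sum fun i _ => mul_le_of_le_one_left (sq_nonneg _) (by split_ifs <;> simp)

theorem sum_bernoulliWeight_mul_norm_mask_sq (θ : ℝ) :
    ∑ Ω : Finset (Fin n), bernoulliWeight θ Ω * ‖mask Ω b‖ ^ 2 = θ * ‖b‖ ^ 2 := by
  simp only [norm_mask_sq, Finset.mul_sum, ← mul_assoc]
  rw [Finset.sum_comm]
  simp only [← Finset.sum_mul, sum_bernoulliWeight_mem, EuclideanSpace.real_norm_sq_eq,
    Finset.mul_sum]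

end Mask

/-- The law of a vector with i.i.d. `BG(θ)` entries, as a measure on Euclidean space. -/
def bgLaw (θ : ℝ) (n : ℕ) : Measure (Vec n) := (bgVec θ n).map (WithLp.toLp 2)

section BgLaw

variable {n : ℕ} {θ : ℝ} (hθ : θ ∈ Set.Icc (0 : ℝ) 1)
include hθ

theorem isProbabilityMeasure_bg : IsProbabilityMeasure (bg θ) := by
  constructor
  simp only [bg, Measure.add_apply, Measure.smul_apply, measure_univ]
  change ENNReal.ofReal θ * 1 + ENNReal.ofReal (1 - θ) * 1 = 1
  rw [mul_one, mul_one, ← ENNReal.ofReal_add hθ.1 (sub_nonneg.2 hθ.2), add_sub_cancel,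
    ENNReal.ofReal_one]

theorem isProbabilityMeasure_bgLaw : IsProbabilityMeasure (bgLaw θ n) := by
  have := isProbabilityMeasure_bg hθ
  have : IsProbabilityMeasure (bgVec θ n) := by unfold bgVec; infer_instance
  exact Measure.isProbabilityMeasure_map (by fun_prop)

theorem bgVec_eq_sum : bgVec θ n = ∑ Ω : Finset (Fin n), ENNReal.ofReal (bernoulliWeight θ Ω) •
    (Measure.pi fun _ => gaussianReal 0 1).map (fun g i => if i ∈ Ω then g i else 0) := by
  classical
  refine Measure.pi_eq fun s hs => ?_
  have hbg (i : Fin n) : bg θ (s i) = ENNReal.ofReal θ * gaussianReal 0 1 (s i) +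
      ENNReal.ofReal (1 - θ) * (if (0 : ℝ) ∈ s i then 1 else 0) := by
    simp only [bg, Measure.add_apply, Measure.smul_apply, Measure.dirac_apply' _ (hs i),
      Set.indicator_apply, Pi.one_apply]
    rfl
  simp only [hbg]
  rw [← sum_prod_ite_mem, Measure.finsetSum_apply]
  refine Finset.sum_congr rfl fun Ω _ => ?_
  have hmeas : Measurable fun (g : Fin n → ℝ) i => if i ∈ Ω then g i else 0 :=
    measurable_pi_lambda _ fun i => by split_ifs <;> fun_prop
  have hpre : (fun (g : Fin n → ℝ) i => if i ∈ Ω then g i else 0) ⁻¹' Set.univ.pi s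
      = Set.univ.pi fun i => if i ∈ Ω then s i else {_y : ℝ | (0 : ℝ) ∈ s i} := by
    ext g
    simp only [Set.mem_preimage, Set.mem_univ_pi]
    refine forall_congr' fun i => ?_
    split_ifs <;> simp
  rw [Measure.smul_apply, Measure.map_apply hmeas (MeasurableSet.univ_pi hs), hpre, Measure.pi_pi,
    smul_eq_mul, bernoulliWeight, ENNReal.ofReal_prod_of_nonneg
      (fun i _ => by split_ifs <;> linarith [hθ.1, hθ.2]), ← Finset.prod_mul_distrib]
  refine Finset.prod_congr rfl fun i _ => ?_
  by_cases hi : i ∈ Ω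
  · simp [hi]
  · by_cases h0 : (0 : ℝ) ∈ s i <;> simp [hi, h0]

theorem bgLaw_eq_sum : bgLaw θ n = ∑ Ω : Finset (Fin n), ENNReal.ofReal (bernoulliWeight θ Ω) •
    (stdGaussian (Vec n)).map (mask Ω) := by
  have hmeas (Ω : Finset (Fin n)) :
      Measurable fun (g : Fin n → ℝ) i => if i ∈ Ω then g i else 0 :=
    measurable_pi_lambda _ fun i => by split_ifs <;> fun_prop
  rw [bgLaw, bgVec_eq_sum hθ, ← Measure.mapₗ_apply_of_measurable (by fun_prop), map_sum]
  refine Finset.sum_congr rfl fun Ω _ => ?_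
  rw [Measure.mapₗ_apply_of_measurable (by fun_prop), Measure.map_smul,
    Measure.map_map (by fun_prop) (hmeas Ω), ← map_pi_eq_stdGaussian,
    Measure.map_map (by fun_prop) (by fun_prop)]
  rfl

variable {F : Vec n → ℝ} (hF : Continuous F)
  (hint : ∀ Ω, Integrable (fun x => F (mask Ω x)) (stdGaussian (Vec n)))
include hF hint

omit hθ in
theorem integrable_smul_map_mask (Ω : Finset (Fin n)) :
    Integrable F (ENNReal.ofReal (bernoulliWeight θ Ω) • (stdGaussian (Vec n)).map (mask Ω)) :=
  ((integrable_map_measure hF.aestronglyMeasurable (by fun_prop)).2 (hint Ω)).smul_measure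
    ENNReal.ofReal_ne_top

theorem integrable_bgLaw : Integrable F (bgLaw θ n) := by
  rw [bgLaw_eq_sum hθ, integrable_finsetSum_measure]
  exact fun Ω _ => integrable_smul_map_mask hF hint Ω

theorem integral_bgLaw : ∫ x, F x ∂(bgLaw θ n)
    = ∑ Ω : Finset (Fin n), bernoulliWeight θ Ω * ∫ x, F (mask Ω x) ∂(stdGaussian (Vec n)) := by
  rw [bgLaw_eq_sum hθ, integral_finsetSum_measure fun Ω _ => integrable_smul_map_mask hF hint Ω]
  refine Finset.sum_congr rfl fun Ω _ => ?_
  rw [integral_smul_measure, integral_map (by fun_prop) hF.aestronglyMeasurable,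
    ENNReal.toReal_ofReal (bernoulliWeight_nonneg hθ Ω), smul_eq_mul]

end BgLaw

/-! ### Directional derivatives of the population objective -/

section Terms

variable {E : Type*} [NormedAddCommGroup E] [InnerProductSpace ℝ E] (μ : ℝ) (a a' b b' x : E)

/-- The contribution of a sample `x` to the first derivative of the objective at `a` in direction
`b`. -/
def gradTerm : ℝ := Real.tanh (⟪a, x⟫ / μ) * ⟪b, x⟫

/-- `μ` times the contribution of a sample `x` to the second derivative of the objective at `a` in
direction `b`; the factor `μ` makes this bounded by `⟪b, x⟫ ^ 2`. -/
def hessTerm : ℝ := sechSq (⟪a, x⟫ / μ) * ⟪b, x⟫ ^ 2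

@[fun_prop]
theorem continuous_gradTerm : Continuous (gradTerm μ a b) := by
  unfold gradTerm; fun_prop

@[fun_prop]
theorem continuous_hessTerm : Continuous (hessTerm μ a b) := by
  unfold hessTerm; fun_prop

theorem abs_gradTerm_le : |gradTerm μ a b x| ≤ |⟪b, x⟫| := by
  rw [gradTerm, abs_mul]
  exact mul_le_of_le_one_left (abs_nonneg _) (abs_tanh_le_one _)

theorem hessTerm_nonneg : 0 ≤ hessTerm μ a b x :=
  mul_nonneg (sechSq_nonneg _) (sq_nonneg _)

theorem hessTerm_le : hessTerm μ a b x ≤ ⟪b, x⟫ ^ 2 :=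
  mul_le_of_le_one_left (sq_nonneg _) (sechSq_le_one _)

theorem abs_inner_div_sub_inner_div (hμ : 0 < μ) :
    |⟪a, x⟫ / μ - ⟪a', x⟫ / μ| = μ⁻¹ * |⟪a - a', x⟫| := by
  rw [← sub_div, ← inner_sub_left, abs_div, abs_of_pos hμ, div_eq_inv_mul]

theorem abs_gradTerm_sub_left (hμ : 0 < μ) :
    |gradTerm μ a b x - gradTerm μ a' b x| ≤ μ⁻¹ * |⟪a - a', x⟫ * ⟪b, x⟫| := by
  rw [gradTerm, gradTerm, ← sub_mul, abs_mul, abs_mul, ← mul_assoc,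
    ← abs_inner_div_sub_inner_div μ a a' x hμ]
  exact mul_le_mul_of_nonneg_right (abs_tanh_sub_tanh_le _ _) (abs_nonneg _)

theorem abs_hessTerm_sub_left (hμ : 0 < μ) :
    |hessTerm μ a b x - hessTerm μ a' b x| ≤ 2 * μ⁻¹ * |⟪a - a', x⟫ * ⟪b, x⟫ * ⟪b, x⟫| := by
  rw [hessTerm, hessTerm, ← sub_mul, abs_mul, mul_assoc ⟪a - a', x⟫, ← pow_two, abs_mul ⟪a - a', x⟫,
    ← mul_assoc, mul_assoc 2, ← abs_inner_div_sub_inner_div μ a a' x hμ]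
  exact mul_le_mul_of_nonneg_right (abs_sechSq_sub_sechSq_le _ _) (abs_nonneg _)

theorem abs_hessTerm_sub_right :
    |hessTerm μ a b x - hessTerm μ a b' x| ≤ |⟪b - b', x⟫ * ⟪b + b', x⟫| := by
  rw [hessTerm, hessTerm, ← mul_sub, abs_mul,
    show ⟪b, x⟫ ^ 2 - ⟪b', x⟫ ^ 2 = ⟪b - b', x⟫ * ⟪b + b', x⟫ by
      rw [inner_sub_left, inner_add_left]; ring]
  exact mul_le_of_le_one_left (abs_nonneg _) (abs_sechSq_le_one _)

end Terms

section Moments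

variable {n : ℕ} {θ : ℝ} (hθ : θ ∈ Set.Icc (0 : ℝ) 1) (μ : ℝ) (a b u : Vec n)
include hθ

theorem memLp_inner_bgLaw : MemLp (fun x => ⟪b, x⟫) 2 (bgLaw θ n) := by
  refine (memLp_two_iff_integrable_sq (by fun_prop)).2 (integrable_bgLaw hθ (by fun_prop)
    fun Ω => ?_)
  simp only [inner_mask_right]
  exact (memLp_inner_stdGaussian (mask Ω b) (by simp)).integrable_sq

theorem integral_inner_sq_bgLaw : ∫ x, ⟪b, x⟫ ^ 2 ∂(bgLaw θ n) = θ * ‖b‖ ^ 2 := by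
  rw [integral_bgLaw hθ (by fun_prop)]
  · simp only [inner_mask_right, integral_inner_sq_stdGaussian,
      sum_bernoulliWeight_mul_norm_mask_sq]
  · intro Ω
    simp only [inner_mask_right]
    exact (memLp_inner_stdGaussian (mask Ω b) (by simp)).integrable_sq

omit hθ in
theorem integrable_sq_mul_sq_mask (Ω : Finset (Fin n)) :
    Integrable (fun x => (⟪u, mask Ω x⟫ * ⟪b, mask Ω x⟫) ^ 2) (stdGaussian (Vec n)) := by
  simp only [inner_mask_right, mul_pow]
  exact (memLp_inner_sq_stdGaussian _).integrable_mul (memLp_inner_sq_stdGaussian _)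

theorem memLp_inner_mul_inner_bgLaw : MemLp (fun x => ⟪u, x⟫ * ⟪b, x⟫) 2 (bgLaw θ n) :=
  (memLp_two_iff_integrable_sq (by fun_prop)).2
    (integrable_bgLaw hθ (by fun_prop) (integrable_sq_mul_sq_mask b u))

theorem integral_inner_mul_inner_sq_bgLaw_le :
    ∫ x, (⟪u, x⟫ * ⟪b, x⟫) ^ 2 ∂(bgLaw θ n) ≤ 3 * θ * (‖u‖ ^ 2 * ‖b‖ ^ 2) := by
  rw [integral_bgLaw hθ (by fun_prop) (integrable_sq_mul_sq_mask b u)]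
  simp only [inner_mask_right, mul_pow]
  calc ∑ Ω : Finset (Fin n), bernoulliWeight θ Ω *
        ∫ x, ⟪mask Ω u, x⟫ ^ 2 * ⟪mask Ω b, x⟫ ^ 2 ∂(stdGaussian (Vec n))
      ≤ ∑ Ω : Finset (Fin n), bernoulliWeight θ Ω * (3 * (‖u‖ ^ 2 * ‖mask Ω b‖ ^ 2)) := by
        gcongr with Ω
        · exact bernoulliWeight_nonneg hθ Ω
        · refine (integral_inner_sq_mul_inner_sq_stdGaussian_le _ _).trans ?_
          gcongr
          exact norm_mask_le Ω u
    _ = 3 * ‖u‖ ^ 2 * ∑ Ω : Finset (Fin n), bernoulliWeight θ Ω * ‖mask Ω b‖ ^ 2 := by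
        rw [Finset.mul_sum]
        exact Finset.sum_congr rfl fun Ω _ => by ring
    _ = 3 * θ * (‖u‖ ^ 2 * ‖b‖ ^ 2) := by
        rw [sum_bernoulliWeight_mul_norm_mask_sq]
        ring

theorem integrable_exp_inner_sq_bgLaw (hb : ‖b‖ ≤ 2) :
    Integrable (fun x => Real.exp (⟪b, x⟫ ^ 2 / 16)) (bgLaw θ n) := by
  refine integrable_bgLaw hθ (by fun_prop) fun Ω => ?_
  simp only [inner_mask_right]
  exact integrable_exp_inner_sq_stdGaussian ((norm_mask_le Ω b).trans hb)

theorem integral_exp_inner_sq_bgLaw_le (hb : ‖b‖ ≤ 2) :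
    ∫ x, Real.exp (⟪b, x⟫ ^ 2 / 16) ∂(bgLaw θ n) ≤ 2 := by
  have hmask (Ω : Finset (Fin n)) : ‖mask Ω b‖ ≤ 2 := (norm_mask_le Ω b).trans hb
  rw [integral_bgLaw hθ (by fun_prop)
    fun Ω => by simpa only [inner_mask_right] using integrable_exp_inner_sq_stdGaussian (hmask Ω)]
  simp only [inner_mask_right]
  calc ∑ Ω : Finset (Fin n), bernoulliWeight θ Ω *
        ∫ x, Real.exp (⟪mask Ω b, x⟫ ^ 2 / 16) ∂(stdGaussian (Vec n))
      ≤ ∑ Ω : Finset (Fin n), bernoulliWeight θ Ω * 2 := by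
        gcongr with Ω
        · exact bernoulliWeight_nonneg hθ Ω
        · exact integral_exp_inner_sq_stdGaussian_le (hmask Ω)
    _ = 2 := by rw [← Finset.sum_mul, sum_bernoulliWeight, one_mul]

theorem integral_abs_inner_bgLaw_le : ∫ x, |⟪b, x⟫| ∂(bgLaw θ n) ≤ √θ * ‖b‖ := by
  have := isProbabilityMeasure_bgLaw (n := n) hθ
  have h := integral_abs_mul_le (memLp_inner_bgLaw hθ b) (memLp_const (1 : ℝ))
    (A := √θ * ‖b‖) (B := 1) (by positivity) (by positivity)
    (by rw [integral_inner_sq_bgLaw hθ, mul_pow, Real.sq_sqrt hθ.1]) (by simp)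
  simpa using h

theorem integral_abs_inner_mul_inner_bgLaw_le :
    ∫ x, |⟪u, x⟫ * ⟪b, x⟫| ∂(bgLaw θ n) ≤ θ * (‖u‖ * ‖b‖) := by
  have h := integral_abs_mul_le (memLp_inner_bgLaw hθ u) (memLp_inner_bgLaw hθ b)
    (A := √θ * ‖u‖) (B := √θ * ‖b‖) (by positivity) (by positivity)
    (by rw [integral_inner_sq_bgLaw hθ, mul_pow, Real.sq_sqrt hθ.1])
    (by rw [integral_inner_sq_bgLaw hθ, mul_pow, Real.sq_sqrt hθ.1])
  rwa [mul_mul_mul_comm, Real.mul_self_sqrt hθ.1] at h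

theorem integral_abs_inner_mul_inner_mul_inner_bgLaw_le :
    ∫ x, |⟪u, x⟫ * ⟪b, x⟫ * ⟪b, x⟫| ∂(bgLaw θ n) ≤ 2 * θ * (‖u‖ * ‖b‖ ^ 2) := by
  have h := integral_abs_mul_le (memLp_inner_mul_inner_bgLaw hθ b u) (memLp_inner_bgLaw hθ b)
    (A := 2 * √θ * (‖u‖ * ‖b‖)) (B := √θ * ‖b‖) (by positivity) (by positivity)
    (by
      have : 0 ≤ θ * (‖u‖ ^ 2 * ‖b‖ ^ 2) := mul_nonneg hθ.1 (by positivity)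
      rw [mul_pow, mul_pow, mul_pow, Real.sq_sqrt hθ.1]
      linarith [integral_inner_mul_inner_sq_bgLaw_le hθ b u])
    (by rw [integral_inner_sq_bgLaw hθ, mul_pow, Real.sq_sqrt hθ.1])
  refine h.trans_eq ?_
  linear_combination 2 * ‖u‖ * ‖b‖ ^ 2 * Real.mul_self_sqrt hθ.1

theorem integrable_gradTerm : Integrable (gradTerm μ a b) (bgLaw θ n) := by
  have := isProbabilityMeasure_bgLaw (n := n) hθ
  exact ((memLp_inner_bgLaw hθ b).integrable (by norm_num)).mono (by fun_prop)
    (ae_of_all _ (abs_gradTerm_le μ a b))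

theorem integrable_hessTerm : Integrable (hessTerm μ a b) (bgLaw θ n) := by
  refine (memLp_inner_bgLaw hθ b).integrable_sq.mono (by fun_prop) (ae_of_all _ fun x => ?_)
  simp only [Real.norm_eq_abs, abs_of_nonneg (hessTerm_nonneg μ a b x), abs_sq]
  exact hessTerm_le μ a b x

end Moments

/-- The expected first derivative of the objective at `a` in direction `b`. -/
def meanGrad {n : ℕ} (θ μ : ℝ) (a b : Vec n) : ℝ := ∫ x, gradTerm μ a b x ∂(bgLaw θ n)

/-- `μ` times the expected second derivative of the objective at `a` in direction `b`. -/
def meanHess {n : ℕ} (θ μ : ℝ) (a b : Vec n) : ℝ := ∫ x, hessTerm μ a b x ∂(bgLaw θ n)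

section MeanDerivatives

variable {n : ℕ} {θ : ℝ} (μ c : ℝ) (a a' b b' : Vec n)

theorem meanGrad_smul_right : meanGrad θ μ a (c • b) = c * meanGrad θ μ a b := by
  simp only [meanGrad, gradTerm, real_inner_smul_left, mul_left_comm _ c, integral_const_mul]

theorem meanHess_smul_right : meanHess θ μ a (c • b) = c ^ 2 * meanHess θ μ a b := by
  simp only [meanHess, hessTerm, real_inner_smul_left, mul_pow, mul_left_comm _ (c ^ 2),
    integral_const_mul]

variable (hθ : θ ∈ Set.Icc (0 : ℝ) 1)
include hθ

theorem meanGrad_eq_sum : meanGrad θ μ a b = ∑ Ω : Finset (Fin n),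
    bernoulliWeight θ Ω * (⟪mask Ω a, mask Ω b⟫ * meanCurv μ ‖mask Ω a‖) := by
  rw [meanGrad, integral_bgLaw hθ (by fun_prop)]
  · simp only [gradTerm, inner_mask_right, integral_tanh_mul_inner_stdGaussian]
  · intro Ω
    simpa only [gradTerm, inner_mask_right, pow_one] using
      integrable_bdd_mul_inner_pow_stdGaussian (mask Ω a) (mask Ω b)
        (F := fun y => Real.tanh (y / μ)) (by fun_prop) (fun y => abs_tanh_le_one _) 1

omit hθ in
theorem integrable_hessTerm_mask (Ω : Finset (Fin n)) :
    Integrable (fun x => hessTerm μ a b (mask Ω x)) (stdGaussian (Vec n)) := by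
  simp only [hessTerm, inner_mask_right]
  exact integrable_bdd_mul_inner_pow_stdGaussian (mask Ω a) (mask Ω b)
    (F := fun y => sechSq (y / μ)) (by fun_prop) (fun y => abs_sechSq_le_one _) 2

theorem meanHess_div_eq_sum : meanHess θ μ a b / μ = ∑ Ω : Finset (Fin n), bernoulliWeight θ Ω *
    (‖mask Ω b‖ ^ 2 * meanCurv μ ‖mask Ω a‖ +
      ⟪mask Ω a, mask Ω b⟫ ^ 2 / ‖mask Ω a‖ ^ 2 * hermiteCurv μ ‖mask Ω a‖) := by
  rw [meanHess, integral_bgLaw hθ (by fun_prop) (integrable_hessTerm_mask μ a b), Finset.sum_div]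
  refine Finset.sum_congr rfl fun Ω _ => ?_
  rw [← inv_mul_integral_sechSq_mul_inner_sq_stdGaussian]
  simp only [hessTerm, inner_mask_right]
  ring

theorem abs_meanGrad_le : |meanGrad θ μ a b| ≤ √θ * ‖b‖ := by
  have := isProbabilityMeasure_bgLaw (n := n) hθ
  refine abs_integral_le_integral_abs.trans (le_trans ?_ (integral_abs_inner_bgLaw_le hθ b))
  exact integral_mono (integrable_gradTerm hθ μ a b).abs
    ((memLp_inner_bgLaw hθ b).integrable (by norm_num)).abs (abs_gradTerm_le μ a b)

theorem meanGrad_sub_right :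
    meanGrad θ μ a (b - b') = meanGrad θ μ a b - meanGrad θ μ a b' := by
  rw [meanGrad, meanGrad, meanGrad, ← integral_sub (integrable_gradTerm hθ μ a b)
    (integrable_gradTerm hθ μ a b')]
  simp only [gradTerm, inner_sub_left, mul_sub]

theorem abs_meanHess_sub_right :
    |meanHess θ μ a b - meanHess θ μ a b'| ≤ θ * (‖b - b'‖ * ‖b + b'‖) := by
  have hb := integrable_hessTerm hθ μ a b
  have hb' := integrable_hessTerm hθ μ a b'
  rw [meanHess, meanHess, ← integral_sub hb hb']
  calc _ ≤ ∫ x, |hessTerm μ a b x - hessTerm μ a b' x| ∂(bgLaw θ n) := abs_integral_le_integral_abs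
    _ ≤ ∫ x, |⟪b - b', x⟫ * ⟪b + b', x⟫| ∂(bgLaw θ n) :=
      integral_mono (hb.sub hb').abs ((memLp_inner_bgLaw hθ _).integrable_mul
        (memLp_inner_bgLaw hθ _)).abs (abs_hessTerm_sub_right μ a b b')
    _ ≤ _ := integral_abs_inner_mul_inner_bgLaw_le hθ _ _

variable {μ} (hμ : 0 < μ)
include hμ

theorem abs_meanGrad_sub_left :
    |meanGrad θ μ a b - meanGrad θ μ a' b| ≤ θ / μ * (‖a - a'‖ * ‖b‖) := by
  have ha := integrable_gradTerm hθ μ a b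
  have ha' := integrable_gradTerm hθ μ a' b
  rw [meanGrad, meanGrad, ← integral_sub ha ha']
  calc _ ≤ ∫ x, |gradTerm μ a b x - gradTerm μ a' b x| ∂(bgLaw θ n) := abs_integral_le_integral_abs
    _ ≤ ∫ x, μ⁻¹ * |⟪a - a', x⟫ * ⟪b, x⟫| ∂(bgLaw θ n) :=
      integral_mono (ha.sub ha').abs (((memLp_inner_bgLaw hθ _).integrable_mul
        (memLp_inner_bgLaw hθ _)).abs.const_mul _) fun x => abs_gradTerm_sub_left μ a a' b x hμ
    _ ≤ μ⁻¹ * (θ * (‖a - a'‖ * ‖b‖)) := by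
      rw [integral_const_mul]
      gcongr
      exact integral_abs_inner_mul_inner_bgLaw_le hθ _ _
    _ = _ := by ring

theorem abs_meanHess_sub_left :
    |meanHess θ μ a b - meanHess θ μ a' b| ≤ 4 * θ / μ * (‖a - a'‖ * ‖b‖ ^ 2) := by
  have ha := integrable_hessTerm hθ μ a b
  have ha' := integrable_hessTerm hθ μ a' b
  rw [meanHess, meanHess, ← integral_sub ha ha']
  calc _ ≤ ∫ x, |hessTerm μ a b x - hessTerm μ a' b x| ∂(bgLaw θ n) := abs_integral_le_integral_abs
    _ ≤ ∫ x, 2 * μ⁻¹ * |⟪a - a', x⟫ * ⟪b, x⟫ * ⟪b, x⟫| ∂(bgLaw θ n) :=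
      integral_mono (ha.sub ha').abs (((memLp_inner_mul_inner_bgLaw hθ _ _).integrable_mul
        (memLp_inner_bgLaw hθ _)).abs.const_mul _) fun x => abs_hessTerm_sub_left μ a a' b x hμ
    _ ≤ 2 * μ⁻¹ * (2 * θ * (‖a - a'‖ * ‖b‖ ^ 2)) := by
      rw [integral_const_mul]
      gcongr
      exact integral_abs_inner_mul_inner_mul_inner_bgLaw_le hθ _ _
    _ = _ := by ring

end MeanDerivatives

/-! ### Population geometry along coordinate rotations -/

section Rotation

variable {n : ℕ} {i j k : Fin n} (q : Vec n) (Ω : Finset (Fin n))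

/-- The velocity at `q` of the rotation of the coordinate plane `(i, j)` turning `e_j` towards
`e_i`. -/
def rotDir (q : Vec n) (i j : Fin n) : Vec n :=
  q j • EuclideanSpace.single i (1 : ℝ) - q i • EuclideanSpace.single j (1 : ℝ)

/-- The orthogonal projection of `q` onto the coordinate plane `(i, j)`. -/
def rotMid (q : Vec n) (i j : Fin n) : Vec n :=
  q i • EuclideanSpace.single i (1 : ℝ) + q j • EuclideanSpace.single j (1 : ℝ)

theorem inner_rotDir_right (x : Vec n) : ⟪x, rotDir q i j⟫ = q j * x i - q i * x j := by
  simp [rotDir, inner_sub_right, real_inner_smul_right, EuclideanSpace.inner_single_right]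

theorem inner_rotMid_right (x : Vec n) : ⟪x, rotMid q i j⟫ = q i * x i + q j * x j := by
  simp [rotMid, inner_add_right, real_inner_smul_right, EuclideanSpace.inner_single_right]

variable (hij : i ≠ j)
include hij

theorem rotDir_apply_left : rotDir q i j i = q j := by
  simp [rotDir, hij]

theorem rotDir_apply_right : rotDir q i j j = -q i := by
  simp [rotDir, hij.symm]

theorem rotMid_apply_left : rotMid q i j i = q i := by
  simp [rotMid, hij]

theorem rotMid_apply_right : rotMid q i j j = q j := by
  simp [rotMid, hij.symm]

theorem norm_rotDir_sq : ‖rotDir q i j‖ ^ 2 = q i ^ 2 + q j ^ 2 := by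
  rw [← real_inner_self_eq_norm_sq, inner_rotDir_right, rotDir_apply_left q hij,
    rotDir_apply_right q hij]
  ring

theorem norm_rotMid_sq : ‖rotMid q i j‖ ^ 2 = q i ^ 2 + q j ^ 2 := by
  rw [← real_inner_self_eq_norm_sq, inner_rotMid_right, rotMid_apply_left q hij,
    rotMid_apply_right q hij]
  ring

omit hij in
theorem inner_mask_mask (a b : Vec n) : ⟪mask Ω a, mask Ω b⟫ = ⟪mask Ω a, b⟫ := by
  rw [inner_mask_right]
  congr 1
  ext k
  simp only [mask_apply]
  split_ifs <;> rfl

omit hij in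
theorem inner_mask_mask_rotDir : ⟪mask Ω q, mask Ω (rotDir q i j)⟫
    = q i * q j * ((if i ∈ Ω then 1 else 0) - (if j ∈ Ω then 1 else 0)) := by
  rw [inner_mask_mask, inner_rotDir_right, mask_apply, mask_apply]
  split_ifs <;> ring

omit hij in
theorem inner_mask_mask_rotMid : ⟪mask Ω q, mask Ω (rotMid q i j)⟫
    = (if i ∈ Ω then 1 else 0) * q i ^ 2 + (if j ∈ Ω then 1 else 0) * q j ^ 2 := by
  rw [inner_mask_mask, inner_rotMid_right, mask_apply, mask_apply]
  split_ifs <;> ring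

theorem norm_mask_rotDir_sq : ‖mask Ω (rotDir q i j)‖ ^ 2
    = (if i ∈ Ω then 1 else 0) * q j ^ 2 + (if j ∈ Ω then 1 else 0) * q i ^ 2 := by
  rw [← real_inner_self_eq_norm_sq, inner_mask_mask, inner_rotDir_right, mask_apply, mask_apply,
    rotDir_apply_left q hij, rotDir_apply_right q hij]
  split_ifs <;> ring

end Rotation

section Swap

variable {n : ℕ} {θ μ : ℝ} {i j : Fin n} {q : Vec n} {Ω : Finset (Fin n)}

theorem bernoulliWeight_finsetCongr (θ : ℝ) (σ : Equiv.Perm (Fin n)) (Ω : Finset (Fin n)) :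
    bernoulliWeight θ (Equiv.finsetCongr σ Ω) = bernoulliWeight θ Ω := by
  simp only [bernoulliWeight, Equiv.finsetCongr_apply, Finset.mem_map_equiv]
  exact Equiv.prod_comp σ.symm (fun k => if k ∈ Ω then θ else 1 - θ)

theorem norm_mask_finsetCongr_swap_sq (hi : i ∈ Ω) (hj : j ∉ Ω) (q : Vec n) :
    ‖mask (Equiv.finsetCongr (Equiv.swap i j) Ω) q‖ ^ 2 = ‖mask Ω q‖ ^ 2 - q i ^ 2 + q j ^ 2 := by
  have hswap : ‖mask (Equiv.finsetCongr (Equiv.swap i j) Ω) q‖ ^ 2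
      = ∑ k, (if k ∈ Ω then 1 else 0) * q (Equiv.swap i j k) ^ 2 := by
    rw [norm_mask_sq, ← Equiv.sum_comp (Equiv.swap i j)]
    simp [Equiv.finsetCongr_apply]
  have hdiff : ‖mask Ω q‖ ^ 2 - ‖mask (Equiv.finsetCongr (Equiv.swap i j) Ω) q‖ ^ 2
      = q i ^ 2 - q j ^ 2 := by
    rw [hswap, norm_mask_sq, ← Finset.sum_sub_distrib, Finset.sum_eq_single i]
    · simp [hi]
    · intro k _ hk
      by_cases hkj : k = j
      · simp [hkj, hj]
      · rw [Equiv.swap_apply_of_ne_of_ne hk hkj, sub_self]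
    · simp
  linarith

/-- The difference of the mean curvatures carried by the coordinates `j` and `i`: it governs both
derivatives of the population objective along the rotation of the plane `(i, j)`. -/
def curvGap (θ μ : ℝ) (q : Vec n) (i j : Fin n) : ℝ := ∑ Ω : Finset (Fin n), bernoulliWeight θ Ω *
  (((if j ∈ Ω then 1 else 0) - (if i ∈ Ω then 1 else 0)) * meanCurv μ ‖mask Ω q‖)

-- Sets containing only `j` are paired with sets containing only `i` by swapping the two.
theorem curvGap_eq_sum_swap (θ μ : ℝ) (q : Vec n) (i j : Fin n) :
    curvGap θ μ q i j =
      ∑ Ω : Finset (Fin n), bernoulliWeight θ Ω * (if i ∈ Ω ∧ j ∉ Ω then 1 else 0) *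
        (meanCurv μ ‖mask (Equiv.finsetCongr (Equiv.swap i j) Ω) q‖ - meanCurv μ ‖mask Ω q‖) := by
  have hsplit : curvGap θ μ q i j
      = ∑ Ω : Finset (Fin n), bernoulliWeight θ Ω * (if j ∈ Ω ∧ i ∉ Ω then 1 else 0) *
          meanCurv μ ‖mask Ω q‖
        - ∑ Ω : Finset (Fin n), bernoulliWeight θ Ω * (if i ∈ Ω ∧ j ∉ Ω then 1 else 0) *
          meanCurv μ ‖mask Ω q‖ := by
    rw [curvGap, ← Finset.sum_sub_distrib]
    refine Finset.sum_congr rfl fun Ω _ => ?_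
    by_cases hi : i ∈ Ω <;> by_cases hj : j ∈ Ω <;> simp [hi, hj]
  rw [hsplit, ← Equiv.sum_comp (Equiv.finsetCongr (Equiv.swap i j)), ← Finset.sum_sub_distrib]
  refine Finset.sum_congr rfl fun Ω _ => ?_
  have hmem : (j ∈ Equiv.finsetCongr (Equiv.swap i j) Ω ∧ i ∉ Equiv.finsetCongr (Equiv.swap i j) Ω)
      ↔ (i ∈ Ω ∧ j ∉ Ω) := by
    simp [Equiv.finsetCongr_apply, Finset.mem_map_equiv]
  simp only [bernoulliWeight_finsetCongr, hmem, mul_sub]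

theorem abs_le_norm_mask (hi : i ∈ Ω) (q : Vec n) : |q i| ≤ ‖mask Ω q‖ := by
  simpa [mask_apply, hi] using PiLp.norm_apply_le (mask Ω q) i

theorem le_curvGap (hθ : θ ∈ Set.Icc (0 : ℝ) 1) (hμ : 0 < μ) (hμ1 : μ ≤ 1) (hij : i ≠ j)
    (hq : ‖q‖ ≤ 1) (hji : q j ^ 2 ≤ q i ^ 2) :
    θ * (1 - θ) / 100 * (q i ^ 2 - q j ^ 2) ≤ curvGap θ μ q i j := by
  have hsum : θ * (1 - θ) / 100 * (q i ^ 2 - q j ^ 2) = ∑ Ω : Finset (Fin n),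
      bernoulliWeight θ Ω * (if i ∈ Ω ∧ j ∉ Ω then 1 else 0) * ((q i ^ 2 - q j ^ 2) / 100) := by
    rw [← Finset.sum_mul, sum_bernoulliWeight_mem_notMem θ hij]
    ring
  rw [hsum, curvGap_eq_sum_swap]
  refine Finset.sum_le_sum fun Ω _ => ?_
  by_cases hΩ : i ∈ Ω ∧ j ∉ Ω
  · refine mul_le_mul_of_nonneg_left ?_ (by simp [hΩ, bernoulliWeight_nonneg hθ])
    have hswap := norm_mask_finsetCongr_swap_sq hΩ.1 hΩ.2 q
    have hle : ‖mask (Equiv.finsetCongr (Equiv.swap i j) Ω) q‖ ≤ ‖mask Ω q‖ :=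
      (sq_le_sq₀ (norm_nonneg _) (norm_nonneg _)).1 (by linarith)
    have := sq_sub_sq_le_meanCurv_sub_meanCurv hμ hμ1 (norm_nonneg _) hle
      ((norm_mask_le Ω q).trans hq)
    linarith
  · simp [hΩ]

end Swap

section Curvature

variable {n : ℕ} {θ μ : ℝ} (hθ : θ ∈ Set.Icc (0 : ℝ) 1) {i j : Fin n} {q : Vec n}
  {Ω : Finset (Fin n)}
include hθ

theorem meanGrad_rotDir (μ : ℝ) (q : Vec n) (i j : Fin n) :
    meanGrad θ μ q (rotDir q i j) = -(q i * q j * curvGap θ μ q i j) := by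
  rw [meanGrad_eq_sum μ _ _ hθ, curvGap, Finset.mul_sum, ← Finset.sum_neg_distrib]
  refine Finset.sum_congr rfl fun Ω _ => ?_
  rw [inner_mask_mask_rotDir]
  ring

theorem meanHess_rotDir_div_sub_meanGrad_rotMid (μ : ℝ) (hij : i ≠ j) (q : Vec n) :
    meanHess θ μ q (rotDir q i j) / μ - meanGrad θ μ q (rotMid q i j)
      = (q i ^ 2 - q j ^ 2) * curvGap θ μ q i j +
        (q i * q j) ^ 2 * ∑ Ω : Finset (Fin n), bernoulliWeight θ Ω *
          (((if i ∈ Ω then 1 else 0) - (if j ∈ Ω then 1 else 0)) ^ 2 / ‖mask Ω q‖ ^ 2 *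
            hermiteCurv μ ‖mask Ω q‖) := by
  rw [meanHess_div_eq_sum μ _ _ hθ, meanGrad_eq_sum μ _ _ hθ, curvGap, Finset.mul_sum,
    Finset.mul_sum, ← Finset.sum_sub_distrib, ← Finset.sum_add_distrib]
  refine Finset.sum_congr rfl fun Ω _ => ?_
  rw [inner_mask_mask_rotDir, inner_mask_mask_rotMid, norm_mask_rotDir_sq q Ω hij]
  ring

omit hθ in
theorem one_div_norm_mask_sq_mul_hermiteCurv_le (hμ : 0 < μ) (hμ1 : μ ≤ 1) (hq : ‖q‖ ≤ 1)
    (hi : i ∈ Ω) (hμi : μ ≤ |q i|) :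
    1 / ‖mask Ω q‖ ^ 2 * hermiteCurv μ ‖mask Ω q‖ ≤ -(1 / 100) := by
  have hμr : μ ≤ ‖mask Ω q‖ := hμi.trans (abs_le_norm_mask hi q)
  have hr1 : ‖mask Ω q‖ ≤ 1 := (norm_mask_le Ω q).trans hq
  have hherm := hermiteCurv_le hμ hμ1 hμr hr1
  have hinv : 1 ≤ 1 / ‖mask Ω q‖ ^ 2 :=
    (one_le_div (pow_pos (hμ.trans_le hμr) 2)).2 (pow_le_one₀ (norm_nonneg _) hr1)
  nlinarith

theorem meanHess_rotDir_div_sub_meanGrad_rotMid_le (hμ : 0 < μ) (hμ1 : μ ≤ 1) (hij : i ≠ j)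
    (hq : ‖q‖ ≤ 1) (hi : μ ≤ |q i|) (hj : μ ≤ |q j|) :
    meanHess θ μ q (rotDir q i j) / μ - meanGrad θ μ q (rotMid q i j)
      ≤ (q i ^ 2 - q j ^ 2) * curvGap θ μ q i j - θ * (1 - θ) / 50 * (q i * q j) ^ 2 := by
  have hsum : ∑ Ω : Finset (Fin n), bernoulliWeight θ Ω *
          (((if i ∈ Ω then 1 else 0) - (if j ∈ Ω then 1 else 0)) ^ 2 / ‖mask Ω q‖ ^ 2 *
            hermiteCurv μ ‖mask Ω q‖)
      ≤ ∑ Ω : Finset (Fin n), (bernoulliWeight θ Ω * (if i ∈ Ω ∧ j ∉ Ω then 1 else 0) +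
          bernoulliWeight θ Ω * (if j ∈ Ω ∧ i ∉ Ω then 1 else 0)) * (-(1 / 100)) := by
    refine Finset.sum_le_sum fun Ω _ => ?_
    rw [← mul_add, mul_assoc]
    refine mul_le_mul_of_nonneg_left ?_ (bernoulliWeight_nonneg hθ Ω)
    by_cases hiΩ : i ∈ Ω <;> by_cases hjΩ : j ∈ Ω
    · simp [hiΩ, hjΩ]
    · simpa [hiΩ, hjΩ] using one_div_norm_mask_sq_mul_hermiteCurv_le hμ hμ1 hq hiΩ hi
    · simpa [hiΩ, hjΩ] using one_div_norm_mask_sq_mul_hermiteCurv_le hμ hμ1 hq hjΩ hj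
    · simp [hiΩ, hjΩ]
  rw [← Finset.sum_mul, Finset.sum_add_distrib, sum_bernoulliWeight_mem_notMem θ hij,
    sum_bernoulliWeight_mem_notMem θ hij.symm] at hsum
  rw [meanHess_rotDir_div_sub_meanGrad_rotMid hθ μ hij]
  linarith [mul_le_mul_of_nonneg_left hsum (sq_nonneg (q i * q j))]

end Curvature

section LowerBound

variable {n : ℕ} {θ : ℝ} {i : Fin n} {Ω : Finset (Fin n)}

theorem norm_mask_sq_le_of_notMem (hi : i ∉ Ω) (a : Vec n) :
    ‖mask Ω a‖ ^ 2 ≤ ‖a‖ ^ 2 - a i ^ 2 := by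
  rw [norm_mask_sq, EuclideanSpace.real_norm_sq_eq,
    ← Finset.sum_erase_eq_sub (Finset.mem_univ i),
    ← Finset.sum_erase (a := i) Finset.univ (by simp [hi])]
  refine Finset.sum_le_sum fun k _ => ?_
  split_ifs <;> simp [sq_nonneg]

theorem sum_bernoulliWeight_notMem_mul_norm_mask_sq (θ : ℝ) (i : Fin n) (b : Vec n) :
    ∑ Ω : Finset (Fin n), bernoulliWeight θ Ω * ((if i ∈ Ω then 0 else 1) * ‖mask Ω b‖ ^ 2)
      = θ * (1 - θ) * (‖b‖ ^ 2 - b i ^ 2) := by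
  have hexpand (Ω : Finset (Fin n)) :
      bernoulliWeight θ Ω * ((if i ∈ Ω then 0 else 1) * ‖mask Ω b‖ ^ 2)
        = ∑ k ∈ Finset.univ.erase i,
          bernoulliWeight θ Ω * (if k ∈ Ω ∧ i ∉ Ω then 1 else 0) * b k ^ 2 := by
    rw [norm_mask_sq, Finset.mul_sum, Finset.mul_sum,
      ← Finset.sum_erase (a := i) Finset.univ (by by_cases hi : i ∈ Ω <;> simp [hi])]
    refine Finset.sum_congr rfl fun k _ => ?_
    by_cases hi : i ∈ Ω <;> by_cases hk : k ∈ Ω <;> simp [hi, hk]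
  simp_rw [hexpand]
  rw [Finset.sum_comm, EuclideanSpace.real_norm_sq_eq,
    ← Finset.sum_erase_eq_sub (Finset.mem_univ i), Finset.mul_sum]
  refine Finset.sum_congr rfl fun k hk => ?_
  rw [← Finset.sum_mul, sum_bernoulliWeight_mem_notMem θ (Finset.ne_of_mem_erase hk)]

theorem le_integral_hessTerm_stdGaussian {E : Type*} [NormedAddCommGroup E] [InnerProductSpace ℝ E]
    [FiniteDimensional ℝ E] [MeasurableSpace E] [BorelSpace E] (μ : ℝ) (a b : E) :
    ‖b‖ ^ 2 * (1 - 3 * ‖a‖ ^ 2 / μ ^ 2) ≤ ∫ x, hessTerm μ a b x ∂(stdGaussian E) := by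
  have hb : Integrable (fun x => ⟪b, x⟫ ^ 2) (stdGaussian E) :=
    (memLp_inner_stdGaussian b (by simp)).integrable_sq
  have hab : Integrable (fun x => (μ ^ 2)⁻¹ * (⟪a, x⟫ ^ 2 * ⟪b, x⟫ ^ 2)) (stdGaussian E) :=
    ((memLp_inner_sq_stdGaussian a).integrable_mul (memLp_inner_sq_stdGaussian b)).const_mul _
  calc ‖b‖ ^ 2 * (1 - 3 * ‖a‖ ^ 2 / μ ^ 2)
      = ‖b‖ ^ 2 - (μ ^ 2)⁻¹ * (3 * (‖a‖ ^ 2 * ‖b‖ ^ 2)) := by ring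
    _ ≤ ‖b‖ ^ 2 - (μ ^ 2)⁻¹ * ∫ x, ⟪a, x⟫ ^ 2 * ⟪b, x⟫ ^ 2 ∂(stdGaussian E) := by
        gcongr
        exact integral_inner_sq_mul_inner_sq_stdGaussian_le a b
    _ = ∫ x, (⟪b, x⟫ ^ 2 - (μ ^ 2)⁻¹ * (⟪a, x⟫ ^ 2 * ⟪b, x⟫ ^ 2)) ∂(stdGaussian E) := by
        rw [integral_sub hb hab, integral_const_mul, integral_inner_sq_stdGaussian]
    _ ≤ ∫ x, hessTerm μ a b x ∂(stdGaussian E) := by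
        refine integral_mono (hb.sub hab) ?_ fun x => ?_
        · exact integrable_bdd_mul_inner_pow_stdGaussian a b (F := fun y => sechSq (y / μ))
            (by fun_prop) (fun y => abs_sechSq_le_one _) 2
        · have := mul_le_mul_of_nonneg_right (one_sub_sq_le_sechSq (⟪a, x⟫ / μ))
            (sq_nonneg ⟪b, x⟫)
          exact le_of_eq_of_le (by ring) this

theorem le_meanHess (hθ : θ ∈ Set.Icc (0 : ℝ) 1) (μ : ℝ) (i : Fin n) (a b : Vec n) :
    θ * (1 - θ) * (‖b‖ ^ 2 - b i ^ 2) * (1 - 3 * (‖a‖ ^ 2 - a i ^ 2) / μ ^ 2)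
      ≤ meanHess θ μ a b := by
  rw [meanHess, integral_bgLaw hθ (by fun_prop) (integrable_hessTerm_mask μ a b),
    ← sum_bernoulliWeight_notMem_mul_norm_mask_sq, Finset.sum_mul]
  refine Finset.sum_le_sum fun Ω _ => ?_
  rw [mul_assoc]
  refine mul_le_mul_of_nonneg_left ?_ (bernoulliWeight_nonneg hθ Ω)
  by_cases hi : i ∈ Ω
  · rw [if_pos hi, zero_mul, zero_mul]
    exact integral_nonneg fun x => hessTerm_nonneg μ a b _
  · have hmask (x : Vec n) : hessTerm μ a b (mask Ω x) = hessTerm μ (mask Ω a) (mask Ω b) x := by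
      simp only [hessTerm, inner_mask_right]
    simp only [if_neg hi, one_mul, hmask]
    refine le_trans ?_ (le_integral_hessTerm_stdGaussian μ (mask Ω a) (mask Ω b))
    gcongr
    exact norm_mask_sq_le_of_notMem hi a

end LowerBound

/-! ### Concentration of empirical means over the columns -/

section Growth

theorem exp_le_one_add_add_sq (y : ℝ) : Real.exp y ≤ 1 + y + y ^ 2 * Real.exp |y| := by
  have hexp_abs : 1 ≤ Real.exp |y| := Real.one_le_exp (abs_nonneg y)
  rcases le_or_gt |y| 1 with h | h
  · have := (abs_le.1 (Real.abs_exp_sub_one_sub_id_le h)).2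
    nlinarith [sq_nonneg y]
  · rcases lt_abs.1 h with hpos | hneg
    · rw [abs_of_pos (by linarith)]
      have hsq : 1 ≤ y ^ 2 := by nlinarith
      nlinarith [mul_le_mul_of_nonneg_right hsq (Real.exp_pos y).le]
    · have : Real.exp y ≤ 1 := Real.exp_le_one_iff.2 (by linarith)
      nlinarith [sq_nonneg y]

variable {r f s : ℝ}

theorem abs_mul_le_of_abs_le_one_add (hr : |r| ≤ 1 / 32) (hf : |f| ≤ 1 + s) :
    |r * f| ≤ (1 + s) / 32 := by
  rw [abs_mul]
  calc |r| * |f| ≤ 1 / 32 * (1 + s) := mul_le_mul hr hf (abs_nonneg _) (by norm_num)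
    _ = _ := by ring

theorem exp_mul_le_of_abs_le_one_add (hr : |r| ≤ 1 / 32) (hs : 0 ≤ s) (hf : |f| ≤ 1 + s) :
    Real.exp (r * f) ≤ 1 + r * f + r ^ 2 * (3000 * Real.exp (s / 16)) := by
  have hf_sq : f ^ 2 ≤ 2048 * Real.exp ((1 + s) / 32) := by
    have : f ^ 2 ≤ (1 + s) ^ 2 := sq_le_sq' (by linarith [(abs_le.1 hf).1]) (abs_le.1 hf).2
    have := Real.quadratic_le_exp_of_nonneg (x := (1 + s) / 32) (by positivity)
    nlinarith
  have hexp : Real.exp (1 / 16) ≤ 3000 / 2048 := by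
    have := Real.exp_bound_div_one_sub_of_interval (x := 1 / 16) (by norm_num) (by norm_num)
    norm_num at this ⊢
    linarith
  have hquad : f ^ 2 * Real.exp |r * f| ≤ 3000 * Real.exp (s / 16) := by
    calc f ^ 2 * Real.exp |r * f|
        ≤ 2048 * Real.exp ((1 + s) / 32) * Real.exp ((1 + s) / 32) :=
          mul_le_mul hf_sq (Real.exp_le_exp.2 (abs_mul_le_of_abs_le_one_add hr hf))
            (Real.exp_pos _).le (by positivity)
      _ = 2048 * (Real.exp (1 / 16) * Real.exp (s / 16)) := by
          rw [mul_assoc, ← Real.exp_add, ← Real.exp_add]; ring_nf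
      _ ≤ 2048 * (3000 / 2048 * Real.exp (s / 16)) := by gcongr
      _ = _ := by ring
  calc _ ≤ 1 + r * f + (r * f) ^ 2 * Real.exp |r * f| := exp_le_one_add_add_sq _
    _ = 1 + r * f + r ^ 2 * (f ^ 2 * Real.exp |r * f|) := by ring
    _ ≤ _ := by gcongr

end Growth

section Exponential

variable {n : ℕ} {θ r : ℝ} {b : Vec n} {F : Vec n → ℝ} (hθ : θ ∈ Set.Icc (0 : ℝ) 1)
  (hb : ‖b‖ ≤ 2) (hF : Continuous F) (hgrowth : ∀ x, |F x| ≤ 1 + ⟪b, x⟫ ^ 2) (hr : |r| ≤ 1 / 32)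
include hθ hb hF hgrowth hr

theorem integrable_exp_mul_bgLaw : Integrable (fun x => Real.exp (r * F x)) (bgLaw θ n) := by
  refine ((integrable_exp_inner_sq_bgLaw hθ b hb).const_mul (Real.exp (1 / 32))).mono'
    (by fun_prop) (ae_of_all _ fun x => ?_)
  rw [Real.norm_eq_abs, Real.abs_exp, ← Real.exp_add]
  refine Real.exp_le_exp.2 ((le_abs_self _).trans
    ((abs_mul_le_of_abs_le_one_add hr (hgrowth x)).trans ?_))
  linarith [sq_nonneg ⟪b, x⟫]

theorem mgf_bgLaw_le :
    mgf F (bgLaw θ n) r ≤ Real.exp (r * (∫ x, F x ∂(bgLaw θ n)) + 6000 * r ^ 2) := by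
  have := isProbabilityMeasure_bgLaw (n := n) hθ
  have hF_int : Integrable F (bgLaw θ n) :=
    ((integrable_const 1).add (memLp_inner_bgLaw hθ b).integrable_sq).mono' (by fun_prop)
      (ae_of_all _ hgrowth)
  have hlin : Integrable (fun x => 1 + r * F x) (bgLaw θ n) :=
    (integrable_const 1).add (hF_int.const_mul r)
  have hquad : Integrable (fun x => r ^ 2 * (3000 * Real.exp (⟪b, x⟫ ^ 2 / 16))) (bgLaw θ n) :=
    ((integrable_exp_inner_sq_bgLaw hθ b hb).const_mul _).const_mul _
  calc ∫ x, Real.exp (r * F x) ∂(bgLaw θ n)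
      ≤ ∫ x, (1 + r * F x + r ^ 2 * (3000 * Real.exp (⟪b, x⟫ ^ 2 / 16))) ∂(bgLaw θ n) :=
        integral_mono (integrable_exp_mul_bgLaw hθ hb hF hgrowth hr) (hlin.add hquad)
          fun x => exp_mul_le_of_abs_le_one_add hr (sq_nonneg _) (hgrowth x)
    _ = 1 + r * (∫ x, F x ∂(bgLaw θ n))
          + r ^ 2 * (3000 * ∫ x, Real.exp (⟪b, x⟫ ^ 2 / 16) ∂(bgLaw θ n)) := by
        rw [integral_add hlin hquad, integral_add (integrable_const 1) (hF_int.const_mul r),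
          integral_const_mul, integral_const_mul, integral_const_mul]
        simp only [integral_const, probReal_univ, smul_eq_mul, mul_one]
    _ ≤ 1 + r * (∫ x, F x ∂(bgLaw θ n)) + r ^ 2 * (3000 * 2) := by
        gcongr
        exact integral_exp_inner_sq_bgLaw_le hθ b hb
    _ ≤ _ := by
        refine le_trans (le_of_eq ?_) (Real.add_one_le_exp _)
        ring

end Exponential

theorem measureReal_pi_sum_ge_le {α : Type*} [MeasurableSpace α] {ν : Measure α}
    [IsProbabilityMeasure ν] {F : α → ℝ} {r m c : ℝ} (hr : 0 ≤ r)
    (hint : Integrable (fun x => Real.exp (r * F x)) ν)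
    (hmgf : mgf F ν r ≤ Real.exp (r * m + c)) (p : ℕ) (t : ℝ) :
    (Measure.pi fun _ : Fin p => ν).real {x | p * (m + t) ≤ ∑ k, F (x k)}
      ≤ Real.exp (p * (c - r * t)) := by
  have hprod (x : Fin p → α) :
      Real.exp (r * ∑ k, F (x k)) = ∏ k, Real.exp (r * F (x k)) := by
    rw [← Real.exp_sum, Finset.mul_sum]
  have hmgf_sum : mgf (fun x : Fin p → α => ∑ k, F (x k)) (Measure.pi fun _ => ν) r
      ≤ Real.exp (p * (r * m + c)) := by
    simp_rw [mgf, hprod]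
    rw [integral_fintype_prod_eq_prod (fun _ x => Real.exp (r * F x)), Finset.prod_const,
      Finset.card_univ, Fintype.card_fin, Real.exp_nat_mul]
    exact pow_le_pow_left₀ (integral_nonneg fun _ => (Real.exp_pos _).le) hmgf p
  have hint_sum : Integrable (fun x : Fin p → α => Real.exp (r * ∑ k, F (x k)))
      (Measure.pi fun _ => ν) := by
    simp_rw [hprod]
    exact Integrable.fintype_prod fun _ => hint
  calc _ ≤ Real.exp (-r * (p * (m + t))) * mgf (fun x : Fin p → α => ∑ k, F (x k)) _ r :=
        measure_ge_le_exp_mul_mgf _ hr hint_sum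
    _ ≤ Real.exp (-r * (p * (m + t))) * Real.exp (p * (r * m + c)) := by gcongr
    _ = _ := by
        rw [← Real.exp_add]
        ring_nf

section Columns

variable {n p : ℕ}

/-- The `k`-th column of a matrix, as a Euclidean vector. -/
def colVec (X : Fin n → Fin p → ℝ) (k : Fin p) : Vec n := WithLp.toLp 2 fun i => X i k

/-- The average of `F` over the columns of `X`: the empirical counterpart of `∫ x, F x ∂(bgLaw θ n)`
when `X` is drawn from `bgMatrix θ n p`. -/
def colAvg (F : Vec n → ℝ) (X : Fin n → Fin p → ℝ) : ℝ :=
  (p : ℝ)⁻¹ * ∑ k : Fin p, F (colVec X k)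

theorem measurable_colVec : Measurable (fun (X : Fin n → Fin p → ℝ) (k : Fin p) => colVec X k) := by
  unfold colVec; fun_prop

theorem measurable_swap_pi :
    Measurable (Function.swap : (Fin n → Fin p → ℝ) → Fin p → Fin n → ℝ) := by
  unfold Function.swap; fun_prop

theorem map_swap_bgMatrix (θ : ℝ) (n p : ℕ) :
    (bgMatrix θ n p).map Function.swap = Measure.pi fun _ : Fin p => bgVec θ n := by
  symm
  refine Measure.pi_eq_generateFrom
    (C := fun _ => Set.univ.pi '' Set.univ.pi fun _ : Fin n => {s : Set ℝ | MeasurableSet s})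
    (fun _ => generateFrom_pi) (fun _ => isPiSystem_pi) (fun _ => ?_) ?_
  · refine ⟨fun _ => Set.univ, fun _ => ⟨fun _ => Set.univ, by simp, by simp⟩, fun _ => ?_,
      Set.iUnion_const _⟩
    unfold bgVec
    exact measure_lt_top _ _
  · intro s hs
    choose t ht hts using hs
    obtain rfl : (fun k => Set.univ.pi (t k)) = s := funext hts
    have hmeas (k : Fin p) (i : Fin n) : MeasurableSet (t k i) := ht k i (Set.mem_univ i)
    have hpre : (Function.swap : (Fin n → Fin p → ℝ) → _) ⁻¹'
        (Set.univ.pi fun k => Set.univ.pi (t k))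
          = Set.univ.pi fun i => Set.univ.pi fun k => t k i := by
      ext X
      simp only [Set.mem_preimage, Set.mem_univ_pi, Function.swap]
      exact forall_comm
    rw [Measure.map_apply measurable_swap_pi (MeasurableSet.univ_pi fun k =>
      MeasurableSet.univ_pi (hmeas k)), hpre, bgMatrix, Measure.pi_pi]
    simp_rw [Measure.pi_pi, bgVec, Measure.pi_pi]
    exact Finset.prod_comm

theorem map_colVec_bgMatrix (θ : ℝ) (n p : ℕ) :
    (bgMatrix θ n p).map (fun X k => colVec X k) = Measure.pi fun _ : Fin p => bgLaw θ n := by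
  have : IsFiniteMeasure (bgVec θ n) := by unfold bgVec; infer_instance
  simp only [bgLaw]
  rw [← Measure.pi_map_pi (fun _ => by fun_prop), ← map_swap_bgMatrix,
    Measure.map_map (by fun_prop) measurable_swap_pi]
  rfl

variable {θ t : ℝ} {b : Vec n} {F : Vec n → ℝ} (hθ : θ ∈ Set.Icc (0 : ℝ) 1) (hp : 0 < p)
  (hb : ‖b‖ ≤ 2) (hF : Continuous F) (hgrowth : ∀ x, |F x| ≤ 1 + ⟪b, x⟫ ^ 2)
  (ht : t ∈ Set.Icc (0 : ℝ) 1)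
include hθ hp hb hF hgrowth ht

theorem measure_integral_add_le_colAvg_le :
    bgMatrix θ n p {X | (∫ x, F x ∂(bgLaw θ n)) + t ≤ colAvg F X}
      ≤ ENNReal.ofReal (Real.exp (-(p * t ^ 2 / 24000))) := by
  have := isProbabilityMeasure_bgLaw (n := n) hθ
  set m := ∫ x, F x ∂(bgLaw θ n)
  have hr0 : 0 ≤ t / 12000 := by linarith [ht.1]
  have hr : |t / 12000| ≤ 1 / 32 := by
    rw [abs_of_nonneg hr0]
    linarith [ht.2]
  have hp' : (0 : ℝ) < p := by exact_mod_cast hp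
  set P := Measure.pi fun _ : Fin p => bgLaw θ n with hP
  have hmap : bgMatrix θ n p {X | m + t ≤ colAvg F X}
      = P {x | p * (m + t) ≤ ∑ k, F (x k)} := by
    rw [hP, ← map_colVec_bgMatrix, Measure.map_apply measurable_colVec
      (measurableSet_le (by fun_prop) (by fun_prop))]
    congr 1
    ext X
    simp only [Set.mem_preimage, Set.mem_ofPred_eq, colAvg]
    rw [inv_mul_eq_div, le_div_iff₀ hp', mul_comm]
  rw [hmap, ← ofReal_measureReal]
  refine ENNReal.ofReal_le_ofReal ((measureReal_pi_sum_ge_le hr0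
    (integrable_exp_mul_bgLaw hθ hb hF hgrowth hr) (mgf_bgLaw_le hθ hb hF hgrowth hr) p t).trans_eq
    ?_)
  ring_nf

theorem measure_lt_abs_colAvg_sub_integral_le :
    bgMatrix θ n p {X | t < |colAvg F X - ∫ x, F x ∂(bgLaw θ n)|}
      ≤ ENNReal.ofReal (2 * Real.exp (-(p * t ^ 2 / 24000))) := by
  have hupper := measure_integral_add_le_colAvg_le hθ hp hb hF hgrowth ht
  have hlower := measure_integral_add_le_colAvg_le (F := fun x => -F x) hθ hp hb hF.neg
    (by simpa using hgrowth) ht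
  have hsub : {X : Fin n → Fin p → ℝ | t < |colAvg F X - ∫ x, F x ∂(bgLaw θ n)|}
      ⊆ {X | (∫ x, F x ∂(bgLaw θ n)) + t ≤ colAvg F X} ∪
        {X | (∫ x, -F x ∂(bgLaw θ n)) + t ≤ colAvg (fun x => -F x) X} := by
    intro X hX
    have hneg : colAvg (fun x => -F x) X = -colAvg F X := by simp [colAvg]
    simp only [Set.mem_union, Set.mem_ofPred_eq, integral_neg, hneg] at hX ⊢
    rcases lt_abs.1 hX with h | h
    · left; linarith
    · right; linarith
  calc _ ≤ _ := (measure_mono hsub).trans (measure_union_le _ _)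
    _ ≤ _ := add_le_add hupper hlower
    _ = _ := by
      rw [← ENNReal.ofReal_add (Real.exp_pos _).le (Real.exp_pos _).le, two_mul]

end Columns

/-! ### Uniform concentration through a net of grid points -/

section ColAvg

variable {n p : ℕ} {F G : Vec n → ℝ} {X : Fin n → Fin p → ℝ} {B : ℝ}

theorem abs_colAvg_sub_colAvg_le (hp : 0 < p) (h : ∀ k, |F (colVec X k) - G (colVec X k)| ≤ B) :
    |colAvg F X - colAvg G X| ≤ B := by
  have hp' : (0 : ℝ) < p := by exact_mod_cast hp
  rw [colAvg, colAvg, ← mul_sub, ← Finset.sum_sub_distrib, abs_mul, abs_of_pos (inv_pos.2 hp'),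
    inv_mul_le_iff₀ hp']
  refine (Finset.abs_sum_le_sum_abs _ _).trans ((Finset.sum_le_sum fun k _ => h k).trans_eq ?_)
  simp

theorem le_mul_of_colAvg_le (hF : ∀ x, 0 ≤ F x) (h : colAvg F X ≤ B) (k : Fin p) :
    F (colVec X k) ≤ p * B := by
  have hp : (0 : ℝ) < p := by exact_mod_cast k.pos
  rw [colAvg, inv_mul_le_iff₀ hp] at h
  exact (Finset.single_le_sum (f := fun k => F (colVec X k)) (fun k _ => hF _)
    (Finset.mem_univ k)).trans h

end ColAvg

section EmpiricalDerivatives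

variable {n p : ℕ} {μ : ℝ} {X : Fin n → Fin p → ℝ}

/-- The derivative at `a` in direction `b` of the empirical objective
`q ↦ colAvg (fun x => hmu μ ⟪q, x⟫) X`. -/
def empGrad (μ : ℝ) (X : Fin n → Fin p → ℝ) (a b : Vec n) : ℝ := colAvg (gradTerm μ a b) X

/-- `μ` times the second derivative at `a` in direction `b` of the empirical objective
`q ↦ colAvg (fun x => hmu μ ⟪q, x⟫) X`. -/
def empHess (μ : ℝ) (X : Fin n → Fin p → ℝ) (a b : Vec n) : ℝ := colAvg (hessTerm μ a b) X

theorem empGrad_smul_right (c : ℝ) (a b : Vec n) :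
    empGrad μ X a (c • b) = c * empGrad μ X a b := by
  simp only [empGrad, colAvg, gradTerm, real_inner_smul_left, Finset.mul_sum]
  exact Finset.sum_congr rfl fun k _ => by ring

theorem empHess_smul_right (c : ℝ) (a b : Vec n) :
    empHess μ X a (c • b) = c ^ 2 * empHess μ X a b := by
  simp only [empHess, colAvg, hessTerm, real_inner_smul_left, Finset.mul_sum]
  exact Finset.sum_congr rfl fun k _ => by ring

theorem hessTerm_zero_left (μ : ℝ) (b x : Vec n) : hessTerm μ 0 b x = ⟪b, x⟫ ^ 2 := by
  simp [hessTerm, sechSq]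

theorem meanHess_zero_left {θ : ℝ} (hθ : θ ∈ Set.Icc (0 : ℝ) 1) (μ : ℝ) (b : Vec n) :
    meanHess θ μ 0 b = θ * ‖b‖ ^ 2 := by
  simp only [meanHess, hessTerm_zero_left, integral_inner_sq_bgLaw hθ]

/-- The empirical derivatives at `a` in direction `b` are within `ε₁` and `ε₂` of their means. -/
def DerivativesNear (θ μ ε₁ ε₂ : ℝ) (X : Fin n → Fin p → ℝ) (a b : Vec n) : Prop :=
  |empGrad μ X a b - meanGrad θ μ a b| ≤ ε₁ ∧ |empHess μ X a b - meanHess θ μ a b| ≤ ε₂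

theorem DerivativesNear.smul_right {θ ε₁ ε₂ : ℝ} {a b : Vec n}
    (h : DerivativesNear θ μ ε₁ ε₂ X a b) (c : ℝ) :
    DerivativesNear θ μ (|c| * ε₁) (c ^ 2 * ε₂) X a (c • b) := by
  refine ⟨?_, ?_⟩
  · rw [empGrad_smul_right, meanGrad_smul_right, ← mul_sub, abs_mul]
    exact mul_le_mul_of_nonneg_left h.1 (abs_nonneg c)
  · rw [empHess_smul_right, meanHess_smul_right, ← mul_sub, abs_mul, abs_of_nonneg (sq_nonneg c)]
    exact mul_le_mul_of_nonneg_left h.2 (sq_nonneg c)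

theorem measure_not_derivativesNear_le {θ t : ℝ} (hθ : θ ∈ Set.Icc (0 : ℝ) 1) (hp : 0 < p)
    (ht : t ∈ Set.Icc (0 : ℝ) 1) (μ : ℝ) (a : Vec n) {b : Vec n} (hb : ‖b‖ ≤ 2) :
    bgMatrix θ n p {X | ¬ DerivativesNear θ μ t t X a b}
      ≤ ENNReal.ofReal (4 * Real.exp (-(p * t ^ 2 / 24000))) := by
  have hgrad (x : Vec n) : |gradTerm μ a b x| ≤ 1 + ⟪b, x⟫ ^ 2 := by
    nlinarith [abs_gradTerm_le μ a b x, sq_abs ⟪b, x⟫, sq_nonneg (|⟪b, x⟫| - 1)]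
  have hhess (x : Vec n) : |hessTerm μ a b x| ≤ 1 + ⟪b, x⟫ ^ 2 := by
    rw [abs_of_nonneg (hessTerm_nonneg μ a b x)]
    linarith [hessTerm_le μ a b x]
  simp only [DerivativesNear, not_and_or, not_le, Set.ofPred_or]
  calc _ ≤ _ := measure_union_le _ _
    _ ≤ _ := add_le_add
      (measure_lt_abs_colAvg_sub_integral_le hθ hp hb (continuous_gradTerm μ a b) hgrad ht)
      (measure_lt_abs_colAvg_sub_integral_le hθ hp hb (continuous_hessTerm μ a b) hhess ht)
    _ = _ := by
      rw [← ENNReal.ofReal_add (by positivity) (by positivity)]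
      ring_nf

end EmpiricalDerivatives

section Grid

variable {n : ℕ}

/-- The point `z / N` of the grid `N⁻¹ ℤⁿ`. -/
def gridPt (N : ℕ) (z : Fin n → ℤ) : Vec n := WithLp.toLp 2 fun i => (z i : ℝ) / N

/-- Integer vectors with all entries in `[-2N, 2N]`; they index a net of a ball of radius `2`. -/
def gridBox (n N : ℕ) : Finset (Fin n → ℤ) :=
  Fintype.piFinset fun _ => Finset.Icc (-(2 * N : ℤ)) (2 * N)

theorem card_gridBox (n N : ℕ) : (gridBox n N).card = (4 * N + 1) ^ n := by
  rw [gridBox, Fintype.card_piFinset, Finset.prod_const, Finset.card_univ, Fintype.card_fin,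
    Int.card_Icc]
  congr 1
  lia

theorem gridPt_zero (N : ℕ) : gridPt N (0 : Fin n → ℤ) = 0 := by
  ext i
  simp [gridPt]

theorem gridPt_single {N : ℕ} (hN : 0 < N) (i : Fin n) :
    gridPt N (Pi.single i (N : ℤ)) = EuclideanSpace.single i (1 : ℝ) := by
  ext j
  rcases eq_or_ne j i with rfl | hj
  · simp [gridPt, hN.ne']
  · simp [gridPt, hj]

theorem single_mem_gridBox (N : ℕ) (i : Fin n) : Pi.single i (N : ℤ) ∈ gridBox n N := by
  rw [gridBox, Fintype.mem_piFinset]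
  intro j
  rcases eq_or_ne j i with rfl | hj
  · simp only [Pi.single_eq_same, Finset.mem_Icc]
    lia
  · simp [hj]

theorem floor_mem_gridBox (N : ℕ) {a : Vec n} (ha : ‖a‖ ≤ 2) :
    (fun i => ⌊a i * N⌋) ∈ gridBox n N := by
  rw [gridBox, Fintype.mem_piFinset]
  intro i
  have hai : |a i| ≤ 2 := (PiLp.norm_apply_le a i : |a i| ≤ ‖a‖).trans ha
  rw [abs_le] at hai
  have hfloor : ((⌊a i * N⌋ : ℤ) : ℝ) ≤ ((2 * N : ℤ) : ℝ) := by
    push_cast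
    exact (Int.floor_le _).trans (by gcongr; exact hai.2)
  refine Finset.mem_Icc.2 ⟨Int.le_floor.2 ?_, by exact_mod_cast hfloor⟩
  push_cast
  rw [← neg_mul]
  gcongr
  exact hai.1

theorem norm_sub_gridPt_floor_le {N : ℕ} (hN : 0 < N) (a : Vec n) :
    ‖a - gridPt N fun i => ⌊a i * N⌋‖ ≤ n / N := by
  have hcoord (i : Fin n) : ‖(a - gridPt N fun i => ⌊a i * N⌋) i‖ ≤ 1 / N := by
    have hdiff : (a - gridPt N fun i => ⌊a i * N⌋) i = (a i * N - ⌊a i * N⌋) / N := by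
      simp only [gridPt, PiLp.sub_apply]
      field_simp
    rw [hdiff, Int.self_sub_floor, Real.norm_eq_abs, abs_of_nonneg (by positivity)]
    gcongr
    exact (Int.fract_lt_one _).le
  calc _ ≤ ∑ i, ‖(a - gridPt N fun i => ⌊a i * N⌋) i‖ := by
        rw [EuclideanSpace.norm_eq]
        exact Real.sqrt_le_iff.2 ⟨Finset.sum_nonneg fun i _ => norm_nonneg _,
          Finset.sum_sq_le_sq_sum_of_nonneg fun i _ => norm_nonneg _⟩
    _ ≤ ∑ i : Fin n, (1 / N : ℝ) := Finset.sum_le_sum fun i _ => hcoord i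
    _ = n / N := by simp [div_eq_mul_inv]

end Grid

section Concentration

variable {n p : ℕ} {θ μ t : ℝ} {X : Fin n → Fin p → ℝ}

/-- The empirical derivatives concentrate at all grid points, in all grid directions of norm at
most `2`. -/
def GridConcentration (θ μ t : ℝ) (N : ℕ) (X : Fin n → Fin p → ℝ) : Prop :=
  ∀ z ∈ gridBox n N, ∀ w ∈ gridBox n N, ‖gridPt (n := n) N w‖ ≤ 2 →
    DerivativesNear θ μ t t X (gridPt N z) (gridPt N w)

theorem measure_not_gridConcentration_le (hθ : θ ∈ Set.Icc (0 : ℝ) 1) (hp : 0 < p)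
    (ht : t ∈ Set.Icc (0 : ℝ) 1) (μ : ℝ) (N : ℕ) :
    bgMatrix θ n p {X | ¬ GridConcentration θ μ t N X}
      ≤ ENNReal.ofReal ((4 * N + 1) ^ (2 * n) * (4 * Real.exp (-(p * t ^ 2 / 24000)))) := by
  classical
  set B := (gridBox n N ×ˢ gridBox n N).filter fun zw => ‖gridPt (n := n) N zw.2‖ ≤ 2
  have hsub : {X : Fin n → Fin p → ℝ | ¬ GridConcentration θ μ t N X}
      ⊆ ⋃ zw ∈ B, {X | ¬ DerivativesNear θ μ t t X (gridPt N zw.1) (gridPt N zw.2)} := by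
    intro X hX
    simp only [Set.mem_ofPred_eq, GridConcentration, not_forall] at hX
    obtain ⟨z, hz, w, hw, hw2, h⟩ := hX
    simp only [Set.mem_iUnion]
    exact ⟨(z, w), Finset.mem_filter.2 ⟨Finset.mem_product.2 ⟨hz, hw⟩, hw2⟩, h⟩
  have hcard : B.card ≤ (4 * N + 1) ^ (2 * n) := by
    refine (Finset.card_filter_le _ _).trans_eq ?_
    rw [Finset.card_product, card_gridBox, two_mul, pow_add]
  calc _ ≤ _ := (measure_mono hsub).trans (measure_biUnion_finset_le _ _)
    _ ≤ ∑ zw ∈ B, ENNReal.ofReal (4 * Real.exp (-(p * t ^ 2 / 24000))) :=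
        Finset.sum_le_sum fun zw hzw =>
          measure_not_derivativesNear_le hθ hp ht μ _ (Finset.mem_filter.1 hzw).2
    _ = ENNReal.ofReal (B.card * (4 * Real.exp (-(p * t ^ 2 / 24000)))) := by
        rw [Finset.sum_const, nsmul_eq_mul, ENNReal.ofReal_mul (Nat.cast_nonneg B.card),
          ENNReal.ofReal_natCast]
    _ ≤ _ := by
        refine ENNReal.ofReal_le_ofReal (mul_le_mul_of_nonneg_right ?_ (by positivity))
        exact_mod_cast hcard

theorem GridConcentration.norm_colVec_le {N : ℕ} (hX : GridConcentration θ μ t N X) (hN : 0 < N)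
    (hθ : θ ∈ Set.Icc (0 : ℝ) 1) (ht : t ≤ 1) (k : Fin p) : ‖colVec X k‖ ≤ 2 * (n * p) := by
  have hcoord (i : Fin n) : X i k ^ 2 ≤ p * 2 := by
    have h := (hX 0 (by simp [gridBox]) _ (single_mem_gridBox N i)
      (by simp [gridPt_single hN])).2
    rw [gridPt_zero, gridPt_single hN, meanHess_zero_left hθ] at h
    have havg : colAvg (hessTerm μ 0 (EuclideanSpace.single i (1 : ℝ))) X ≤ 2 := by
      have := (abs_le.1 h).2
      simp only [PiLp.norm_single, norm_one, one_pow, mul_one, empHess] at this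
      linarith [hθ.2]
    simpa [hessTerm_zero_left, colVec, EuclideanSpace.inner_single_left] using
      le_mul_of_colAvg_le (hessTerm_nonneg μ 0 _) havg k
  have hsq : ‖colVec X k‖ ^ 2 ≤ 2 * (n * p) := by
    rw [EuclideanSpace.real_norm_sq_eq]
    refine (Finset.sum_le_sum fun i _ => hcoord i).trans_eq ?_
    rw [Finset.sum_const, Finset.card_univ, Fintype.card_fin, nsmul_eq_mul]
    ring
  rcases Nat.eq_zero_or_pos n with rfl | hn
  · simp [Subsingleton.elim (colVec X k) 0]
  · have hone : (1 : ℝ) ≤ n * p := by exact_mod_cast Nat.mul_pos hn k.pos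
    exact le_of_sq_le_sq (hsq.trans (by nlinarith)) (by positivity)

end Concentration

section Perturbation

variable {E : Type*} [NormedAddCommGroup E] [InnerProductSpace ℝ E] {μ M δ : ℝ} {a a' b b' x : E}

theorem gradTerm_sub_right (μ : ℝ) (a b b' x : E) :
    gradTerm μ a b x - gradTerm μ a b' x = gradTerm μ a (b - b') x := by
  simp only [gradTerm, inner_sub_left, mul_sub]

theorem abs_inner_le_mul_of_norm_le {c : E} {r : ℝ} (hc : ‖c‖ ≤ r) (hx : ‖x‖ ≤ M) :
    |⟪c, x⟫| ≤ r * M :=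
  (abs_real_inner_le_norm c x).trans
    (mul_le_mul hc hx (norm_nonneg x) ((norm_nonneg c).trans hc))

variable (hμ : 0 < μ) (hμ1 : μ ≤ 1) (hM : 1 ≤ M) (hb : ‖b‖ ≤ 1) (ha : ‖a - a'‖ ≤ δ)
  (hbb : ‖b - b'‖ ≤ δ) (hx : ‖x‖ ≤ M)
include hμ hμ1 hM hb ha hbb hx

theorem abs_gradTerm_sub_le :
    |gradTerm μ a b x - gradTerm μ a' b' x| ≤ 2 * (μ⁻¹ * (δ * M ^ 3)) := by
  have hδ : 0 ≤ δ := (norm_nonneg _).trans ha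
  have hleft : |gradTerm μ a b x - gradTerm μ a' b x| ≤ μ⁻¹ * (δ * M ^ 3) := by
    refine (abs_gradTerm_sub_left μ a a' b x hμ).trans ?_
    rw [abs_mul]
    refine mul_le_mul_of_nonneg_left ?_ (by positivity)
    calc |⟪a - a', x⟫| * |⟪b, x⟫| ≤ δ * M * (1 * M) := by
          gcongr <;> exact abs_inner_le_mul_of_norm_le ‹_› hx
      _ = δ * M ^ 2 := by ring
      _ ≤ _ := by gcongr; norm_num
  have hright : |gradTerm μ a' b x - gradTerm μ a' b' x| ≤ μ⁻¹ * (δ * M ^ 3) := by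
    rw [gradTerm_sub_right]
    calc _ ≤ δ * M := (abs_gradTerm_le _ _ _ _).trans (abs_inner_le_mul_of_norm_le hbb hx)
      _ ≤ 1 * (δ * M ^ 3) := by rw [one_mul]; gcongr; exact le_self_pow₀ hM (by norm_num)
      _ ≤ _ := by gcongr; exact (one_le_inv₀ hμ).2 hμ1
  linarith [abs_sub_le (gradTerm μ a b x) (gradTerm μ a' b x) (gradTerm μ a' b' x)]

theorem abs_hessTerm_sub_le (hb' : ‖b'‖ ≤ 2) :
    |hessTerm μ a b x - hessTerm μ a' b' x| ≤ 5 * (μ⁻¹ * (δ * M ^ 3)) := by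
  have hδ : 0 ≤ δ := (norm_nonneg _).trans ha
  have hleft : |hessTerm μ a b x - hessTerm μ a' b x| ≤ 2 * (μ⁻¹ * (δ * M ^ 3)) := by
    refine (abs_hessTerm_sub_left μ a a' b x hμ).trans ?_
    rw [abs_mul, abs_mul, mul_assoc 2]
    refine mul_le_mul_of_nonneg_left (mul_le_mul_of_nonneg_left ?_ (by positivity)) (by norm_num)
    calc |⟪a - a', x⟫| * |⟪b, x⟫| * |⟪b, x⟫| ≤ δ * M * (1 * M) * (1 * M) := by
          gcongr <;> exact abs_inner_le_mul_of_norm_le ‹_› hx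
      _ = _ := by ring
  have hright : |hessTerm μ a' b x - hessTerm μ a' b' x| ≤ 3 * (μ⁻¹ * (δ * M ^ 3)) := by
    have hsum : ‖b + b'‖ ≤ 3 := (norm_add_le _ _).trans (by linarith)
    refine (abs_hessTerm_sub_right μ a' b b' x).trans ?_
    rw [abs_mul]
    calc |⟪b - b', x⟫| * |⟪b + b', x⟫| ≤ δ * M * (3 * M) := by
          gcongr <;> exact abs_inner_le_mul_of_norm_le ‹_› hx
      _ = 3 * (1 * (δ * M ^ 2)) := by ring
      _ ≤ _ := by
          gcongr
          · exact (one_le_inv₀ hμ).2 hμ1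
          · norm_num
  linarith [abs_sub_le (hessTerm μ a b x) (hessTerm μ a' b x) (hessTerm μ a' b' x)]

end Perturbation

section MeanPerturbation

variable {n : ℕ} {θ μ δ : ℝ} {a a' b b' : Vec n} (hθ : θ ∈ Set.Icc (0 : ℝ) 1) (hμ : 0 < μ)
  (hμ1 : μ ≤ 1) (hb : ‖b‖ ≤ 1) (ha : ‖a - a'‖ ≤ δ) (hbb : ‖b - b'‖ ≤ δ)
include hθ hμ hμ1 hb ha hbb

theorem abs_meanGrad_sub_le : |meanGrad θ μ a b - meanGrad θ μ a' b'| ≤ 2 * (μ⁻¹ * δ) := by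
  have hδ : 0 ≤ δ := (norm_nonneg _).trans ha
  have hleft : |meanGrad θ μ a b - meanGrad θ μ a' b| ≤ μ⁻¹ * δ := by
    calc _ ≤ θ / μ * (‖a - a'‖ * ‖b‖) := abs_meanGrad_sub_left a a' b hθ hμ
      _ ≤ 1 / μ * (δ * 1) := by gcongr; exact hθ.2
      _ = _ := by ring
  have hright : |meanGrad θ μ a' b - meanGrad θ μ a' b'| ≤ μ⁻¹ * δ := by
    rw [← meanGrad_sub_right μ a' b b' hθ]
    calc _ ≤ √θ * ‖b - b'‖ := abs_meanGrad_le μ a' (b - b') hθ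
      _ ≤ 1 * δ := by gcongr; exact Real.sqrt_le_one.2 hθ.2
      _ ≤ _ := by gcongr; exact (one_le_inv₀ hμ).2 hμ1
  linarith [abs_sub_le (meanGrad θ μ a b) (meanGrad θ μ a' b) (meanGrad θ μ a' b')]

theorem abs_meanHess_sub_le (hb' : ‖b'‖ ≤ 2) :
    |meanHess θ μ a b - meanHess θ μ a' b'| ≤ 7 * (μ⁻¹ * δ) := by
  have hδ : 0 ≤ δ := (norm_nonneg _).trans ha
  have hleft : |meanHess θ μ a b - meanHess θ μ a' b| ≤ 4 * (μ⁻¹ * δ) := by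
    calc _ ≤ 4 * θ / μ * (‖a - a'‖ * ‖b‖ ^ 2) := abs_meanHess_sub_left a a' b hθ hμ
      _ ≤ 4 * 1 / μ * (δ * 1 ^ 2) := by gcongr; exact hθ.2
      _ = _ := by ring
  have hright : |meanHess θ μ a' b - meanHess θ μ a' b'| ≤ 3 * (μ⁻¹ * δ) := by
    have hsum : ‖b + b'‖ ≤ 3 := (norm_add_le _ _).trans (by linarith)
    calc _ ≤ θ * (‖b - b'‖ * ‖b + b'‖) := abs_meanHess_sub_right μ a' b b' hθ
      _ ≤ 1 * (δ * 3) := by gcongr; exact hθ.2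
      _ = 3 * (1 * δ) := by ring
      _ ≤ _ := by gcongr; exact (one_le_inv₀ hμ).2 hμ1
  linarith [abs_sub_le (meanHess θ μ a b) (meanHess θ μ a' b) (meanHess θ μ a' b')]

end MeanPerturbation

section UniformConcentration

variable {n p : ℕ} {θ μ t : ℝ} {X : Fin n → Fin p → ℝ}

/-- Uniform concentration of the empirical derivatives at all points of norm at most `3/2`, which
leaves room around the sphere for the error of the preconditioner. -/
def Concentration (θ μ t : ℝ) (X : Fin n → Fin p → ℝ) : Prop :=
  ∀ a b : Vec n, ‖a‖ ≤ 3 / 2 → DerivativesNear θ μ (2 * t * ‖b‖) (2 * t * ‖b‖ ^ 2) X a b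

theorem concentration_of_norm_le_one
    (h : ∀ a b : Vec n, ‖a‖ ≤ 3 / 2 → ‖b‖ ≤ 1 → DerivativesNear θ μ (2 * t) (2 * t) X a b) :
    Concentration θ μ t X := by
  intro a b ha
  have hunit : ‖NormedSpace.normalize b‖ ≤ 1 := by
    rcases eq_or_ne b 0 with rfl | hb
    · simp
    · exact (NormedSpace.norm_normalize_eq_one_iff.2 hb).le
  have hscale := (h a _ ha hunit).smul_right ‖b‖
  rwa [NormedSpace.norm_smul_normalize, abs_norm, mul_comm, mul_comm (‖b‖ ^ 2)] at hscale

theorem GridConcentration.concentration {N : ℕ} (hX : GridConcentration θ μ t N X) (hn : 0 < n)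
    (hp : 0 < p) (hnN : n ≤ N) (hθ : θ ∈ Set.Icc (0 : ℝ) 1) (hμ : 0 < μ) (hμ1 : μ ≤ 1)
    (ht : t ≤ 1) (hN : 12 * (μ⁻¹ * (n / N * (2 * (n * p)) ^ 3)) ≤ t) : Concentration θ μ t X := by
  have hN0 : 0 < N := hn.trans_le hnN
  have hM : (1 : ℝ) ≤ 2 * (n * p) := by
    have : (1 : ℝ) ≤ n * p := by exact_mod_cast Nat.mul_pos hn hp
    linarith
  set M : ℝ := 2 * (n * p)
  set δ : ℝ := n / N
  have hδ1 : δ ≤ 1 := div_le_one_of_le₀ (by exact_mod_cast hnN) (Nat.cast_nonneg N)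
  have hK : 0 ≤ μ⁻¹ * (δ * M ^ 3) := by positivity
  have hδM : μ⁻¹ * δ ≤ μ⁻¹ * (δ * M ^ 3) := by
    gcongr
    exact le_mul_of_one_le_right (by positivity) (one_le_pow₀ hM)
  refine concentration_of_norm_le_one fun a b ha hb => ?_
  set z : Fin n → ℤ := fun i => ⌊a i * N⌋
  set w : Fin n → ℤ := fun i => ⌊b i * N⌋
  have haz : ‖a - gridPt N z‖ ≤ δ := norm_sub_gridPt_floor_le hN0 a
  have hbw : ‖b - gridPt N w‖ ≤ δ := norm_sub_gridPt_floor_le hN0 b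
  have hw : ‖gridPt N w‖ ≤ 2 := by
    linarith [norm_sub_norm_le (gridPt N w) b, norm_sub_rev b (gridPt N w)]
  have hgrid := hX z (floor_mem_gridBox N (by linarith)) w (floor_mem_gridBox N (by linarith)) hw
  have hcol := hX.norm_colVec_le hN0 hθ ht
  have hgrad := abs_le.1 (abs_colAvg_sub_colAvg_le hp fun k =>
    abs_gradTerm_sub_le hμ hμ1 hM hb haz hbw (hcol k))
  have hhess := abs_le.1 (abs_colAvg_sub_colAvg_le hp fun k =>
    abs_hessTerm_sub_le hμ hμ1 hM hb haz hbw (hcol k) hw)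
  have hmeanGrad := abs_le.1 (abs_meanGrad_sub_le hθ hμ hμ1 hb haz hbw)
  have hmeanHess := abs_le.1 (abs_meanHess_sub_le hθ hμ hμ1 hb haz hbw hw)
  have hgridGrad := abs_le.1 hgrid.1
  have hgridHess := abs_le.1 hgrid.2
  constructor <;> simp only [empGrad, empHess] at * <;> rw [abs_le] <;> constructor <;> linarith

end UniformConcentration

/-! ### Whitening -/

section QuadraticForm

variable {E : Type*} [NormedAddCommGroup E] [InnerProductSpace ℝ E]

theorem norm_apply_le_of_forall_hasEigenvector [FiniteDimensional ℝ E] {T : E →ₗ[ℝ] E}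
    (hT : T.IsSymmetric) {L : ℝ}
    (hL : ∀ (c : ℝ) (v : E), Module.End.HasEigenvector T c v → |c| ≤ L) (v : E) :
    ‖T v‖ ≤ L * ‖v‖ := by
  have heig (i) : |hT.eigenvalues rfl i| ≤ L := hL _ _ (hT.hasEigenvector_eigenvectorBasis rfl i)
  rcases eq_or_ne v 0 with rfl | hv
  · simp
  have : Nontrivial E := ⟨v, 0, hv⟩
  have hL0 : 0 ≤ L := (abs_nonneg _).trans (heig ⟨0, Module.finrank_pos⟩)
  refine (pow_le_pow_iff_left₀ (norm_nonneg _) (by positivity) two_ne_zero).1 ?_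
  rw [← (hT.eigenvectorBasis rfl).repr.norm_map (T v), ← (hT.eigenvectorBasis rfl).repr.norm_map v,
    mul_pow, EuclideanSpace.real_norm_sq_eq, EuclideanSpace.real_norm_sq_eq, Finset.mul_sum]
  refine Finset.sum_le_sum fun i _ => ?_
  rw [hT.eigenvectorBasis_apply_self_apply rfl v i, mul_pow]
  exact mul_le_mul_of_nonneg_right (sq_le_sq.2 ((heig i).trans (le_abs_self L))) (sq_nonneg _)

variable {P D : E →ₗ[ℝ] E} {l u ε : ℝ}

/-- For an eigenpair `(P - D) w = c w` one has `‖P w‖² - ‖D w‖² = c (⟪w, P w⟫ + ⟪w, D w⟫)`, and the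
factor of `c` is at least `l ‖w‖²`. -/
theorem abs_mul_le_of_hasEigenvector_sub (hP : ∀ v, 0 ≤ ⟪v, P v⟫)
    (hDl : ∀ v, l * ‖v‖ ^ 2 ≤ ⟪v, D v⟫) (hDu : ∀ v, ‖D v‖ ≤ u * ‖v‖) (hε : 0 ≤ ε)
    (hPD : ∀ v, |‖P v‖ ^ 2 - ‖D v‖ ^ 2| ≤ ε * ‖D v‖ ^ 2) {c : ℝ} {w : E}
    (hw : Module.End.HasEigenvector (P - D) c w) : |c| * l ≤ ε * u ^ 2 := by
  have hdiff : ‖P w‖ ^ 2 - ‖D w‖ ^ 2 = c * (⟪w, P w⟫ + ⟪w, D w⟫) := by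
    have happ : P w - D w = c • w := hw.apply_eq_smul
    rw [← inner_add_right, ← real_inner_smul_left, ← happ, inner_add_right, inner_sub_left,
      inner_sub_left, real_inner_self_eq_norm_sq, real_inner_self_eq_norm_sq,
      real_inner_comm (P w) (D w)]
    ring
  have hsum : l * ‖w‖ ^ 2 ≤ |⟪w, P w⟫ + ⟪w, D w⟫| :=
    (hDl w).trans <| (le_add_of_nonneg_left (hP w)).trans (le_abs_self _)
  refine le_of_mul_le_mul_right ?_ (pow_pos (norm_pos_iff.2 hw.2) 2)
  calc |c| * l * ‖w‖ ^ 2 = |c| * (l * ‖w‖ ^ 2) := by ring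
    _ ≤ |c| * |⟪w, P w⟫ + ⟪w, D w⟫| := by gcongr
    _ = |‖P w‖ ^ 2 - ‖D w‖ ^ 2| := by rw [hdiff, abs_mul]
    _ ≤ ε * ‖D w‖ ^ 2 := hPD w
    _ ≤ ε * (u * ‖w‖) ^ 2 := by gcongr; exact hDu w
    _ = _ := by ring

theorem mul_norm_le_norm_apply_of_le_inner (hDl : ∀ v, l * ‖v‖ ^ 2 ≤ ⟪v, D v⟫) (v : E) :
    l * ‖v‖ ≤ ‖D v‖ := by
  rcases eq_or_ne v 0 with rfl | hv
  · simp
  refine le_of_mul_le_mul_right ?_ (norm_pos_iff.2 hv)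
  linarith [(hDl v).trans (real_inner_le_norm v (D v))]

theorem norm_le_two_mul_norm_of_abs_norm_sq_sub_le (hε : ε ≤ 1 / 2)
    (hPD : ∀ v, |‖P v‖ ^ 2 - ‖D v‖ ^ 2| ≤ ε * ‖D v‖ ^ 2) (v : E) : ‖D v‖ ≤ 2 * ‖P v‖ := by
  refine (pow_le_pow_iff_left₀ (norm_nonneg _) (by positivity) two_ne_zero).1 ?_
  nlinarith [(abs_le.1 (hPD v)).1, sq_nonneg ‖D v‖]

theorem norm_sub_le_of_abs_norm_sq_sub_le [FiniteDimensional ℝ E] (hPs : P.IsSymmetric)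
    (hDs : D.IsSymmetric) (hP : ∀ v, 0 ≤ ⟪v, P v⟫) (hl : 0 < l)
    (hDl : ∀ v, l * ‖v‖ ^ 2 ≤ ⟪v, D v⟫) (hDu : ∀ v, ‖D v‖ ≤ u * ‖v‖)
    (hε : ε ∈ Set.Icc (0 : ℝ) (1 / 2)) (hPD : ∀ v, |‖P v‖ ^ 2 - ‖D v‖ ^ 2| ≤ ε * ‖D v‖ ^ 2)
    (v : E) : ‖D v - P v‖ ≤ 2 * (u / l) ^ 2 * ε * ‖P v‖ := by
  have hε0 := hε.1
  have hnorm : ‖(P - D) v‖ ≤ ε * u ^ 2 / l * ‖v‖ :=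
    norm_apply_le_of_forall_hasEigenvector (hPs.sub hDs) (fun c w hw => (le_div_iff₀ hl).2 <|
      abs_mul_le_of_hasEigenvector_sub hP hDl hDu hε0 hPD hw) v
  have hv : ‖v‖ ≤ 2 * ‖P v‖ / l := by
    rw [le_div_iff₀' hl]
    exact (mul_norm_le_norm_apply_of_le_inner hDl v).trans
      (norm_le_two_mul_norm_of_abs_norm_sq_sub_le hε.2 hPD v)
  rw [norm_sub_rev]
  calc ‖P v - D v‖ ≤ ε * u ^ 2 / l * (2 * ‖P v‖ / l) := hnorm.trans (by gcongr)
    _ = _ := by ring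

end QuadraticForm

section Matrix

variable {k l m n p : ℕ}

theorem inner_toEuclideanLin_left (M : Matrix (Fin m) (Fin k) ℝ) (x : Vec k) (y : Vec m) :
    ⟪toEuclideanLin M x, y⟫ = ⟪x, toEuclideanLin Mᵀ y⟫ := by
  rw [← conjTranspose_eq_transpose_of_trivial, toEuclideanLin_conjTranspose_eq_adjoint,
    LinearMap.adjoint_inner_right]

theorem isSymmetric_toEuclideanLin {M : Matrix (Fin n) (Fin n) ℝ} (hM : Mᵀ = M) :
    (toEuclideanLin M).IsSymmetric :=
  fun x y => by rw [inner_toEuclideanLin_left, hM]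

theorem toEuclideanLin_mul_apply (A : Matrix (Fin m) (Fin k) ℝ) (B : Matrix (Fin k) (Fin l) ℝ)
    (x : Vec l) : toEuclideanLin (A * B) x = toEuclideanLin A (toEuclideanLin B x) := by
  rw [toEuclideanLin, toLpLin_mul_same]; rfl

theorem norm_toEuclideanLin_sq (M : Matrix (Fin m) (Fin k) ℝ) (x : Vec k) :
    ‖toEuclideanLin M x‖ ^ 2 = ⟪x, toEuclideanLin (Mᵀ * M) x⟫ := by
  rw [← real_inner_self_eq_norm_sq, inner_toEuclideanLin_left, toEuclideanLin_mul_apply]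

theorem norm_toEuclideanLin_of_transpose_mul_self {V : Matrix (Fin m) (Fin n) ℝ} (hV : Vᵀ * V = 1)
    (x : Vec n) : ‖toEuclideanLin V x‖ = ‖x‖ := by
  rw [← sq_eq_sq₀ (norm_nonneg _) (norm_nonneg _), norm_toEuclideanLin_sq, hV,
    ← real_inner_self_eq_norm_sq]
  simp

theorem norm_toEuclideanLin_transpose_sq (X : Fin n → Fin p → ℝ) (y : Vec n) :
    ‖toEuclideanLin (Matrix.of X)ᵀ y‖ ^ 2 = ∑ k, ⟪y, colVec X k⟫ ^ 2 := by
  rw [EuclideanSpace.real_norm_sq_eq]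
  refine Finset.sum_congr rfl fun k _ => ?_
  simp [colVec, PiLp.inner_apply, toLpLin_apply, mulVec, dotProduct]

theorem inner_toEuclideanLin_nonneg_of_posSemidef {S : Matrix (Fin n) (Fin n) ℝ}
    (hS : S.PosSemidef) (x : Vec n) : 0 ≤ ⟪x, toEuclideanLin S x⟫ := by
  have h := hS.dotProduct_mulVec_nonneg x.ofLp
  rwa [star_trivial, dotProduct_comm] at h

section Diagonal

variable {s : Fin n → ℝ}

theorem toEuclideanLin_diagonal_apply (s : Fin n → ℝ) (x : Vec n) (i : Fin n) :
    toEuclideanLin (Matrix.diagonal s) x i = s i * x i := by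
  simp [toLpLin_apply, mulVec_diagonal]

theorem iInf_mul_norm_sq_le_inner_diagonal (s : Fin n → ℝ) (x : Vec n) :
    (⨅ i, s i) * ‖x‖ ^ 2 ≤ ⟪x, toEuclideanLin (Matrix.diagonal s) x⟫ := by
  rw [EuclideanSpace.real_norm_sq_eq, Finset.mul_sum, PiLp.inner_apply]
  refine Finset.sum_le_sum fun i _ => ?_
  rw [toEuclideanLin_diagonal_apply, RCLike.inner_apply, conj_trivial, mul_assoc, ← pow_two]
  gcongr
  exact ciInf_le (Set.finite_range s).bddBelow i

theorem norm_toEuclideanLin_diagonal_le (hs : ∀ i, 0 ≤ s i) (x : Vec n) :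
    ‖toEuclideanLin (Matrix.diagonal s) x‖ ≤ (⨆ i, s i) * ‖x‖ := by
  refine (pow_le_pow_iff_left₀ (norm_nonneg _)
    (mul_nonneg (Real.iSup_nonneg hs) (norm_nonneg x)) two_ne_zero).1 ?_
  rw [mul_pow, EuclideanSpace.real_norm_sq_eq, EuclideanSpace.real_norm_sq_eq, Finset.mul_sum]
  refine Finset.sum_le_sum fun i _ => ?_
  rw [toEuclideanLin_diagonal_apply, mul_pow]
  have := hs i
  gcongr
  exact le_ciSup (Set.finite_range s).bddAbove i

theorem iInf_pos_of_forall_pos [Nonempty (Fin n)] (hs : ∀ i, 0 < s i) : 0 < ⨅ i, s i := by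
  obtain ⟨i, hi⟩ := exists_eq_ciInf_of_finite (f := s)
  exact hi ▸ hs i

end Diagonal

end Matrix

section Whitening

variable {n p : ℕ} {θ μ t : ℝ} {A₀ U V S : Matrix (Fin n) (Fin n) ℝ} {s : Fin n → ℝ}

/-- The transpose of the linear map `√(pθ) V Uᵀ S⁻¹ A₀` which takes the columns of the coefficient
matrix `X₀` to those of the preconditioned data `V Uᵀ Ȳ`; here `S = (Y Yᵀ)^{1/2}`. -/
def whitenMap (θ : ℝ) (p : ℕ) (A₀ U V S : Matrix (Fin n) (Fin n) ℝ) : Vec n →ₗ[ℝ] Vec n :=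
  toEuclideanLin (√(p * θ) • (V * Uᵀ * S⁻¹ * A₀))ᵀ

/-- The square root `S` of `Y Yᵀ`, normalized and expressed in the left singular basis of `A₀`. It
is close to the diagonal matrix of singular values. -/
def singularRoot (θ : ℝ) (p : ℕ) (U S : Matrix (Fin n) (Fin n) ℝ) : Matrix (Fin n) (Fin n) ℝ :=
  (√(p * θ))⁻¹ • (Uᵀ * S * U)

theorem singularRoot_transpose (hS : Sᵀ = S) :
    (singularRoot θ p U S)ᵀ = singularRoot θ p U S := by
  simp only [singularRoot, transpose_smul, transpose_mul, transpose_transpose, hS,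
    Matrix.mul_assoc]

theorem inner_singularRoot_nonneg (hS : S.PosSemidef) (x : Vec n) :
    0 ≤ ⟪x, toEuclideanLin (singularRoot θ p U S) x⟫ := by
  rw [singularRoot, map_smul, LinearMap.smul_apply, real_inner_smul_right, Matrix.mul_assoc,
    toEuclideanLin_mul_apply, ← inner_toEuclideanLin_left, toEuclideanLin_mul_apply]
  exact mul_nonneg (by positivity) (inner_toEuclideanLin_nonneg_of_posSemidef hS _)

theorem singularRoot_mul_self (hθ : 0 ≤ θ) (hU : U * Uᵀ = 1)
    (hA : A₀ = U * Matrix.diagonal s * Vᵀ) {M : Matrix (Fin n) (Fin p) ℝ}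
    (hSS : S * S = A₀ * M * (A₀ * M)ᵀ) :
    singularRoot θ p U S * singularRoot θ p U S
      = (p * θ)⁻¹ • ((Mᵀ * (V * Matrix.diagonal s))ᵀ * (Mᵀ * (V * Matrix.diagonal s))) := by
  have hU' : Uᵀ * U = 1 := mul_eq_one_comm.1 hU
  have hconj : Uᵀ * S * U * (Uᵀ * S * U) = Uᵀ * (S * S) * U := by
    calc Uᵀ * S * U * (Uᵀ * S * U) = Uᵀ * S * (U * Uᵀ) * S * U := by simp only [Matrix.mul_assoc]
      _ = _ := by simp only [hU, Matrix.mul_one, Matrix.mul_assoc]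
  rw [singularRoot, Matrix.smul_mul, Matrix.mul_smul, smul_smul, ← mul_inv,
    Real.mul_self_sqrt (by positivity), hconj, hSS, hA]
  simp only [transpose_mul, transpose_transpose, diagonal_transpose]
  congr 1
  calc Uᵀ * (U * diagonal s * Vᵀ * M * (Mᵀ * (V * (diagonal s * Uᵀ)))) * U
      = (Uᵀ * U) * diagonal s * Vᵀ * M * Mᵀ * V * diagonal s * (Uᵀ * U) := by
        simp only [Matrix.mul_assoc]
    _ = _ := by simp only [hU', Matrix.one_mul, Matrix.mul_one, Matrix.mul_assoc]

theorem norm_singularRoot_sq (hθ : 0 ≤ θ) (μ : ℝ) (hU : U * Uᵀ = 1)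
    (hA : A₀ = U * Matrix.diagonal s * Vᵀ) (hS : Sᵀ = S) {X : Fin n → Fin p → ℝ}
    (hSS : S * S = A₀ * Matrix.of X * (A₀ * Matrix.of X)ᵀ) (x : Vec n) :
    ‖toEuclideanLin (singularRoot θ p U S) x‖ ^ 2
      = θ⁻¹ * empHess μ X 0 (toEuclideanLin (V * Matrix.diagonal s) x) := by
  rw [norm_toEuclideanLin_sq, singularRoot_transpose hS, singularRoot_mul_self hθ hU hA hSS,
    map_smul, LinearMap.smul_apply, real_inner_smul_right, ← norm_toEuclideanLin_sq,
    toEuclideanLin_mul_apply (Matrix.of X)ᵀ, norm_toEuclideanLin_transpose_sq]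
  simp only [empHess, colAvg, hessTerm_zero_left, mul_inv]
  ring

theorem singularRoot_mul_inv (hpθ : 0 < p * θ) (hU : U * Uᵀ = 1) (hS : IsUnit S.det) :
    singularRoot θ p U S * (√(p * θ) • (Uᵀ * S⁻¹ * U)) = 1 := by
  rw [singularRoot, Matrix.smul_mul, Matrix.mul_smul, smul_smul,
    inv_mul_cancel₀ (Real.sqrt_pos.2 hpθ).ne', one_smul]
  calc Uᵀ * S * U * (Uᵀ * S⁻¹ * U) = Uᵀ * S * (U * Uᵀ) * S⁻¹ * U := by
        simp only [Matrix.mul_assoc]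
    _ = Uᵀ * (S * S⁻¹) * U := by simp only [hU, Matrix.mul_one, Matrix.mul_assoc]
    _ = 1 := by rw [mul_nonsing_inv S hS, Matrix.mul_one, mul_eq_one_comm.1 hU]

theorem whitenMap_apply (hA : A₀ = U * Matrix.diagonal s * Vᵀ) (hS : Sᵀ = S) (v : Vec n) :
    whitenMap θ p A₀ U V S v
      = toEuclideanLin V (toEuclideanLin (Matrix.diagonal s)
          (toEuclideanLin (√(p * θ) • (Uᵀ * S⁻¹ * U)) (toEuclideanLin Vᵀ v))) := by
  simp only [whitenMap, ← toEuclideanLin_mul_apply]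
  rw [hA, transpose_smul, Matrix.smul_mul, Matrix.mul_smul, Matrix.mul_smul]
  simp only [transpose_mul, transpose_transpose, diagonal_transpose, transpose_nonsing_inv, hS,
    Matrix.mul_assoc]

theorem abs_norm_singularRoot_sq_sub_le (hθ : θ ∈ Set.Ioc (0 : ℝ) 1) (hU : U * Uᵀ = 1)
    (hV : Vᵀ * V = 1) (hA : A₀ = U * Matrix.diagonal s * Vᵀ) (hS : Sᵀ = S) {X : Fin n → Fin p → ℝ}
    (hX : Concentration θ μ t X) (hSS : S * S = A₀ * Matrix.of X * (A₀ * Matrix.of X)ᵀ)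
    (x : Vec n) :
    |‖toEuclideanLin (singularRoot θ p U S) x‖ ^ 2 - ‖toEuclideanLin (Matrix.diagonal s) x‖ ^ 2|
      ≤ 2 * t / θ * ‖toEuclideanLin (Matrix.diagonal s) x‖ ^ 2 := by
  have hθ0 := hθ.1
  have hnear := (hX 0 (toEuclideanLin (V * Matrix.diagonal s) x) (by norm_num)).2
  rw [meanHess_zero_left ⟨hθ.1.le, hθ.2⟩, toEuclideanLin_mul_apply,
    norm_toEuclideanLin_of_transpose_mul_self hV] at hnear
  rw [norm_singularRoot_sq hθ.1.le μ hU hA hS hSS, toEuclideanLin_mul_apply]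
  set d := ‖toEuclideanLin (Matrix.diagonal s) x‖ ^ 2
  set h := empHess μ X 0 (toEuclideanLin V (toEuclideanLin (Matrix.diagonal s) x))
  calc |θ⁻¹ * h - d| = θ⁻¹ * |h - θ * d| := by
        rw [← abs_of_pos (inv_pos.2 hθ0), ← abs_mul, abs_of_pos (inv_pos.2 hθ0)]
        congr 1
        field_simp
    _ ≤ θ⁻¹ * (2 * t * d) := by gcongr
    _ = _ := by ring

theorem norm_whitenMap_sub_le (hp : 0 < p) (hθ : θ ∈ Set.Ioc (0 : ℝ) 1) (hU : U * Uᵀ = 1)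
    (hV : V * Vᵀ = 1) (hs : ∀ i, 0 < s i) (hA : A₀ = U * Matrix.diagonal s * Vᵀ)
    {X : Fin n → Fin p → ℝ} (ht : 0 ≤ t) (htθ : 4 * t ≤ θ) (hX : Concentration θ μ t X)
    (hS : S.PosDef) (hSS : S * S = A₀ * Matrix.of X * (A₀ * Matrix.of X)ᵀ) (v : Vec n) :
    ‖whitenMap θ p A₀ U V S v - v‖ ≤ 4 * kappa s ^ 2 * (t / θ) * ‖v‖ := by
  have hθ0 := hθ.1
  have hV' : Vᵀ * V = 1 := mul_eq_one_comm.1 hV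
  have hSt : Sᵀ = S := by rw [← conjTranspose_eq_transpose_of_trivial]; exact hS.1
  rcases isEmpty_or_nonempty (Fin n) with hn | hn
  · simp [Subsingleton.elim v 0]
  set P := singularRoot θ p U S
  set x := toEuclideanLin (√(p * θ) • (Uᵀ * S⁻¹ * U)) (toEuclideanLin Vᵀ v) with hx
  have hPx : toEuclideanLin P x = toEuclideanLin Vᵀ v := by
    rw [hx, ← toEuclideanLin_mul_apply,
      singularRoot_mul_inv (mul_pos (Nat.cast_pos.2 hp) hθ0) hU hS.det_pos.ne'.isUnit]
    simp
  have hv : v = toEuclideanLin V (toEuclideanLin P x) := by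
    rw [hPx, ← toEuclideanLin_mul_apply, hV]; simp
  have hsub : ‖toEuclideanLin (Matrix.diagonal s) x - toEuclideanLin P x‖
      ≤ 2 * kappa s ^ 2 * (2 * t / θ) * ‖toEuclideanLin P x‖ :=
    norm_sub_le_of_abs_norm_sq_sub_le
      (isSymmetric_toEuclideanLin (singularRoot_transpose hSt))
      (isSymmetric_toEuclideanLin (diagonal_transpose s))
      (inner_singularRoot_nonneg hS.posSemidef) (iInf_pos_of_forall_pos hs)
      (iInf_mul_norm_sq_le_inner_diagonal s) (norm_toEuclideanLin_diagonal_le fun i => (hs i).le)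
      ⟨by positivity, by rw [div_le_iff₀ hθ0]; linarith⟩
      (abs_norm_singularRoot_sq_sub_le hθ hU hV' hA hSt hX hSS) x
  calc ‖whitenMap θ p A₀ U V S v - v‖
      = ‖toEuclideanLin (Matrix.diagonal s) x - toEuclideanLin P x‖ := by
        rw [whitenMap_apply hA hSt, ← hx]
        conv_lhs => rw [hv, ← map_sub]
        exact norm_toEuclideanLin_of_transpose_mul_self hV' _
    _ ≤ 2 * kappa s ^ 2 * (2 * t / θ) * ‖v‖ := by
        rwa [hv, norm_toEuclideanLin_of_transpose_mul_self hV']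
    _ = _ := by ring

end Whitening

/-! ### Local minimizers along circular arcs -/

section SecondDerivativeTest

theorem nonneg_of_isLocalMin_of_hasDerivAt {g g' : ℝ → ℝ} {d x : ℝ} (hm : IsLocalMin g x)
    (hg : ∀ s, HasDerivAt g (g' s) s) (hg' : HasDerivAt g' d x) : 0 ≤ d := by
  have hderiv : deriv g = g' := funext fun s => (hg s).deriv
  by_contra! hd
  have hmax : IsLocalMax g x := isLocalMax_of_deriv_deriv_neg (by rwa [hderiv, hg'.deriv])
    hm.deriv_eq_zero (hg x).continuousAt
  have hconst : g =ᶠ[nhds x] fun _ => g x := by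
    filter_upwards [hm, hmax] with s hmin hmax using le_antisymm hmax hmin
  have hzero : g' =ᶠ[nhds x] fun _ => 0 := by simpa [hderiv] using hconst.deriv
  exact hd.ne (hg'.unique ((hasDerivAt_const x (0 : ℝ)).congr_of_eventuallyEq hzero))

end SecondDerivativeTest

section Arc

variable {E : Type*} [NormedAddCommGroup E] [InnerProductSpace ℝ E]

/-- The circular arc through `q` at time `0` with centre `q - u` and initial velocity `v`. -/
def arc (q u v : E) (s : ℝ) : E := q + ((Real.cos s - 1) • u + Real.sin s • v)

/-- The velocity of `arc q u v` at time `s`. -/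
def arcVel (u v : E) (s : ℝ) : E := Real.cos s • v - Real.sin s • u

/-- The relations between the radius `u` and the velocity `v` under which `arc q u v` stays on the
sphere through `q` centred at the origin. -/
structure IsSphereArc (q u v : E) : Prop where
  inner_radius : ⟪q, u⟫ = ‖u‖ ^ 2
  inner_vel : ⟪q, v⟫ = 0
  inner_radius_vel : ⟪u, v⟫ = 0
  norm_vel_sq : ‖v‖ ^ 2 = ‖u‖ ^ 2

variable {q u v : E}

theorem arc_zero (q u v : E) : arc q u v 0 = q := by simp [arc]

theorem arcVel_zero (u v : E) : arcVel u v 0 = v := by simp [arcVel]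

theorem hasDerivAt_arc (q u v : E) (s : ℝ) : HasDerivAt (arc q u v) (arcVel u v s) s := by
  refine (((((Real.hasDerivAt_cos s).sub_const 1).smul_const u).add
    ((Real.hasDerivAt_sin s).smul_const v)).const_add q).congr_deriv ?_
  rw [arcVel]
  module

theorem hasDerivAt_arcVel_zero (u v : E) : HasDerivAt (arcVel u v) (-u) 0 := by
  refine (((Real.hasDerivAt_cos 0).smul_const v).sub
    ((Real.hasDerivAt_sin 0).smul_const u)).congr_deriv ?_
  simp

theorem IsSphereArc.norm_arc (h : IsSphereArc q u v) (s : ℝ) : ‖arc q u v s‖ = ‖q‖ := by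
  rw [← sq_eq_sq₀ (norm_nonneg _) (norm_nonneg _), arc, norm_add_sq_real, norm_add_sq_real,
    inner_add_right, real_inner_smul_right, real_inner_smul_right, real_inner_smul_left,
    real_inner_smul_right, h.inner_radius, h.inner_vel, h.inner_radius_vel, norm_smul, norm_smul,
    mul_pow, mul_pow, h.norm_vel_sq, Real.norm_eq_abs, Real.norm_eq_abs, sq_abs, sq_abs]
  linear_combination ‖u‖ ^ 2 * Real.sin_sq_add_cos_sq s

theorem IsSphereArc.neg (h : IsSphereArc q u v) : IsSphereArc q u (-v) where
  inner_radius := h.inner_radius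
  inner_vel := by rw [inner_neg_right, h.inner_vel, neg_zero]
  inner_radius_vel := by rw [inner_neg_right, h.inner_radius_vel, neg_zero]
  norm_vel_sq := by rw [norm_neg, h.norm_vel_sq]

theorem IsSphereArc.isLocalMin_comp_arc (h : IsSphereArc q u v) (hq : ‖q‖ = 1) {f : E → ℝ}
    (hf : IsLocalMinOn f (Metric.sphere 0 1) q) : IsLocalMin (fun s => f (arc q u v s)) 0 := by
  have htends : Filter.Tendsto (arc q u v) (nhds 0) (nhdsWithin q (Metric.sphere 0 1)) := by
    refine tendsto_nhdsWithin_iff.2 ⟨?_, .of_forall fun s => by simp [h.norm_arc, hq]⟩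
    simpa only [arc_zero] using (hasDerivAt_arc q u v 0).continuousAt.tendsto
  simpa only [IsLocalMin, IsMinFilter, arc_zero] using htends.eventually hf

theorem isSphereArc_rotation {n : ℕ} (q : Vec n) {i j : Fin n} (hij : i ≠ j) :
    IsSphereArc q (rotMid q i j) (rotDir q i j) where
  inner_radius := by rw [inner_rotMid_right, norm_rotMid_sq q hij]; ring
  inner_vel := by rw [inner_rotDir_right]; ring
  inner_radius_vel := by
    rw [inner_rotDir_right, rotMid_apply_left q hij, rotMid_apply_right q hij]
    ring
  norm_vel_sq := by rw [norm_rotMid_sq q hij, norm_rotDir_sq q hij]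

end Arc

section Derivatives

variable {n p : ℕ} {μ : ℝ} {Y : Fin n → Fin p → ℝ} {q u v : Vec n}

theorem ffun_eq_colAvg (μ : ℝ) (Y : Fin n → Fin p → ℝ) (q : Vec n) :
    ffun n p μ Y q = colAvg (fun x => hmu μ ⟪q, x⟫) Y := by
  simp only [ffun, colAvg, colVec, PiLp.inner_apply, RCLike.inner_apply, conj_trivial, mul_comm]

theorem continuous_ffun (hμ : μ ≠ 0) (Y : Fin n → Fin p → ℝ) : Continuous (ffun n p μ Y) := by
  have hcont : Continuous (hmu μ) :=
    continuous_iff_continuousAt.2 fun z => (hasDerivAt_hmu hμ z).continuousAt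
  unfold ffun
  fun_prop

theorem hasDerivAt_colAvg {F : ℝ → Vec n → ℝ} {F' : Vec n → ℝ} {s : ℝ}
    (h : ∀ x, HasDerivAt (fun r => F r x) (F' x) s) :
    HasDerivAt (fun r => colAvg (F r) Y) (colAvg F' Y) s :=
  (HasDerivAt.fun_sum fun k _ => h (colVec Y k)).const_mul _

variable {γ δ : ℝ → Vec n} {δ' : Vec n} {s : ℝ}

theorem hasDerivAt_ffun_comp (hμ : μ ≠ 0) (hγ : HasDerivAt γ (δ s) s) :
    HasDerivAt (fun r => ffun n p μ Y (γ r)) (empGrad μ Y (γ s) (δ s)) s := by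
  simp only [ffun_eq_colAvg]
  refine hasDerivAt_colAvg fun x => ?_
  have hinner : HasDerivAt (fun r => ⟪γ r, x⟫) ⟪δ s, x⟫ s := by
    simpa using hγ.inner ℝ (hasDerivAt_const s x)
  exact (hasDerivAt_hmu hμ _).comp s hinner

theorem hasDerivAt_empGrad_comp (hγ : HasDerivAt γ (δ s) s) (hδ : HasDerivAt δ δ' s) :
    HasDerivAt (fun r => empGrad μ Y (γ r) (δ r))
      (empHess μ Y (γ s) (δ s) / μ + empGrad μ Y (γ s) δ') s := by
  have hinner {η : ℝ → Vec n} {η' : Vec n} (hη : HasDerivAt η η' s) (x : Vec n) :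
      HasDerivAt (fun r => ⟪η r, x⟫) ⟪η', x⟫ s := by
    simpa using hη.inner ℝ (hasDerivAt_const s x)
  have hsum : HasDerivAt (fun r => empGrad μ Y (γ r) (δ r))
      (colAvg (fun x => hessTerm μ (γ s) (δ s) x / μ + gradTerm μ (γ s) δ' x) Y) s := by
    refine hasDerivAt_colAvg fun x => ?_
    refine (((hasDerivAt_tanh _).comp s ((hinner hγ x).div_const μ)).mul
      (hinner hδ x)).congr_deriv ?_
    simp only [hessTerm, gradTerm, Function.comp]
    ring
  refine hsum.congr_deriv ?_
  simp only [empHess, empGrad, colAvg, Finset.sum_add_distrib, mul_add, ← Finset.sum_div,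
    mul_div_assoc]

theorem empGrad_sub_right (a b b' : Vec n) :
    empGrad μ Y a (b - b') = empGrad μ Y a b - empGrad μ Y a b' := by
  simp only [empGrad, colAvg, ← gradTerm_sub_right, Finset.sum_sub_distrib, mul_sub]

theorem empGrad_eq_zero_of_isLocalMinOn (hμ : μ ≠ 0) (hq : ‖q‖ = 1) (h : IsSphereArc q u v)
    (hmin : IsLocalMinOn (ffun n p μ Y) (Metric.sphere 0 1) q) : empGrad μ Y q v = 0 := by
  have := (h.isLocalMin_comp_arc hq hmin).hasDerivAt_eq_zero
    (hasDerivAt_ffun_comp hμ (hasDerivAt_arc q u v 0))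
  rwa [arc_zero, arcVel_zero] at this

theorem empGrad_le_empHess_div_of_isLocalMinOn (hμ : μ ≠ 0) (hq : ‖q‖ = 1)
    (h : IsSphereArc q u v) (hmin : IsLocalMinOn (ffun n p μ Y) (Metric.sphere 0 1) q) :
    empGrad μ Y q u ≤ empHess μ Y q v / μ := by
  have hcurv := nonneg_of_isLocalMin_of_hasDerivAt (h.isLocalMin_comp_arc hq hmin)
    (fun s => hasDerivAt_ffun_comp hμ (hasDerivAt_arc q u v s))
    (hasDerivAt_empGrad_comp (hasDerivAt_arc q u v 0) (hasDerivAt_arcVel_zero u v))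
  rw [arc_zero, arcVel_zero, ← neg_one_smul ℝ u, empGrad_smul_right] at hcurv
  linarith

theorem empGrad_eq_inner_mul_of_isLocalMinOn (hμ : μ ≠ 0) (hq : ‖q‖ = 1)
    (hmin : IsLocalMinOn (ffun n p μ Y) (Metric.sphere 0 1) q) (b : Vec n) :
    empGrad μ Y q b = ⟪q, b⟫ * empGrad μ Y q q := by
  set w := b - ⟪q, b⟫ • q with hw
  have hqw : ⟪q, w⟫ = 0 := by
    rw [hw, inner_sub_right, real_inner_smul_right, real_inner_self_eq_norm_sq, hq]
    ring
  have hzero : empGrad μ Y q w = 0 := by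
    rcases eq_or_ne w 0 with hw0 | hw0
    · rw [hw0, ← zero_smul ℝ (0 : Vec n), empGrad_smul_right, zero_mul]
    have hnorm : ‖w‖ ≠ 0 := norm_ne_zero_iff.2 hw0
    have hunit : empGrad μ Y q (‖w‖⁻¹ • w) = 0 :=
      empGrad_eq_zero_of_isLocalMinOn hμ hq (u := q)
        { inner_radius := real_inner_self_eq_norm_sq q
          inner_vel := by rw [real_inner_smul_right, hqw, mul_zero]
          inner_radius_vel := by rw [real_inner_smul_right, hqw, mul_zero]
          norm_vel_sq := by rw [norm_smul, norm_inv, norm_norm, inv_mul_cancel₀ hnorm, hq] } hmin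
    rw [empGrad_smul_right] at hunit
    exact (mul_eq_zero.1 hunit).resolve_left (inv_ne_zero hnorm)
  rw [hw, empGrad_sub_right, empGrad_smul_right] at hzero
  linarith

end Derivatives

/-! ### Local minimizers lie near the coordinate axes -/

section NearModel

variable {n p : ℕ} {θ μ ε t η : ℝ} {X Y : Fin n → Fin p → ℝ}

/-- On the unit ball, the derivatives of the empirical objective of `Y` are close to those of the
Bernoulli–Gaussian model. The scale `θ * μ` makes the error in the second derivative, which
`empHess` carries with a factor `μ`, a fraction `ε` of the typical curvature `θ`. -/
def NearModel (θ μ ε : ℝ) (Y : Fin n → Fin p → ℝ) : Prop :=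
  ∀ q b : Vec n, ‖q‖ ≤ 1 → DerivativesNear θ μ (ε * θ * μ * ‖b‖) (ε * θ * μ * ‖b‖ ^ 2) Y q b

theorem inner_colVec_mul (W : Matrix (Fin n) (Fin n) ℝ) (X : Fin n → Fin p → ℝ) (b : Vec n)
    (k : Fin p) : ⟪b, colVec (W * Matrix.of X) k⟫ = ⟪toEuclideanLin Wᵀ b, colVec X k⟫ := by
  have hcol : colVec (W * Matrix.of X) k = toEuclideanLin W (colVec X k) := by
    ext i
    simp [colVec, toLpLin_apply, mulVec, dotProduct, Matrix.mul_apply]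
  rw [hcol, inner_toEuclideanLin_left, transpose_transpose]

theorem empGrad_mul (W : Matrix (Fin n) (Fin n) ℝ) (X : Fin n → Fin p → ℝ) (a b : Vec n) :
    empGrad μ (W * Matrix.of X) a b
      = empGrad μ X (toEuclideanLin Wᵀ a) (toEuclideanLin Wᵀ b) := by
  simp only [empGrad, colAvg, gradTerm, inner_colVec_mul]

theorem empHess_mul (W : Matrix (Fin n) (Fin n) ℝ) (X : Fin n → Fin p → ℝ) (a b : Vec n) :
    empHess μ (W * Matrix.of X) a b
      = empHess μ X (toEuclideanLin Wᵀ a) (toEuclideanLin Wᵀ b) := by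
  simp only [empHess, colAvg, hessTerm, inner_colVec_mul]

theorem abs_meanGrad_sub_le_of_norm_sub_le (hθ : θ ∈ Set.Icc (0 : ℝ) 1) (hμ : 0 < μ)
    (hμθ : μ ≤ θ) (hη : 0 ≤ η) {T : Vec n → Vec n} (hT : ∀ v, ‖T v - v‖ ≤ η * ‖v‖) {q : Vec n}
    (hq : ‖q‖ ≤ 1) (b : Vec n) :
    |meanGrad θ μ (T q) (T b) - meanGrad θ μ q b| ≤ 2 * (θ / μ) * η * ‖b‖ := by
  have hθ0 := hθ.1
  have hright : |meanGrad θ μ (T q) (T b) - meanGrad θ μ (T q) b| ≤ θ / μ * η * ‖b‖ := by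
    rw [← meanGrad_sub_right μ _ _ _ hθ]
    calc _ ≤ √θ * ‖T b - b‖ := abs_meanGrad_le μ _ _ hθ
      _ ≤ 1 * (η * ‖b‖) := by gcongr; exacts [Real.sqrt_le_one.2 hθ.2, hT b]
      _ ≤ θ / μ * (η * ‖b‖) := by gcongr; exact (one_le_div₀ hμ).2 hμθ
      _ = _ := by ring
  have hleft : |meanGrad θ μ (T q) b - meanGrad θ μ q b| ≤ θ / μ * η * ‖b‖ := by
    calc _ ≤ θ / μ * (‖T q - q‖ * ‖b‖) := abs_meanGrad_sub_left _ _ b hθ hμ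
      _ ≤ θ / μ * (η * 1 * ‖b‖) := by gcongr; exact (hT q).trans (by gcongr)
      _ = _ := by ring
  linarith [abs_sub_le (meanGrad θ μ (T q) (T b)) (meanGrad θ μ (T q) b) (meanGrad θ μ q b)]

theorem abs_meanHess_sub_le_of_norm_sub_le (hθ : θ ∈ Set.Icc (0 : ℝ) 1) (hμ : 0 < μ)
    (hμ1 : μ ≤ 1) (hη : η ∈ Set.Icc (0 : ℝ) 1) {T : Vec n → Vec n}
    (hT : ∀ v, ‖T v - v‖ ≤ η * ‖v‖) {q : Vec n} (hq : ‖q‖ ≤ 1) (b : Vec n) :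
    |meanHess θ μ (T q) (T b) - meanHess θ μ q b| ≤ 7 * (θ / μ) * η * ‖b‖ ^ 2 := by
  have hθ0 := hθ.1
  have hη0 := hη.1
  have hright : |meanHess θ μ (T q) (T b) - meanHess θ μ (T q) b| ≤ 3 * (θ / μ) * η * ‖b‖ ^ 2 := by
    have hsum : ‖T b + b‖ ≤ 3 * ‖b‖ := by
      calc ‖T b + b‖ = ‖(T b - b) + (2 : ℝ) • b‖ := by congr 1; module
        _ ≤ ‖T b - b‖ + ‖(2 : ℝ) • b‖ := norm_add_le _ _
        _ ≤ 1 * ‖b‖ + 2 * ‖b‖ := by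
          rw [norm_smul, Real.norm_two]
          gcongr
          exact (hT b).trans (by gcongr; exact hη.2)
        _ = 3 * ‖b‖ := by ring
    calc _ ≤ θ * (‖T b - b‖ * ‖T b + b‖) := abs_meanHess_sub_right μ _ _ _ hθ
      _ ≤ θ / μ * ((η * ‖b‖) * (3 * ‖b‖)) := by gcongr; exacts [le_div_self hθ0 hμ hμ1, hT b]
      _ = _ := by ring
  have hleft : |meanHess θ μ (T q) b - meanHess θ μ q b| ≤ 4 * (θ / μ) * η * ‖b‖ ^ 2 := by
    calc _ ≤ 4 * θ / μ * (‖T q - q‖ * ‖b‖ ^ 2) := abs_meanHess_sub_left _ _ b hθ hμ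
      _ ≤ 4 * θ / μ * (η * 1 * ‖b‖ ^ 2) := by gcongr; exact (hT q).trans (by gcongr)
      _ = _ := by ring
  linarith [abs_sub_le (meanHess θ μ (T q) (T b)) (meanHess θ μ (T q) b) (meanHess θ μ q b)]

theorem Concentration.nearModel (hX : Concentration θ μ t X) (hθ : θ ∈ Set.Icc (0 : ℝ) 1)
    (hμ : 0 < μ) (hμθ : μ ≤ θ) (ht : 0 ≤ t) (hη : η ∈ Set.Icc (0 : ℝ) (1 / 4))
    (hε : 4 * t + 7 * (θ / μ) * η ≤ ε * θ * μ) {W : Matrix (Fin n) (Fin n) ℝ}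
    (hW : ∀ v, ‖toEuclideanLin Wᵀ v - v‖ ≤ η * ‖v‖) : NearModel θ μ ε (W * Matrix.of X) := by
  intro q b hq
  have hη0 := hη.1
  have hnorm (v : Vec n) : ‖toEuclideanLin Wᵀ v‖ ≤ 5 / 4 * ‖v‖ := by
    have := hη.2
    calc _ ≤ ‖v‖ + ‖toEuclideanLin Wᵀ v - v‖ := norm_le_norm_add_norm_sub' _ _
      _ ≤ ‖v‖ + 1 / 4 * ‖v‖ := by gcongr; exact (hW v).trans (by gcongr)
      _ = _ := by ring
  have hconc := hX (toEuclideanLin Wᵀ q) (toEuclideanLin Wᵀ b) ((hnorm q).trans (by linarith))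
  have hμθ0 : 0 ≤ θ / μ * η := mul_nonneg (div_nonneg hθ.1 hμ.le) hη0
  simp only [DerivativesNear] at hconc ⊢
  rw [empGrad_mul, empHess_mul]
  refine ⟨(abs_sub_le _ _ _).trans ((add_le_add hconc.1 (abs_meanGrad_sub_le_of_norm_sub_le hθ hμ
    hμθ hη0 hW hq b)).trans ?_), (abs_sub_le _ _ _).trans ((add_le_add hconc.2
    (abs_meanHess_sub_le_of_norm_sub_le hθ hμ (hμθ.trans hθ.2) ⟨hη0, by linarith [hη.2]⟩ hW hq
    b)).trans ?_)⟩
  · calc _ ≤ 2 * t * (5 / 4 * ‖b‖) + 2 * (θ / μ) * η * ‖b‖ := by gcongr; exact hnorm b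
      _ = (5 / 2 * t + 2 * (θ / μ) * η) * ‖b‖ := by ring
      _ ≤ _ := by gcongr; linarith
  · calc _ ≤ 2 * t * (5 / 4 * ‖b‖) ^ 2 + 7 * (θ / μ) * η * ‖b‖ ^ 2 := by gcongr; exact hnorm b
      _ = (25 / 8 * t + 7 * (θ / μ) * η) * ‖b‖ ^ 2 := by ring
      _ ≤ _ := by gcongr; linarith

end NearModel

section Minimizers

variable {n p : ℕ} {θ μ ε : ℝ} {Y : Fin n → Fin p → ℝ} {q : Vec n} {i j : Fin n}

theorem norm_rotDir_le (hij : i ≠ j) (hji : q j ^ 2 ≤ q i ^ 2) :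
    ‖rotDir q i j‖ ≤ 3 / 2 * |q i| := by
  refine le_of_sq_le_sq ?_ (by positivity)
  rw [norm_rotDir_sq q hij, mul_pow, sq_abs]
  nlinarith

theorem norm_rotMid_le (hij : i ≠ j) (hji : q j ^ 2 ≤ q i ^ 2) :
    ‖rotMid q i j‖ ≤ 3 / 2 * |q i| := by
  refine le_of_sq_le_sq ?_ (by positivity)
  rw [norm_rotMid_sq q hij, mul_pow, sq_abs]
  nlinarith

variable (hY : NearModel θ μ ε Y) (hε : 0 ≤ ε) (hμ : 0 < μ)
include hY hε hμ

theorem NearModel.abs_empGrad_rotDir_add_le (hθ : θ ∈ Set.Icc (0 : ℝ) 1) (hq : ‖q‖ ≤ 1)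
    (hij : i ≠ j) (hji : q j ^ 2 ≤ q i ^ 2) :
    |empGrad μ Y q (rotDir q i j) + q i * q j * curvGap θ μ q i j|
      ≤ 3 / 2 * (ε * θ * μ * |q i|) := by
  have h := (hY q (rotDir q i j) hq).1
  have := hθ.1
  rw [meanGrad_rotDir hθ, sub_neg_eq_add] at h
  calc _ ≤ ε * θ * μ * (3 / 2 * |q i|) := h.trans (by gcongr; exact norm_rotDir_le hij hji)
    _ = _ := by ring

theorem NearModel.abs_mul_curvGap_le_of_isLocalMinOn (hθ : θ ∈ Set.Icc (0 : ℝ) 1)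
    (hq : ‖q‖ = 1) (hmin : IsLocalMinOn (ffun n p μ Y) (Metric.sphere 0 1) q) (hij : i ≠ j)
    (hi : q i ≠ 0) (hji : q j ^ 2 ≤ q i ^ 2) :
    |q j| * curvGap θ μ q i j ≤ 3 / 2 * (ε * θ * μ) := by
  have h := hY.abs_empGrad_rotDir_add_le hε hμ hθ hq.le hij hji
  rw [empGrad_eq_zero_of_isLocalMinOn hμ.ne' hq (isSphereArc_rotation q hij) hmin, zero_add,
    abs_mul, abs_mul] at h
  refine le_of_mul_le_mul_left ?_ (abs_pos.2 hi)
  calc |q i| * (|q j| * curvGap θ μ q i j) ≤ |q i| * |q j| * |curvGap θ μ q i j| := by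
        rw [← mul_assoc]
        gcongr
        exact le_abs_self _
    _ ≤ _ := h.trans_eq (by ring)

theorem NearModel.sq_mul_le_of_isLocalMinOn (hθ : θ ∈ Set.Icc (0 : ℝ) 1) (hμ1 : μ ≤ 1)
    (hq : ‖q‖ = 1) (hmin : IsLocalMinOn (ffun n p μ Y) (Metric.sphere 0 1) q) (hij : i ≠ j)
    (hj : μ ≤ |q j|) (hji : q j ^ 2 ≤ q i ^ 2) :
    θ * (1 - θ) / 50 * (q i * q j) ^ 2
      ≤ (q i ^ 2 - q j ^ 2) * curvGap θ μ q i j + 7 / 2 * (ε * θ * q i ^ 2) := by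
  have hi : μ ≤ |q i| := hj.trans (sq_le_sq.1 hji)
  have := hθ.1
  have hcurv := meanHess_rotDir_div_sub_meanGrad_rotMid_le hθ hμ hμ1 hij hq.le hi hj
  have hmin' := empGrad_le_empHess_div_of_isLocalMinOn hμ.ne' hq (isSphereArc_rotation q hij) hmin
  have hgrad := (abs_le.1 (hY q (rotMid q i j) hq.le).1).1
  have hhess : empHess μ Y q (rotDir q i j) / μ
      ≤ meanHess θ μ q (rotDir q i j) / μ + ε * θ * ‖rotDir q i j‖ ^ 2 := by
    rw [div_add' _ _ _ hμ.ne', div_le_div_iff_of_pos_right hμ]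
    linarith [(abs_le.1 (hY q (rotDir q i j) hq.le).2).2]
  have hmid : ε * θ * μ * ‖rotMid q i j‖ ≤ 3 / 2 * (ε * θ * q i ^ 2) := by
    calc _ ≤ ε * θ * |q i| * (3 / 2 * |q i|) := by gcongr; exact norm_rotMid_le hij hji
      _ = _ := by rw [← sq_abs]; ring
  have hdir : ε * θ * ‖rotDir q i j‖ ^ 2 ≤ ε * θ * (2 * q i ^ 2) := by
    gcongr
    rw [norm_rotDir_sq q hij]
    linarith
  linarith

variable (hθ : θ ∈ Set.Ioc (0 : ℝ) (1 / 2)) (hq : ‖q‖ = 1)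
  (hmin : IsLocalMinOn (ffun n p μ Y) (Metric.sphere 0 1) q) (hij : i ≠ j)
  (hji : q j ^ 2 ≤ q i ^ 2)
include hθ hq hmin hij hji

-- Two comparable coordinates give negative curvature along the rotation between them.
theorem NearModel.two_mul_sq_le_of_isLocalMinOn (hμ1 : μ ≤ 1) (hμi : 2 * μ ^ 2 ≤ q i ^ 2)
    (hεi : 1000 * ε ≤ q i ^ 2) : 2 * q j ^ 2 ≤ q i ^ 2 := by
  by_contra! hlt
  have hθ' : θ ∈ Set.Icc (0 : ℝ) 1 := ⟨hθ.1.le, by linarith [hθ.2]⟩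
  have hθ0 := hθ.1
  have hθ1 : 1 / 2 ≤ 1 - θ := by linarith [hθ.2]
  have hi2 : 0 < q i ^ 2 := lt_of_lt_of_le (by positivity) hμi
  have hj : μ ≤ |q j| := le_of_sq_le_sq (by rw [sq_abs]; linarith) (abs_nonneg _)
  have hgap : curvGap θ μ q i j ≤ 3 / 2 * (ε * θ) := by
    refine le_of_mul_le_mul_left ?_ (hμ.trans_le hj)
    calc _ ≤ 3 / 2 * (ε * θ * μ) := hY.abs_mul_curvGap_le_of_isLocalMinOn hε hμ hθ' hq hmin hij
          (pow_ne_zero_iff two_ne_zero |>.1 hi2.ne') hji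
      _ ≤ 3 / 2 * (ε * θ * |q j|) := by gcongr
      _ = _ := by ring
  have hcurv := hY.sq_mul_le_of_isLocalMinOn hε hμ hθ' hμ1 hq hmin hij hj hji
  have hfirst : (q i ^ 2 - q j ^ 2) * curvGap θ μ q i j ≤ 3 / 4 * (ε * θ * q i ^ 2) := by
    calc _ ≤ (q i ^ 2 - q j ^ 2) * (3 / 2 * (ε * θ)) := by gcongr
      _ ≤ q i ^ 2 / 2 * (3 / 2 * (ε * θ)) := by gcongr; linarith
      _ = _ := by ring
  have hlower : θ / 200 * (q i ^ 2 * q i ^ 2) ≤ θ * (1 - θ) / 50 * (q i * q j) ^ 2 := by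
    calc _ = θ * (1 / 2) / 50 * (q i ^ 2 * (q i ^ 2 / 2)) := by ring
      _ ≤ θ * (1 - θ) / 50 * (q i ^ 2 * q j ^ 2) := by gcongr; linarith
      _ = _ := by ring
  have hupper : ε * θ * q i ^ 2 ≤ θ / 1000 * (q i ^ 2 * q i ^ 2) := by
    calc _ = ε * (θ * q i ^ 2) := by ring
      _ ≤ q i ^ 2 / 1000 * (θ * q i ^ 2) := by gcongr; linarith
      _ = _ := by ring
  linarith [mul_pos hθ0 (mul_pos hi2 hi2)]

theorem NearModel.abs_mul_sq_le_of_isLocalMinOn (hμ1 : μ ≤ 1) (hμi : 2 * μ ^ 2 ≤ q i ^ 2)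
    (hεi : 1000 * ε ≤ q i ^ 2) : |q j| * q i ^ 2 ≤ 600 * (ε * μ) := by
  have hθ' : θ ∈ Set.Icc (0 : ℝ) 1 := ⟨hθ.1.le, by linarith [hθ.2]⟩
  have hθ0 := hθ.1
  have hθ1 : 1 / 2 ≤ 1 - θ := by linarith [hθ.2]
  have hi2 : 0 < q i ^ 2 := lt_of_lt_of_le (by positivity) hμi
  have hhalf := hY.two_mul_sq_le_of_isLocalMinOn hε hμ hθ hq hmin hij hji hμ1 hμi hεi
  have hgap : θ / 400 * q i ^ 2 ≤ curvGap θ μ q i j := by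
    calc _ = θ * (1 / 2) / 100 * (q i ^ 2 / 2) := by ring
      _ ≤ θ * (1 - θ) / 100 * (q i ^ 2 - q j ^ 2) := by gcongr; linarith
      _ ≤ _ := le_curvGap hθ' hμ hμ1 hij hq.le hji
  refine le_of_mul_le_mul_left ?_ hθ0
  calc θ * (|q j| * q i ^ 2) = 400 * (|q j| * (θ / 400 * q i ^ 2)) := by ring
    _ ≤ 400 * (|q j| * curvGap θ μ q i j) := by gcongr
    _ ≤ 400 * (3 / 2 * (ε * θ * μ)) := mul_le_mul_of_nonneg_left
        (hY.abs_mul_curvGap_le_of_isLocalMinOn hε hμ hθ' hq hmin hij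
          (pow_ne_zero_iff two_ne_zero |>.1 hi2.ne') hji) (by norm_num)
    _ = _ := by ring

theorem NearModel.mul_sq_le_of_isLocalMinOn (hμn : 2 * n * μ ^ 2 ≤ 1)
    (hεn : ε ^ 2 * n ^ 3 ≤ (1 / 20000) ^ 2) (hi : 1 ≤ n * q i ^ 2) :
    n * q j ^ 2 ≤ (μ / 20) ^ 2 := by
  have hn : (1 : ℝ) ≤ n := by exact_mod_cast Fin.pos i
  have hn0 : (0 : ℝ) < n := by linarith
  have hμ1 : μ ≤ 1 := by nlinarith
  have hεn' : ε * n ≤ 1 / 20000 := by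
    refine le_of_sq_le_sq (le_trans ?_ hεn) (by norm_num)
    rw [mul_pow]
    gcongr
    norm_num
  have hμi : 2 * μ ^ 2 ≤ q i ^ 2 := le_of_mul_le_mul_left (by linarith) hn0
  have hεi : 1000 * ε ≤ q i ^ 2 := le_of_mul_le_mul_left (by linarith) hn0
  have hj := hY.abs_mul_sq_le_of_isLocalMinOn hε hμ hθ hq hmin hij hji hμ1 hμi hεi
  have hj' : |q j| ≤ 600 * (ε * μ) * n := by
    calc |q j| = |q j| * 1 := (mul_one _).symm
      _ ≤ |q j| * (n * q i ^ 2) := by gcongr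
      _ = |q j| * q i ^ 2 * n := by ring
      _ ≤ _ := by gcongr
  calc n * q j ^ 2 ≤ n * (600 * (ε * μ) * n) ^ 2 := by
        rw [← sq_abs (q j)]
        gcongr
    _ = 360000 * μ ^ 2 * (ε ^ 2 * n ^ 3) := by ring
    _ ≤ 360000 * μ ^ 2 * (1 / 20000) ^ 2 := by gcongr
    _ ≤ (μ / 20) ^ 2 := by linarith [sq_nonneg μ]

end Minimizers

section Axis

variable {n p : ℕ} {q : Vec n} {i : Fin n}

theorem exists_forall_sq_le_and_one_le (hq : ‖q‖ = 1) :
    ∃ i, (∀ j, q j ^ 2 ≤ q i ^ 2) ∧ 1 ≤ n * q i ^ 2 := by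
  have hsum : 1 = ∑ i, q i ^ 2 := by rw [← EuclideanSpace.real_norm_sq_eq, hq, one_pow]
  have hne : Nonempty (Fin n) := by
    by_contra h
    rw [not_nonempty_iff] at h
    simp at hsum
  obtain ⟨i, hi⟩ := Finite.exists_max fun j => q j ^ 2
  refine ⟨i, hi, hsum.trans_le ?_⟩
  simpa using Finset.sum_le_card_nsmul Finset.univ (fun j => q j ^ 2) _ fun j _ => hi j

theorem one_sub_sq_eq_sum_erase (hq : ‖q‖ = 1) (i : Fin n) :
    1 - q i ^ 2 = ∑ j ∈ Finset.univ.erase i, q j ^ 2 := by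
  rw [← one_pow 2, ← hq, EuclideanSpace.real_norm_sq_eq,
    ← Finset.sum_erase_eq_sub (Finset.mem_univ i)]

theorem exists_ne_one_sub_sq_le (hq : ‖q‖ = 1) (hi : 0 < 1 - q i ^ 2) :
    ∃ j, i ≠ j ∧ 1 - q i ^ 2 ≤ n * q j ^ 2 := by
  have hsum := one_sub_sq_eq_sum_erase hq i
  have hne : (Finset.univ.erase i).Nonempty := by
    by_contra h
    rw [Finset.not_nonempty_iff_eq_empty.1 h, Finset.sum_empty] at hsum
    exact hi.ne' hsum
  obtain ⟨j, hj, hmax⟩ := (Finset.univ.erase i).exists_max_image (fun j => q j ^ 2) hne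
  refine ⟨j, (Finset.ne_of_mem_erase hj).symm, hsum.trans_le ?_⟩
  refine (Finset.sum_le_card_nsmul _ _ _ hmax).trans ?_
  rw [nsmul_eq_mul]
  gcongr
  exact (Finset.card_erase_le).trans (by simp)

theorem NearModel.exists_one_sub_sq_le {θ μ ε : ℝ} {Y : Fin n → Fin p → ℝ}
    (hY : NearModel θ μ ε Y) (hε : 0 ≤ ε) (hμ : 0 < μ) (hθ : θ ∈ Set.Ioc (0 : ℝ) (1 / 2))
    (hq : ‖q‖ = 1) (hmin : IsLocalMinOn (ffun n p μ Y) (Metric.sphere 0 1) q)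
    (hμn : 2 * n * μ ^ 2 ≤ 1) (hεn : ε ^ 2 * n ^ 3 ≤ (1 / 20000) ^ 2) :
    ∃ i, 1 - q i ^ 2 ≤ (μ / 10) ^ 2 := by
  obtain ⟨i, hmax, hi⟩ := exists_forall_sq_le_and_one_le hq
  refine ⟨i, ?_⟩
  rcases le_or_gt (1 - q i ^ 2) 0 with h | h
  · exact h.trans (sq_nonneg _)
  obtain ⟨j, hij, hj⟩ := exists_ne_one_sub_sq_le hq h
  refine hj.trans ((hY.mul_sq_le_of_isLocalMinOn hε hμ hθ hq hmin hij (hmax j) hμn hεn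
    hi).trans ?_)
  gcongr
  norm_num

end Axis

/-! ### One local minimizer near each signed basis vector -/

section SignedBasis

variable {n : ℕ} {b b' : Vec n}

theorem norm_eq_one_of_mem_signedBasis (hb : b ∈ SignedBasis n) : ‖b‖ = 1 := by
  obtain ⟨i, rfl | rfl⟩ := hb <;> simp

theorem exists_forall_inner_mul_inner_eq (hb : b ∈ SignedBasis n) :
    ∃ i, ∀ x y : Vec n, ⟪x, b⟫ * ⟪y, b⟫ = x i * y i := by
  obtain ⟨i, rfl | rfl⟩ := hb <;>
    exact ⟨i, fun x y => by simp [EuclideanSpace.inner_single_right]⟩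

theorem exists_mem_signedBasis_inner_eq_abs (q : Vec n) (i : Fin n) :
    ∃ b ∈ SignedBasis n, ⟪q, b⟫ = |q i| := by
  rcases le_total 0 (q i) with h | h
  · exact ⟨_, ⟨i, .inl rfl⟩, by simp [EuclideanSpace.inner_single_right, abs_of_nonneg h]⟩
  · exact ⟨_, ⟨i, .inr rfl⟩, by simp [EuclideanSpace.inner_single_right, abs_of_nonpos h]⟩

theorem inner_nonpos_of_mem_signedBasis_of_ne (hb : b ∈ SignedBasis n) (hb' : b' ∈ SignedBasis n)
    (hne : b ≠ b') : ⟪b, b'⟫ ≤ 0 := by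
  obtain ⟨i, rfl | rfl⟩ := hb <;> obtain ⟨j, rfl | rfl⟩ := hb' <;>
    rcases eq_or_ne i j with rfl | hij <;> simp_all [EuclideanSpace.inner_single_left]

theorem ncard_signedBasis (n : ℕ) : (SignedBasis n).ncard = 2 * n := by
  set e : Fin n → Vec n := fun i => EuclideanSpace.single i 1 with he
  have hinj : Function.Injective e := EuclideanSpace.orthonormal_single.linearIndependent.injective
  have hunion : SignedBasis n = Set.range e ∪ Set.range (-e) := by
    ext b
    simp only [SignedBasis, he, Set.mem_ofPred_eq, Set.mem_union, Set.mem_range, Pi.neg_apply,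
      eq_comm (a := b), exists_or]
  have hdisj : Disjoint (Set.range e) (Set.range (-e)) := by
    rw [Set.disjoint_left]
    rintro _ ⟨i, rfl⟩ ⟨j, hj⟩
    have := congrArg (fun v : Vec n => v i) hj
    by_cases hij : i = j <;> norm_num [he, hij] at this
  rw [hunion, Set.ncard_union_eq hdisj, ← Set.image_univ, ← Set.image_univ,
    Set.ncard_image_of_injective _ hinj,
    Set.ncard_image_of_injective _ (f := -e) (neg_injective.comp hinj), Set.ncard_univ,
    Nat.card_fin, two_mul]

end SignedBasis

section Cap

variable {E : Type*} [NormedAddCommGroup E] [InnerProductSpace ℝ E] {c : ℝ} {b q q' : E}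

/-- The cap of the unit sphere cut out by the half-space at height `c` in the direction `b`. -/
def cap (c : ℝ) (b : E) : Set E := {q | ‖q‖ = 1 ∧ c ≤ ⟪q, b⟫}

theorem isCompact_cap [FiniteDimensional ℝ E] (c : ℝ) (b : E) : IsCompact (cap c b) := by
  have : ProperSpace E := FiniteDimensional.proper_real E
  have hcap : cap c b = Metric.sphere 0 1 ∩ {q | c ≤ ⟪q, b⟫} := by
    ext q
    simp [cap]
  rw [hcap]
  exact (isCompact_sphere _ _).inter_right (isClosed_le continuous_const (by fun_prop))

theorem isLocalMinOn_of_isMinOn_cap {f : E → ℝ} (hmin : IsMinOn f (cap c b) q)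
    (hq : c < ⟪q, b⟫) : IsLocalMinOn f (Metric.sphere 0 1) q := by
  have hopen : IsOpen {x : E | c < ⟪x, b⟫} := isOpen_lt continuous_const (by fun_prop)
  filter_upwards [nhdsWithin_le_nhds (hopen.mem_nhds hq), self_mem_nhdsWithin] with x hx hsphere
  exact hmin ⟨by simpa using hsphere, le_of_lt hx⟩

theorem norm_sub_sq_le_of_mem_cap (hb : ‖b‖ = 1) (hq : q ∈ cap c b) :
    ‖q - b‖ ^ 2 ≤ 2 * (1 - c) := by
  rw [norm_sub_sq_real, hq.1, hb]
  linarith [hq.2]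

theorem norm_sub_le_of_mem_cap {μ : ℝ} (hμ : 0 ≤ μ) (hc : c ^ 2 = 1 - (μ / 10) ^ 2) (hc0 : 0 ≤ c)
    (hb : ‖b‖ = 1) (hq : q ∈ cap c b) : ‖q - b‖ ≤ √2 * μ / 7 := by
  refine le_of_sq_le_sq ((norm_sub_sq_le_of_mem_cap hb hq).trans ?_) (by positivity)
  rw [div_pow, mul_pow, Real.sq_sqrt zero_le_two]
  nlinarith

theorem eventually_lt_of_hasDerivAt_pos {g : ℝ → ℝ} {d x : ℝ} (hg : HasDerivAt g d x)
    (hd : 0 < d) : ∀ᶠ s in nhdsWithin x (Set.Ioi x), g x < g s := by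
  filter_upwards [(hg.tendsto_slope.mono_left (nhdsGT_le_nhdsNE x)).eventually (lt_mem_nhds hd),
    self_mem_nhdsWithin] with s hs hxs
  rwa [slope_def_field, div_pos_iff_of_pos_right (sub_pos.2 hxs), sub_pos] at hs

theorem inner_sub_right_of_norm_eq (h : ‖q‖ = ‖q'‖) : ⟪q, q - q'⟫ = ‖q - q'‖ ^ 2 / 2 := by
  rw [norm_sub_sq_real, inner_sub_right, real_inner_self_eq_norm_sq, h]
  ring

-- The difference of two points on a sphere is orthogonal to their midpoint.
theorem abs_inner_sub_le_of_norm_eq (h : ‖q‖ = ‖q'‖) (b : E) :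
    |⟪q - q', b⟫| ≤ ‖q - q'‖ * ((‖q - b‖ + ‖q' - b‖) / 2) := by
  have horth : ⟪q - q', b⟫ = -⟪q - q', (1 / 2 : ℝ) • ((q - b) + (q' - b))⟫ := by
    have hzero : ⟪q - q', q + q'⟫ = 0 := by
      rw [real_inner_comm]
      exact (real_inner_add_sub_eq_zero_iff q q').2 h
    rw [show (q - b) + (q' - b) = (q + q') - (2 : ℝ) • b by module, real_inner_smul_right,
      inner_sub_right, hzero, real_inner_smul_right]
    ring
  rw [horth, abs_neg]
  refine (abs_real_inner_le_norm _ _).trans ?_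
  rw [norm_smul, Real.norm_of_nonneg (by norm_num)]
  gcongr
  linarith [norm_add_le (q - b) (q' - b)]

theorem norm_le_one_and_le_inner_of_mem_segment (hq : q ∈ cap c b) (hq' : q' ∈ cap c b) {ξ : E}
    (hξ : ξ ∈ segment ℝ q q') : ‖ξ‖ ≤ 1 ∧ c ≤ ⟪ξ, b⟫ := by
  have hhalf : Convex ℝ {x : E | c ≤ ⟪x, b⟫} :=
    convex_halfSpace_ge (f := fun x => ⟪x, b⟫)
      ⟨fun x y => inner_add_left x y b, fun a x => real_inner_smul_left x b a⟩ c
  refine ⟨?_, hhalf.segment_subset hq.2 hq'.2 hξ⟩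
  simpa using (convex_closedBall (0 : E) 1).segment_subset (by simp [hq.1]) (by simp [hq'.1]) hξ

end Cap

theorem eq_of_mem_cap_of_mem_cap {n : ℕ} {b b' q : Vec n} {c : ℝ} (hc : 3 / 4 < c)
    (hb : b ∈ SignedBasis n) (hb' : b' ∈ SignedBasis n) (hq : q ∈ cap c b) (hq' : q ∈ cap c b') :
    b = b' := by
  by_contra hne
  have hinner := inner_nonpos_of_mem_signedBasis_of_ne hb hb' hne
  have hb1 := norm_eq_one_of_mem_signedBasis hb
  have hb1' := norm_eq_one_of_mem_signedBasis hb'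
  have hdist : 2 ≤ ‖b - b'‖ ^ 2 := by
    rw [norm_sub_sq_real, hb1, hb1']
    linarith
  have hmid : ‖b - b'‖ ^ 2 ≤ 2 * (‖q - b‖ ^ 2 + ‖q - b'‖ ^ 2) := by
    calc ‖b - b'‖ ^ 2 ≤ (‖q - b‖ + ‖q - b'‖) ^ 2 := by
          gcongr
          exact norm_sub_rev q b ▸ norm_sub_le_norm_sub_add_norm_sub b q b'
      _ ≤ _ := add_sq_le
  linarith [norm_sub_sq_le_of_mem_cap hb1 hq, norm_sub_sq_le_of_mem_cap hb1' hq']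

section Descent

variable {n p : ℕ} {μ c : ℝ} {Y : Fin n → Fin p → ℝ} {q q' b u v : Vec n}

theorem exists_mem_cap_ffun_lt (hμ : μ ≠ 0) (hq : q ∈ cap c b) (h : IsSphereArc q u v)
    (hneg : ⟪v, b⟫ * empGrad μ Y q v < 0) : ∃ q' ∈ cap c b, ffun n p μ Y q' < ffun n p μ Y q := by
  wlog hvb : 0 < ⟪v, b⟫ generalizing v
  · have hempGrad : empGrad μ Y q (-v) = -empGrad μ Y q v := by
      rw [← neg_one_smul ℝ v, empGrad_smul_right, neg_one_mul]
    refine this h.neg ?_ ?_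
    · rwa [hempGrad, inner_neg_left, neg_mul_neg]
    · rw [inner_neg_left, neg_pos]
      exact (not_lt.1 hvb).lt_of_ne (left_ne_zero_of_mul hneg.ne)
  have hdesc : 0 < -empGrad μ Y q v := neg_pos.2 ((pos_iff_neg_of_mul_neg hneg).1 hvb)
  have hf := (hasDerivAt_ffun_comp (Y := Y) hμ (hasDerivAt_arc q u v 0)).neg
  have hb : HasDerivAt (fun s => ⟪arc q u v s, b⟫) ⟪arcVel u v 0, b⟫ 0 := by
    simpa using (hasDerivAt_arc q u v 0).inner ℝ (hasDerivAt_const 0 b)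
  rw [arc_zero, arcVel_zero] at hf
  rw [arcVel_zero] at hb
  obtain ⟨s, hs, hsb⟩ := ((eventually_lt_of_hasDerivAt_pos hf hdesc).and
    (eventually_lt_of_hasDerivAt_pos hb hvb)).exists
  simp only [Pi.neg_apply, neg_lt_neg_iff, arc_zero] at hs hsb
  exact ⟨_, ⟨(h.norm_arc s).trans hq.1, hq.2.trans hsb.le⟩, hs⟩

theorem exists_mem_segment_empHess_div_eq (μ : ℝ) (Y : Fin n → Fin p → ℝ) (q q' : Vec n) :
    ∃ ξ ∈ segment ℝ q q',
      empHess μ Y ξ (q - q') / μ = empGrad μ Y q (q - q') - empGrad μ Y q' (q - q') := by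
  set d := q - q' with hd
  have hderiv (s : ℝ) : HasDerivAt (fun r : ℝ => empGrad μ Y (q' + r • d) d)
      (empHess μ Y (q' + s • d) d / μ) s := by
    have hline : HasDerivAt (fun r : ℝ => q' + r • d) d s := by
      simpa using ((hasDerivAt_id s).smul_const d).const_add q'
    refine (hasDerivAt_empGrad_comp (δ := fun _ => d) hline (hasDerivAt_const s d)).congr_deriv ?_
    rw [← zero_smul ℝ d, empGrad_smul_right, zero_mul, add_zero]
  obtain ⟨r, hr, hslope⟩ := exists_hasDerivAt_eq_slope _ _ zero_lt_one
    (fun s _ => (hderiv s).continuousAt.continuousWithinAt) (fun s _ => hderiv s)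
  refine ⟨q' + r • d, ⟨r, 1 - r, hr.1.le, by linarith [hr.2], by ring, by rw [hd]; module⟩, ?_⟩
  simpa [hd] using hslope

theorem empGrad_sub_empGrad_of_isLocalMinOn (hμ : μ ≠ 0) (hq : ‖q‖ = 1) (hq' : ‖q'‖ = 1)
    (hmin : IsLocalMinOn (ffun n p μ Y) (Metric.sphere 0 1) q)
    (hmin' : IsLocalMinOn (ffun n p μ Y) (Metric.sphere 0 1) q') :
    empGrad μ Y q (q - q') - empGrad μ Y q' (q - q')
      = ‖q - q'‖ ^ 2 / 2 * (empGrad μ Y q q + empGrad μ Y q' q') := by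
  have hinner' : ⟪q', q - q'⟫ = -(‖q - q'‖ ^ 2 / 2) := by
    rw [← neg_sub q' q, inner_neg_right, inner_sub_right_of_norm_eq (hq'.trans hq.symm), norm_neg]
  rw [empGrad_eq_inner_mul_of_isLocalMinOn hμ hq hmin,
    empGrad_eq_inner_mul_of_isLocalMinOn hμ hq' hmin', hinner',
    inner_sub_right_of_norm_eq (hq.trans hq'.symm)]
  ring

end Descent

section NearModel

variable {n p : ℕ} {θ μ ε c : ℝ} {Y : Fin n → Fin p → ℝ} {q q' b a : Vec n} {i j : Fin n}
  (hY : NearModel θ μ ε Y) (hμ : 0 < μ)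
include hY hμ

theorem NearModel.mul_empGrad_rotDir_neg (hε : 0 ≤ ε) (hθ : θ ∈ Set.Ioc (0 : ℝ) (1 / 2))
    (hμ1 : μ ≤ 1) (hq : ‖q‖ ≤ 1) (hij : i ≠ j) (hi : 99 / 100 ≤ q i ^ 2)
    (hj : q j ^ 2 ≤ 1 / 100) (hεj : 400 * (ε * μ) < |q j|) :
    q i * q j * empGrad μ Y q (rotDir q i j) < 0 := by
  have hθ0 := hθ.1
  have hθ1 : 1 / 2 ≤ 1 - θ := by linarith [hθ.2]
  have hθ' : θ ∈ Set.Icc (0 : ℝ) 1 := ⟨hθ0.le, by linarith⟩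
  have hgap : θ / 250 ≤ curvGap θ μ q i j := by
    calc θ / 250 ≤ θ * (1 / 2) / 100 * (98 / 100) := by linarith
      _ ≤ θ * (1 - θ) / 100 * (q i ^ 2 - q j ^ 2) := by gcongr; linarith
      _ ≤ _ := le_curvGap hθ' hμ hμ1 hij hq (by linarith)
  have herr := hY.abs_empGrad_rotDir_add_le hε hμ hθ' hq hij (by linarith)
  have hi0 : 0 < |q i| := abs_pos.2 fun h => by norm_num [h] at hi
  have hj0 : 0 < |q j| := lt_of_le_of_lt (by positivity) hεj
  set m := |q i| * |q j| with hm
  have hmsq : (q i * q j) ^ 2 = m ^ 2 := by rw [hm, ← abs_mul, sq_abs]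
  have : 0 < m := mul_pos hi0 hj0
  have hmodel : m ^ 2 * (θ / 250) ≤ (q i * q j) ^ 2 * curvGap θ μ q i j := by rw [hmsq]; gcongr
  have hnoise : q i * q j * (empGrad μ Y q (rotDir q i j) + q i * q j * curvGap θ μ q i j)
      ≤ m * (3 / 2 * (ε * θ * μ * |q i|)) := by
    refine (le_abs_self _).trans ?_
    rw [abs_mul, abs_mul]
    gcongr
  have hsmall : m * (θ * |q i|) * (400 * (ε * μ)) < m * (θ * |q i|) * |q j| := by gcongr
  have : 0 ≤ m * (θ * |q i|) * (ε * μ) := by positivity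
  have : m * (θ * |q i|) * |q j| = m ^ 2 * θ := by rw [hm]; ring
  linarith

theorem NearModel.exists_mem_cap_isLocalMinOn (hε : 0 ≤ ε) (hθ : θ ∈ Set.Ioc (0 : ℝ) (1 / 2))
    (hμ1 : μ ≤ 1) (hεn : ε ^ 2 * n ^ 3 ≤ (1 / 20000) ^ 2) (hc : c ^ 2 = 1 - (μ / 10) ^ 2)
    (hc0 : 0 < c) (hb : b ∈ SignedBasis n) :
    ∃ q ∈ cap c b, IsLocalMinOn (ffun n p μ Y) (Metric.sphere 0 1) q := by
  have hμsq : (μ / 10) ^ 2 ≤ 1 / 100 := by nlinarith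
  have hbcap : b ∈ cap c b := by
    have hb1 := norm_eq_one_of_mem_signedBasis hb
    refine ⟨hb1, ?_⟩
    rw [real_inner_self_eq_norm_sq, hb1]
    exact (sq_le_sq₀ hc0.le (by norm_num)).1 (by linarith [sq_nonneg (μ / 10)])
  obtain ⟨q, hq, hmin⟩ := (isCompact_cap c b).exists_isMinOn ⟨b, hbcap⟩
    (continuous_ffun hμ.ne' Y).continuousOn
  refine ⟨q, hq, isLocalMinOn_of_isMinOn_cap hmin (hq.2.lt_of_ne fun hbdry => ?_)⟩
  obtain ⟨i, hi⟩ := exists_forall_inner_mul_inner_eq hb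
  have hqi : q i ^ 2 = 1 - (μ / 10) ^ 2 := by rw [sq, ← hi, ← hbdry, ← sq, hc]
  obtain ⟨j, hij, hj⟩ := exists_ne_one_sub_sq_le hq.1 (i := i) (by rw [hqi]; ring_nf; positivity)
  have hn : (1 : ℝ) ≤ n := by exact_mod_cast Fin.pos i
  have hjle : q j ^ 2 ≤ 1 - q i ^ 2 := by
    rw [one_sub_sq_eq_sum_erase hq.1]
    exact Finset.single_le_sum (f := fun j => q j ^ 2) (fun _ _ => sq_nonneg _)
      (Finset.mem_erase.2 ⟨hij.symm, Finset.mem_univ j⟩)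
  have hεj : 400 * (ε * μ) < |q j| := by
    refine lt_of_pow_lt_pow_left₀ 2 (abs_nonneg _) (lt_of_mul_lt_mul_left ?_ (zero_le_one.trans hn))
    calc n * (400 * (ε * μ)) ^ 2 = 160000 * μ ^ 2 * (ε ^ 2 * n) := by ring
      _ ≤ 160000 * μ ^ 2 * (ε ^ 2 * n ^ 3) := by gcongr; exact le_self_pow₀ hn (by norm_num)
      _ ≤ 160000 * μ ^ 2 * (1 / 20000) ^ 2 := by gcongr
      _ < (μ / 10) ^ 2 := by linarith [pow_pos hμ 2]
      _ ≤ n * |q j| ^ 2 := by rw [sq_abs]; linarith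
  have hneg := hY.mul_empGrad_rotDir_neg hμ hε hθ hμ1 hq.1.le hij (by linarith) (by linarith) hεj
  rw [← rotDir_apply_left q hij, ← hi, ← hbdry, mul_assoc] at hneg
  obtain ⟨q', hq', hlt⟩ := exists_mem_cap_ffun_lt hμ.ne' hq (isSphereArc_rotation q hij)
    (neg_of_mul_neg_right hneg hc0.le)
  exact hlt.not_ge (hmin hq')

theorem NearModel.le_empHess (hε : ε ≤ 1 / 100) (hθ : θ ∈ Set.Ioc (0 : ℝ) (1 / 2)) (hμ1 : μ ≤ 1)
    (ha : ‖a‖ ≤ 1) (hai : 1 - (μ / 10) ^ 2 ≤ a i ^ 2) (hbi : b i ^ 2 ≤ ‖b‖ ^ 2 / 4) :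
    θ / 4 * ‖b‖ ^ 2 ≤ empHess μ Y a b := by
  have hθ0 := hθ.1
  have hθ1 : 1 / 2 ≤ 1 - θ := by linarith [hθ.2]
  have hspread : 3 * (‖a‖ ^ 2 - a i ^ 2) / μ ^ 2 ≤ 3 / 100 := by
    rw [div_le_iff₀ (by positivity)]
    linarith [pow_le_one₀ (n := 2) (norm_nonneg a) ha]
  have hmodel : 9 / 25 * θ * ‖b‖ ^ 2 ≤ meanHess θ μ a b := by
    calc 9 / 25 * θ * ‖b‖ ^ 2 ≤ θ * (1 / 2) * (3 / 4 * ‖b‖ ^ 2) * (97 / 100) := by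
          linarith [mul_nonneg hθ0.le (sq_nonneg ‖b‖)]
      _ ≤ θ * (1 - θ) * (‖b‖ ^ 2 - b i ^ 2) * (1 - 3 * (‖a‖ ^ 2 - a i ^ 2) / μ ^ 2) := by
          gcongr
          · exact mul_nonneg (by positivity) (by linarith [sq_nonneg ‖b‖])
          · linarith
          · linarith
      _ ≤ _ := le_meanHess ⟨hθ0.le, by linarith⟩ μ i a b
  have hnoise : ε * θ * μ * ‖b‖ ^ 2 ≤ 1 / 100 * θ * 1 * ‖b‖ ^ 2 := by gcongr
  linarith [(abs_le.1 (hY a b ha).2).1, mul_nonneg hθ0.le (sq_nonneg ‖b‖)]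

theorem NearModel.empGrad_self_le (hε : ε ∈ Set.Icc (0 : ℝ) 1) (hθ : θ ∈ Set.Icc (0 : ℝ) 1)
    (hμ1 : μ ≤ 1) (hq : ‖q‖ = 1) : empGrad μ Y q q ≤ 2 := by
  have hmodel := (abs_le.1 (abs_meanGrad_le μ q q hθ)).2
  have hnear := (abs_le.1 (hY q q hq.le).1).2
  have hsqrt : √θ ≤ 1 := Real.sqrt_le_one.2 hθ.2
  have hnoise : ε * θ * μ ≤ 1 * 1 * 1 := by
    have := hθ.1
    gcongr
    exacts [hε.2, hθ.2]
  rw [hq, mul_one] at hmodel hnear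
  linarith

-- On the segment between two minimizers the Hessian is at least of order `θ`, while the mean value
-- theorem makes it at most `2 * μ` somewhere.
theorem NearModel.eq_of_mem_cap (hε : 0 ≤ ε) (hεn : ε ^ 2 * n ^ 3 ≤ (1 / 20000) ^ 2)
    (hθ : θ ∈ Set.Ioc (0 : ℝ) (1 / 2)) (hμθ : 100 * μ ≤ θ) (hc : c ^ 2 = 1 - (μ / 10) ^ 2)
    (hc0 : 0 < c) (hb : b ∈ SignedBasis n) (hq : q ∈ cap c b) (hq' : q' ∈ cap c b)
    (hmin : IsLocalMinOn (ffun n p μ Y) (Metric.sphere 0 1) q)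
    (hmin' : IsLocalMinOn (ffun n p μ Y) (Metric.sphere 0 1) q') : q = q' := by
  by_contra hne
  have hμ1 : μ ≤ 1 := by linarith [hθ.2]
  have hd : 0 < ‖q - q'‖ ^ 2 := pow_pos (norm_pos_iff.2 (sub_ne_zero.2 hne)) 2
  have hclose (x : Vec n) (hx : x ∈ cap c b) : ‖x - b‖ ≤ 1 / 2 := by
    have hx2 := norm_sub_sq_le_of_mem_cap (norm_eq_one_of_mem_signedBasis hb) hx
    refine le_of_sq_le_sq ?_ (by norm_num)
    nlinarith
  obtain ⟨i, hi⟩ := exists_forall_inner_mul_inner_eq hb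
  have hε1 : ε ≤ 1 / 100 := by
    have hn : (1 : ℝ) ≤ n := by exact_mod_cast Fin.pos i
    nlinarith [one_le_pow₀ (n := 3) hn]
  have hdi : (q - q') i ^ 2 ≤ ‖q - q'‖ ^ 2 / 4 := by
    have h := abs_inner_sub_le_of_norm_eq (hq.1.trans hq'.1.symm) b
    have h' : |⟪q - q', b⟫| ≤ ‖q - q'‖ * (1 / 2) := by
      refine h.trans ?_
      gcongr
      linarith [hclose q hq, hclose q' hq']
    rw [sq ((q - q') i), ← hi, ← sq, ← sq_abs]
    calc _ ≤ (‖q - q'‖ * (1 / 2)) ^ 2 := by gcongr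
      _ = _ := by ring
  obtain ⟨ξ, hξ, hslope⟩ := exists_mem_segment_empHess_div_eq μ Y q q'
  obtain ⟨hξ1, hξb⟩ := norm_le_one_and_le_inner_of_mem_segment hq hq' hξ
  have hξi : 1 - (μ / 10) ^ 2 ≤ ξ i ^ 2 := by
    rw [sq (ξ i), ← hi, ← sq, ← hc]
    gcongr
  have hlower := hY.le_empHess hμ hε1 hθ hμ1 hξ1 hξi hdi
  have hupper : empHess μ Y ξ (q - q') ≤ 2 * ‖q - q'‖ ^ 2 * μ := by
    have hself (x : Vec n) (hx : ‖x‖ = 1) := hY.empGrad_self_le hμ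
      ⟨hε, hε1.trans (by norm_num)⟩ ⟨hθ.1.le, hθ.2.trans (by norm_num)⟩ hμ1 hx
    rw [← div_le_iff₀ hμ, hslope, empGrad_sub_empGrad_of_isLocalMinOn hμ.ne' hq.1 hq'.1 hmin hmin']
    nlinarith [hself q hq.1, hself q' hq'.1]
  nlinarith [mul_pos hθ.1 hd]

theorem NearModel.exists_mem_cap (hε : 0 ≤ ε) (hεn : ε ^ 2 * n ^ 3 ≤ (1 / 20000) ^ 2)
    (hθ : θ ∈ Set.Ioc (0 : ℝ) (1 / 2)) (hμn : 2 * n * μ ^ 2 ≤ 1) (hc : c ^ 2 = 1 - (μ / 10) ^ 2)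
    (hq : q ∈ LocalMins n p μ Y) : ∃ b ∈ SignedBasis n, q ∈ cap c b := by
  obtain ⟨hq1, hmin⟩ := hq
  rw [mem_sphere_zero_iff_norm] at hq1
  obtain ⟨i, hi⟩ := hY.exists_one_sub_sq_le hε hμ hθ hq1 hmin hμn hεn
  obtain ⟨b, hb, hqb⟩ := exists_mem_signedBasis_inner_eq_abs q i
  exact ⟨b, hb, hq1, hqb ▸ le_of_sq_le_sq (by rw [sq_abs]; linarith) (abs_nonneg _)⟩

theorem NearModel.exists_bijOn_localMins (hε : 0 ≤ ε) (hεn : ε ^ 2 * n ^ 3 ≤ (1 / 20000) ^ 2)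
    (hθ : θ ∈ Set.Ioc (0 : ℝ) (1 / 2)) (hμθ : 100 * μ ≤ θ) (hμn : 2 * n * μ ^ 2 ≤ 1) :
    ∃ F : Vec n → Vec n, Set.BijOn F (LocalMins n p μ Y) (SignedBasis n) ∧
      ∀ q ∈ LocalMins n p μ Y, ‖q - F q‖ ≤ √2 * μ / 7 := by
  have hμ1 : 100 * μ ≤ 1 / 2 := hμθ.trans hθ.2
  obtain ⟨c, hc0, hc⟩ : ∃ c : ℝ, 0 < c ∧ c ^ 2 = 1 - (μ / 10) ^ 2 := by
    have : 0 < 1 - (μ / 10) ^ 2 := by nlinarith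
    exact ⟨_, Real.sqrt_pos.2 this, Real.sq_sqrt this.le⟩
  choose! F hF hFcap using fun q (hq : q ∈ LocalMins n p μ Y) =>
    hY.exists_mem_cap hμ hε hεn hθ hμn hc hq
  refine ⟨F, ⟨hF, fun q hq q' hq' hqq' => ?_, fun b hb => ?_⟩, fun q hq =>
    norm_sub_le_of_mem_cap hμ.le hc hc0.le (norm_eq_one_of_mem_signedBasis (hF q hq))
      (hFcap q hq)⟩
  · exact hY.eq_of_mem_cap hμ hε hεn hθ hμθ hc hc0 (hF q hq) (hFcap q hq) (hqq' ▸ hFcap q' hq')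
      hq.2 hq'.2
  · obtain ⟨q, hq, hmin⟩ := hY.exists_mem_cap_isLocalMinOn hμ hε hθ (by linarith) hεn hc hc0 hb
    have hqmin : q ∈ LocalMins n p μ Y := ⟨mem_sphere_zero_iff_norm.2 hq.1, hmin⟩
    exact ⟨q, hqmin, eq_of_mem_cap_of_mem_cap (by nlinarith) (hF q hqmin) hb (hFcap q hqmin) hq⟩

end NearModel

/-! ### Sample size -/

section SampleSize

variable {n p m : ℕ} {θ μ t : ℝ}

theorem mul_log_le_of_two_mul_log_le {Q x : ℝ} (hQ : 0 < Q) (hx : 0 < x)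
    (h : 2 * (Q * Real.log Q) ≤ x) : Q * Real.log x ≤ x := by
  have hsplit : Real.log x = Real.log Q + (Real.log 2 + Real.log (x / Q / 2)) := by
    rw [← Real.log_mul two_ne_zero (by positivity), ← Real.log_mul hQ.ne' (by positivity)]
    congr 1
    field_simp
  have hle : Real.log x ≤ Real.log Q + x / Q / 2 := by
    linarith [Real.log_le_sub_one_of_pos (show 0 < x / Q / 2 by positivity), Real.log_two_lt_d9]
  calc Q * Real.log x ≤ Q * (Real.log Q + x / Q / 2) := by gcongr
    _ = Q * Real.log Q + x / 2 := by field_simp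
    _ ≤ x := by linarith

theorem mul_log_le_of_const_mul_log_le {K B a x : ℝ} (hK : 1 ≤ K) (hB : 1 ≤ B)
    (ha : 1 ≤ Real.log a) (hBa : B ≤ a ^ m)
    (hx : 2 * (Real.log K + m) * K * B * Real.log a ≤ x) (hx0 : 0 < x) :
    K * B * Real.log x ≤ x := by
  have hlogB : Real.log B ≤ m * Real.log a :=
    (Real.log_le_log (by linarith) hBa).trans_eq (Real.log_pow a m)
  have hlogK : Real.log K ≤ Real.log K * Real.log a :=
    le_mul_of_one_le_right (Real.log_nonneg hK) ha
  refine mul_log_le_of_two_mul_log_le (by positivity) hx0 (le_trans ?_ hx)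
  rw [Real.log_mul (by positivity) (by positivity)]
  calc 2 * (K * B * (Real.log K + Real.log B))
      ≤ 2 * (K * B * (Real.log K * Real.log a + m * Real.log a)) := by gcongr
    _ = _ := by ring

theorem pow_mul_exp_le (hn : 0 < n) (hp : 2 ≤ p) (ht : 744000 * n * Real.log p ≤ p * t ^ 2) :
    (4 * (p ^ 10 : ℕ) + 1) ^ (2 * n) * (4 * Real.exp (-(p * t ^ 2 / 24000)))
      ≤ 4 / (p : ℝ) ^ 5 := by
  have hp2 : (2 : ℝ) ≤ p := by exact_mod_cast hp
  have hbase : 4 * ((p ^ 10 : ℕ) : ℝ) + 1 ≤ (p : ℝ) ^ 13 := by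
    have hone : (1 : ℝ) ≤ (p : ℝ) ^ 10 := one_le_pow₀ (by linarith)
    calc 4 * ((p ^ 10 : ℕ) : ℝ) + 1 ≤ p ^ 10 * 2 ^ 3 := by push_cast; linarith
      _ ≤ (p : ℝ) ^ 10 * p ^ 3 := by gcongr
      _ = (p : ℝ) ^ 13 := by ring
  have htail : Real.exp (-(p * t ^ 2 / 24000)) ≤ ((p : ℝ) ^ (31 * n))⁻¹ := by
    rw [← Real.exp_log (show (0 : ℝ) < p by linarith), ← Real.exp_nat_mul, ← Real.exp_neg,
      Real.exp_le_exp, Real.exp_log (by linarith)]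
    push_cast
    linarith
  calc _ ≤ ((p : ℝ) ^ 13) ^ (2 * n) * (4 * ((p : ℝ) ^ (31 * n))⁻¹) := by gcongr
    _ = 4 * (p : ℝ) ^ (26 * n) / (p : ℝ) ^ (31 * n) := by rw [← pow_mul]; ring_nf
    _ ≤ 4 / (p : ℝ) ^ 5 := by
      rw [div_le_div_iff₀ (by positivity) (by positivity), mul_assoc, ← pow_add]
      gcongr
      · linarith
      · omega

theorem measure_not_concentration_le (hn : 0 < n) (hθ : θ ∈ Set.Icc (0 : ℝ) 1) (hμ : μ ≤ 1)
    (ht : 0 < t) (htμ : t ≤ μ) (hp : 2 ≤ p) (hpt : 744000 * n * Real.log p ≤ p * t ^ 2) :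
    bgMatrix θ n p {X | ¬ Concentration θ μ t X} ≤ ENNReal.ofReal (4 / (p : ℝ) ^ 5) := by
  have hp2 : (2 : ℝ) ≤ p := by exact_mod_cast hp
  have hn1 : (1 : ℝ) ≤ n := by exact_mod_cast hn
  have hμ0 : 0 < μ := ht.trans_le htμ
  have ht1 : t ≤ 1 := htμ.trans hμ
  have hlarge : 372000 * n ≤ p * t := by
    have hlog : 1 / 2 ≤ Real.log p := by
      linarith [Real.log_two_gt_d9, Real.log_le_log two_pos hp2]
    calc 372000 * n = 744000 * n * (1 / 2 : ℝ) := by ring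
      _ ≤ 744000 * n * Real.log p := by gcongr
      _ ≤ p * t ^ 2 := hpt
      _ ≤ p * t := by gcongr; exact pow_le_of_le_one ht.le ht1 two_ne_zero
  have hpt_le : p * t ≤ p := mul_le_of_le_one_right (by positivity) ht1
  have hnp : (n : ℝ) ≤ p := by linarith
  have hinv : μ⁻¹ ≤ p := by
    rw [inv_le_comm₀ hμ0 (by linarith), inv_le_iff_one_le_mul₀ (by linarith)]
    nlinarith
  have hmesh : 12 * (μ⁻¹ * (n / (p ^ 10 : ℕ) * (2 * (n * p)) ^ 3)) ≤ t := by
    push_cast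
    calc 12 * (μ⁻¹ * (n / (p : ℝ) ^ 10 * (2 * (n * p)) ^ 3))
        = 96 * μ⁻¹ * n ^ 4 / (p : ℝ) ^ 7 := by field_simp; ring
      _ ≤ p * p * p ^ 4 / (p : ℝ) ^ 7 := by gcongr; linarith
      _ = 1 / p := by field_simp
      _ ≤ t := by rw [div_le_iff₀ (by linarith)]; linarith
  have hnN : n ≤ p ^ 10 := (Nat.cast_le.1 hnp).trans (Nat.le_self_pow (by norm_num) p)
  calc bgMatrix θ n p {X | ¬ Concentration θ μ t X}
      ≤ bgMatrix θ n p {X | ¬ GridConcentration θ μ t (p ^ 10) X} :=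
        measure_mono fun X hX hgrid =>
          hX (hgrid.concentration hn (by omega) hnN hθ hμ0 hμ ht1 hmesh)
    _ ≤ _ := measure_not_gridConcentration_le hθ (by omega) ⟨ht.le, ht1⟩ μ (p ^ 10)
    _ ≤ _ := ENNReal.ofReal_le_ofReal (pow_mul_exp_le hn hp hpt)

theorem isProbabilityMeasure_bgMatrix (hθ : θ ∈ Set.Icc (0 : ℝ) 1) (n p : ℕ) :
    IsProbabilityMeasure (bgMatrix θ n p) := by
  have := isProbabilityMeasure_bg hθ
  unfold bgMatrix
  infer_instance

theorem ofReal_one_sub_le_of_measure_compl_le {Ω : Type*} [MeasurableSpace Ω] {P : Measure Ω}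
    [IsProbabilityMeasure P] {G : Set Ω} {r : ℝ} (hr : 0 ≤ r) (h : P Gᶜ ≤ ENNReal.ofReal r) :
    ENNReal.ofReal (1 - r) ≤ P G := by
  rw [ENNReal.ofReal_sub _ hr, ENNReal.ofReal_one, tsub_le_iff_right, ← measure_univ (μ := P)]
  exact (measure_univ_le_add_compl G).trans (by gcongr)

theorem one_le_kappa (hn : 0 < n) {s : Fin n → ℝ} (hs : ∀ i, 0 < s i) : 1 ≤ kappa s := by
  have : Nonempty (Fin n) := ⟨⟨0, hn⟩⟩
  rw [kappa, one_le_div (iInf_pos_of_forall_pos hs)]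
  exact ciInf_le_ciSup (Set.finite_range s).bddBelow (Set.finite_range s).bddAbove

end SampleSize

section Recovery

variable {n p : ℕ} {θ μ t k : ℝ}

/-- The local minimizers of `f(·; Y)` over the sphere are `2n` perturbations of the signed basis
vectors, one for each: the conclusion of the dictionary learning theorem for the data `Y`. -/
def RecoversSignedBasis (n p : ℕ) (μ : ℝ) (Y : Matrix (Fin n) (Fin p) ℝ) : Prop :=
  (LocalMins n p μ Y).ncard = 2 * n ∧
    ∃ F : Vec n → Vec n, Set.BijOn F (LocalMins n p μ Y) (SignedBasis n) ∧
      ∀ q ∈ LocalMins n p μ Y, ‖q - F q‖ ≤ √2 * μ / 7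

/-- The accuracy `t` of the empirical derivatives that makes whitened data satisfy `NearModel` with
relative error `1 / (20000 n^{3/2})`. -/
def accuracy (n : ℕ) (θ μ k : ℝ) : ℝ := θ * μ ^ 2 / (640000 * √n ^ 3 * k ^ 2)

theorem hundred_mul_le_of_mul_le (hn : 0 < n) (hμ : 0 ≤ μ) (hμn : 100 * n * μ ≤ θ) :
    100 * μ ≤ θ := by
  have hn1 : (1 : ℝ) ≤ n := by exact_mod_cast hn
  linarith [le_mul_of_one_le_left hμ hn1]

theorem accuracy_pos (hn : 0 < n) (hθ : 0 < θ) (hμ : 0 < μ) (hk : 1 ≤ k) :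
    0 < accuracy n θ μ k := by
  unfold accuracy
  positivity

theorem mul_accuracy_le (hn : 0 < n) (hθ : 0 ≤ θ) (hk : 1 ≤ k) :
    640000 * accuracy n θ μ k ≤ θ * μ ^ 2 / √n ^ 3 := by
  rw [accuracy, ← mul_div_assoc, mul_assoc, mul_div_mul_left _ _ (by norm_num)]
  have : (0 : ℝ) < n := by exact_mod_cast hn
  gcongr
  exact le_mul_of_one_le_right (by positivity) (one_le_pow₀ hk)

theorem accuracy_le (hn : 0 < n) (hθ : θ ∈ Set.Icc (0 : ℝ) 1) (hμ : μ ∈ Set.Icc (0 : ℝ) 1)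
    (hk : 1 ≤ k) : accuracy n θ μ k ≤ μ := by
  have hn1 : (1 : ℝ) ≤ n := by exact_mod_cast hn
  have hθμ : 0 ≤ θ * μ ^ 2 := mul_nonneg hθ.1 (sq_nonneg μ)
  have hbound : θ * μ ^ 2 / √n ^ 3 ≤ μ := by
    calc θ * μ ^ 2 / √n ^ 3 ≤ θ * μ ^ 2 :=
          div_le_self hθμ (one_le_pow₀ (Real.one_le_sqrt.2 hn1))
      _ ≤ μ ^ 2 := mul_le_of_le_one_left (sq_nonneg μ) hθ.2
      _ ≤ μ := pow_le_of_le_one hμ.1 hμ.2 two_ne_zero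
  linarith [mul_accuracy_le (μ := μ) hn hθ.1 hk, hμ.1]

theorem div_accuracy_sq (hn : 0 < n) :
    n / accuracy n θ μ k ^ 2 = 640000 ^ 2 * (n ^ 4 * k ^ 4 / (θ ^ 2 * μ ^ 4)) := by
  have : (0 : ℝ) < n := by exact_mod_cast hn
  have hcube : (√n ^ 3) ^ 2 = (n : ℝ) ^ 3 := by rw [pow_right_comm, Real.sq_sqrt this.le]
  rw [accuracy, div_pow, mul_pow (_ * _), mul_pow 640000, hcube]
  field_simp

theorem four_mul_sq_mul_accuracy_div (hθ : 0 < θ) (hk : 1 ≤ k) :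
    4 * k ^ 2 * (accuracy n θ μ k / θ) = μ ^ 2 / (160000 * √n ^ 3) := by
  rw [accuracy]
  field_simp
  ring

theorem one_le_log_div (hn : 0 < n) (hθ : θ ∈ Set.Ioc (0 : ℝ) 1) (hμ : 0 < μ)
    (hμn : 100 * n * μ ≤ θ) (hk : 1 ≤ k) : 1 ≤ Real.log (k * n / (μ * θ)) := by
  have hθ0 := hθ.1
  have hn1 : (1 : ℝ) ≤ n := by exact_mod_cast hn
  have hμ3 : μ * 3 ≤ 1 := by linarith [hundred_mul_le_of_mul_le hn hμ.le hμn, hθ.2]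
  rw [Real.le_log_iff_exp_le (by positivity)]
  refine Real.exp_one_lt_three.le.trans ((le_div_iff₀ (by positivity)).2 ?_)
  calc 3 * (μ * θ) = μ * 3 * θ := by ring
    _ ≤ 1 * 1 := by gcongr; exact hθ.2
    _ ≤ k * n := by gcongr

theorem one_le_pow_mul_pow_div (hn : 0 < n) (hθ : θ ∈ Set.Ioc (0 : ℝ) 1)
    (hμ : μ ∈ Set.Ioc (0 : ℝ) 1) (hk : 1 ≤ k) : 1 ≤ n ^ 4 * k ^ 4 / (θ ^ 2 * μ ^ 4) := by
  have hn1 : (1 : ℝ) ≤ n := by exact_mod_cast hn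
  have hpos : 0 < θ ^ 2 * μ ^ 4 := mul_pos (pow_pos hθ.1 2) (pow_pos hμ.1 4)
  rw [one_le_div hpos]
  calc θ ^ 2 * μ ^ 4 ≤ 1 * 1 :=
        mul_le_mul (pow_le_one₀ hθ.1.le hθ.2) (pow_le_one₀ hμ.1.le hμ.2)
          (pow_nonneg hμ.1.le 4) zero_le_one
    _ ≤ n ^ 4 * k ^ 4 := by gcongr <;> exact one_le_pow₀ ‹_›

theorem pow_mul_pow_div_le (hθ : θ ∈ Set.Ioc (0 : ℝ) 1) (hμ : 0 < μ) :
    n ^ 4 * k ^ 4 / (θ ^ 2 * μ ^ 4) ≤ (k * n / (μ * θ)) ^ 4 := by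
  have hθ0 := hθ.1
  have hpow : θ ^ 4 ≤ θ ^ 2 := pow_le_pow_of_le_one hθ.1.le hθ.2 (by norm_num)
  calc n ^ 4 * k ^ 4 / (θ ^ 2 * μ ^ 4) ≤ n ^ 4 * k ^ 4 / (θ ^ 4 * μ ^ 4) := by gcongr
    _ = _ := by ring

theorem exists_forall_mul_log_le_mul_accuracy_sq : ∃ C : ℝ, 0 < C ∧
    ∀ (n p : ℕ) (θ μ k : ℝ), 0 < n → θ ∈ Set.Ioc (0 : ℝ) 1 → 0 < μ → 100 * n * μ ≤ θ → 1 ≤ k →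
      C * (n ^ 4 * k ^ 4 / (θ ^ 2 * μ ^ 4)) * Real.log (k * n / (μ * θ)) ≤ p →
      2 ≤ p ∧ 744000 * n * Real.log p ≤ p * accuracy n θ μ k ^ 2 := by
  obtain ⟨K, hK⟩ : ∃ K : ℝ, K = 744000 * 640000 ^ 2 := ⟨_, rfl⟩
  have hK1 : 1 ≤ K := by norm_num [hK]
  have hlogK : 0 ≤ Real.log K := Real.log_nonneg hK1
  refine ⟨2 * (Real.log K + (4 : ℕ)) * K, by positivity, fun n p θ μ k hn hθ hμ hμn hk hp => ?_⟩
  have hμ1 : μ ≤ 1 := by linarith [hundred_mul_le_of_mul_le hn hμ.le hμn, hθ.2]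
  have hB := one_le_pow_mul_pow_div hn hθ ⟨hμ, hμ1⟩ hk
  have hlog := one_le_log_div hn hθ hμ hμn hk
  have hp2 : (2 : ℝ) ≤ p := by
    calc (2 : ℝ) ≤ 2 * (0 + (4 : ℕ)) * 1 * 1 * 1 := by norm_num
      _ ≤ _ := by gcongr
      _ ≤ p := hp
  have hplog := mul_log_le_of_const_mul_log_le hK1 hB hlog (pow_mul_pow_div_le hθ hμ) hp
    (by linarith)
  have ht := accuracy_pos hn hθ.1 hμ hk
  refine ⟨by exact_mod_cast hp2, (div_le_iff₀ (pow_pos ht 2)).1 (hplog.trans_eq' ?_)⟩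
  rw [hK, mul_assoc 744000, ← div_accuracy_sq hn]
  ring

theorem pos_and_mul_le_of_lt_mul_min {x : ℝ} (hθ : 0 < θ) (hμ : 0 < μ)
    (h : μ < 1 / 100 * min (θ / n) x) : 0 < n ∧ 100 * n * μ ≤ θ := by
  have hlt : μ < 1 / 100 * (θ / n) := h.trans_le (by gcongr; exact min_le_left _ _)
  have hn : (0 : ℝ) < n := (div_pos_iff_of_pos_left hθ).1 (by linarith)
  refine ⟨by exact_mod_cast hn, ?_⟩
  rw [← mul_div_assoc, lt_div_iff₀ hn] at hlt
  linarith

theorem mul_log_le_mul_max_mul_log_pow {C L x : ℝ} (hC : 0 ≤ C) (hk : 1 ≤ k) (hL : 1 ≤ L) :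
    C * (n ^ 4 * k ^ 4 / (θ ^ 2 * μ ^ 4)) * L
      ≤ C / (1 ^ 2 * θ ^ 2) * max (n ^ 4 / μ ^ 4) x * k ^ 8 * L ^ 4 := by
  calc C * (n ^ 4 * k ^ 4 / (θ ^ 2 * μ ^ 4)) * L
      = C / (1 ^ 2 * θ ^ 2) * (n ^ 4 / μ ^ 4) * k ^ 4 * L := by ring
    _ ≤ C / (1 ^ 2 * θ ^ 2) * max (n ^ 4 / μ ^ 4) x * k ^ 8 * L ^ 4 := by
      gcongr
      · exact le_max_left _ _
      · norm_num
      · exact le_self_pow₀ hL four_ne_zero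

theorem NearModel.recoversSignedBasis {ε : ℝ} {Y : Fin n → Fin p → ℝ} (hY : NearModel θ μ ε Y)
    (hμ : 0 < μ) (hε : 0 ≤ ε) (hεn : ε ^ 2 * n ^ 3 ≤ (1 / 20000) ^ 2)
    (hθ : θ ∈ Set.Ioc (0 : ℝ) (1 / 2)) (hμθ : 100 * μ ≤ θ) (hμn : 2 * n * μ ^ 2 ≤ 1) :
    RecoversSignedBasis n p μ Y := by
  obtain ⟨F, hF, hclose⟩ := hY.exists_bijOn_localMins hμ hε hεn hθ hμθ hμn
  refine ⟨?_, F, hF, hclose⟩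
  rw [← ncard_signedBasis n, ← hF.image_eq, hF.injOn.ncard_image]

theorem Concentration.recoversSignedBasis {A₀ U V S : Matrix (Fin n) (Fin n) ℝ} {s : Fin n → ℝ}
    {X : Fin n → Fin p → ℝ} (hX : Concentration θ μ (accuracy n θ μ (kappa s)) X) (hn : 0 < n)
    (hp : 0 < p) (hθ : θ ∈ Set.Ioc (0 : ℝ) (1 / 2)) (hμ : 0 < μ) (hμn : 100 * n * μ ≤ θ)
    (hU : U * Uᵀ = 1) (hV : V * Vᵀ = 1) (hs : ∀ i, 0 < s i)
    (hA : A₀ = U * Matrix.diagonal s * Vᵀ) (hS : S.PosDef)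
    (hSS : S * S = A₀ * Matrix.of X * (A₀ * Matrix.of X)ᵀ) :
    RecoversSignedBasis n p μ (√(p * θ) • (V * Uᵀ * S⁻¹ * (A₀ * Matrix.of X))) := by
  have hθ0 := hθ.1
  have hθ1 : θ ≤ 1 := by linarith [hθ.2]
  have hn1 : (1 : ℝ) ≤ n := by exact_mod_cast hn
  have hw : 1 ≤ √n ^ 3 := one_le_pow₀ (Real.one_le_sqrt.2 hn1)
  have hμθ := hundred_mul_le_of_mul_le hn hμ.le hμn
  have hμsq : μ ^ 2 ≤ μ := pow_le_of_le_one hμ.le (by linarith) two_ne_zero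
  have ht := mul_accuracy_le (μ := μ) hn hθ0.le (one_le_kappa hn hs)
  have ht0 := accuracy_pos hn hθ0 hμ (one_le_kappa hn hs)
  set κ := kappa s
  set t := accuracy n θ μ κ
  have hη : 4 * κ ^ 2 * (t / θ) = μ ^ 2 / (160000 * √n ^ 3) :=
    four_mul_sq_mul_accuracy_div hθ0 (one_le_kappa hn hs)
  have hη4 : 4 * κ ^ 2 * (t / θ) ≤ 1 / 4 := by
    rw [hη, div_le_div_iff₀ (by positivity) (by norm_num)]
    nlinarith
  have hε : 4 * t + 7 * (θ / μ) * (4 * κ ^ 2 * (t / θ)) ≤ 1 / (20000 * √n ^ 3) * θ * μ := by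
    have hscale : 7 * (θ / μ) * (4 * κ ^ 2 * (t / θ)) = 7 * (θ * μ / √n ^ 3) / 160000 := by
      rw [hη]
      field_simp
    rw [hscale, show 1 / (20000 * √n ^ 3) * θ * μ = θ * μ / √n ^ 3 / 20000 by field_simp]
    linarith [show θ * μ ^ 2 / √n ^ 3 ≤ θ * μ / √n ^ 3 by gcongr]
  have htθ : 4 * t ≤ θ := by
    have : θ * μ ^ 2 / √n ^ 3 ≤ θ := (div_le_self (by positivity) hw).trans
      (mul_le_of_le_one_right hθ0.le (by linarith))
    linarith
  rw [← Matrix.mul_assoc, ← Matrix.smul_mul]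
  refine (hX.nearModel ⟨hθ0.le, hθ1⟩ hμ (by linarith) ht0.le ⟨by positivity, hη4⟩ hε
    (norm_whitenMap_sub_le hp ⟨hθ0, hθ1⟩ hU hV hs hA ht0.le htθ hX hS hSS)).recoversSignedBasis hμ
    (by positivity) (le_of_eq ?_) hθ hμθ (by nlinarith)
  rw [div_pow, mul_pow, ← pow_mul, mul_comm 3 2, pow_mul, Real.sq_sqrt n.cast_nonneg]
  field_simp

end Recovery

end CompleteDictionary

open CompleteDictionary

theorem statement3_general :
    ∃ C : ℝ, 0 < C ∧
      ∀ (n p : ℕ) (θ μ : ℝ) (A₀ U V : Matrix (Fin n) (Fin n) ℝ) (s : Fin n → ℝ), 0 < n →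
        U * Uᵀ = 1 → V * Vᵀ = 1 → (∀ i, 0 < s i) → A₀ = U * Matrix.diagonal s * Vᵀ →
        θ ∈ Set.Ioc (0 : ℝ) (1 / 2) → 0 < μ → 100 * n * μ ≤ θ →
        C * (n ^ 4 * kappa s ^ 4 / (θ ^ 2 * μ ^ 4)) * Real.log (kappa s * n / (μ * θ)) ≤ p →
        ENNReal.ofReal (1 - 4 / (p : ℝ) ^ 5) ≤
          bgMatrix θ n p
            {X | ∀ S : Matrix (Fin n) (Fin n) ℝ, S.PosDef →
              S * S = A₀ * Matrix.of X * (A₀ * Matrix.of X)ᵀ →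
              RecoversSignedBasis n p μ
                (√(p * θ) • (V * Uᵀ * S⁻¹ * (A₀ * Matrix.of X)))} := by
  obtain ⟨C, hC, hsize⟩ := exists_forall_mul_log_le_mul_accuracy_sq
  refine ⟨C, hC, fun n p θ μ A₀ U V s hn hU hV hs hA hθ hμ hμn hp => ?_⟩
  have hθ1 : θ ≤ 1 := by linarith [hθ.2]
  have hθ' : θ ∈ Set.Icc (0 : ℝ) 1 := ⟨hθ.1.le, hθ1⟩
  have hμ1 : μ ≤ 1 := by linarith [hundred_mul_le_of_mul_le hn hμ.le hμn]
  have hk := one_le_kappa hn hs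
  obtain ⟨hp2, hpt⟩ := hsize n p θ μ (kappa s) hn ⟨hθ.1, hθ1⟩ hμ hμn hk hp
  have hprob := isProbabilityMeasure_bgMatrix hθ' n p
  have hbad := measure_not_concentration_le hn hθ' hμ1 (accuracy_pos hn hθ.1 hμ hk)
    (accuracy_le hn hθ' ⟨hμ.le, hμ1⟩ hk) hp2 hpt
  have hrecover (X : Fin n → Fin p → ℝ) (hX : Concentration θ μ (accuracy n θ μ (kappa s)) X)
      (S : Matrix (Fin n) (Fin n) ℝ) :=
    hX.recoversSignedBasis (S := S) hn (by omega) hθ hμ hμn hU hV hs hA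
  exact (ofReal_one_sub_le_of_measure_compl_le (by positivity) hbad).trans (measure_mono hrecover)

/-- Corollary: 2n local minimizers on the sphere, complete dictionary. -/
theorem statement3 :
    ∃ cstar C ca cb : ℝ, 0 < cstar ∧ 0 < C ∧ 0 < ca ∧ 0 < cb ∧
      ∀ (n p : ℕ) (θ μ : ℝ) (A₀ U V : Matrix (Fin n) (Fin n) ℝ) (s : Fin n → ℝ),
        IsUnit A₀ → U * Uᵀ = 1 → V * Vᵀ = 1 → (∀ i, 0 < s i) →
        A₀ = U * Matrix.diagonal s * Vᵀ →
        θ ∈ Set.Ioo (0 : ℝ) (1 / 2) → 0 < μ →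
        μ < ca * min (θ / n) ((n : ℝ) ^ (-(5 : ℝ) / 4)) →
        C / (cstar ^ 2 * θ ^ 2) * max ((n : ℝ) ^ 4 / μ ^ 4) ((n : ℝ) ^ 5 / μ ^ 2) *
            kappa s ^ 8 * Real.log (kappa s * (n : ℝ) / (μ * θ)) ^ 4 ≤ (p : ℝ) →
        ENNReal.ofReal (1 - cb / (p : ℝ) ^ 5) ≤
          bgMatrix θ n p
            {X | ∀ S : Matrix (Fin n) (Fin n) ℝ, S.PosDef →
                 S * S = A₀ * Matrix.of X * (A₀ * Matrix.of X)ᵀ →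
                 -- local minimizers of `f(·; V Uᵀ Ȳ)` over the sphere,
                 -- with `Ȳ = √(pθ) (YYᵀ)^{-1/2} Y`
                 (LocalMins n p μ
                     (Real.sqrt ((p : ℝ) * θ) • (V * Uᵀ * S⁻¹ * (A₀ * Matrix.of X)))).ncard =
                   2 * n ∧
                 ∃ F : EuclideanSpace ℝ (Fin n) → EuclideanSpace ℝ (Fin n),
                   Set.BijOn F
                     (LocalMins n p μ
                       (Real.sqrt ((p : ℝ) * θ) • (V * Uᵀ * S⁻¹ * (A₀ * Matrix.of X))))
                     (SignedBasis n) ∧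
                   ∀ q ∈ LocalMins n p μ
                       (Real.sqrt ((p : ℝ) * θ) • (V * Uᵀ * S⁻¹ * (A₀ * Matrix.of X))),
                     ‖q - F q‖ ≤ Real.sqrt 2 * μ / 7} := by
  obtain ⟨C, hC, hmain⟩ := statement3_general
  refine ⟨1, C, 1 / 100, 4, one_pos, hC, by norm_num, by norm_num, ?_⟩
  intro n p θ μ A₀ U V s _ hU hV hs hA hθ hμ hμlt hp
  obtain ⟨hn, hμn⟩ := pos_and_mul_le_of_lt_mul_min hθ.1 hμ hμlt
  have hk := one_le_kappa hn hs
  have hlog := one_le_log_div hn ⟨hθ.1, by linarith [hθ.2]⟩ hμ hμn hk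
  exact hmain n p θ μ A₀ U V s hn hU hV hs hA ⟨hθ.1, hθ.2.le⟩ hμ hμn
    ((mul_log_le_mul_max_mul_log_pow hC.le hk hlog).trans hp)

end
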